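/- arXiv:1304.7541 — 4 statements merged into one kernel-verified Lean document; each statement's English description precedes it below -/
import Mathlib

section
/- Suppose m = ρ·l·(l−1) for an integer ρ ≥ 1. Then for every degree d with 2m − m/l < d ≤ 2m: (i) v_d(I^{(m)}) = l + 1 if d = 2m − w(l−1) for some integer w with 0 ≤ w ≤ ρ − 1; (ii) v_d(I^{(m)}) = l if d = 2m + 1 − p − w(l−1) where either (w = 0 and 2 ≤ p ≤ l−2), or (1 ≤ w ≤ ρ−1 and p ∈ {0, 2, 3, …, l−2}), or (w = ρ and p = 0, i.e. d = 2m − m/l + 1); (iii) v_d(I^{(m)}) = 0 for every other d in this range. -/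
open MvPolynomial Filter

/-- The degree-`d` homogeneous component of a homogeneous ideal `J ⊆ K[x,y,z]`,
as a `K`-vector subspace. -/
noncomputable def degComp {K : Type*} [Field K] (J : Ideal (MvPolynomial (Fin 3) K)) (d : ℕ) :
    Submodule K (MvPolynomial (Fin 3) K) :=
  Submodule.restrictScalars K J ⊓ homogeneousSubmodule (Fin 3) K d

/-- `dim_K J_d`. -/
noncomputable def hdim {K : Type*} [Field K] (J : Ideal (MvPolynomial (Fin 3) K)) (d : ℕ) : ℕ :=
  Module.finrank K (degComp J d)

/-- The subspace `R_1 · J_{d-1}` of products of linear forms with degree-`(d-1)` elements. -/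
noncomputable def oneGen {K : Type*} [Field K] (J : Ideal (MvPolynomial (Fin 3) K)) (d : ℕ) :
    Submodule K (MvPolynomial (Fin 3) K) :=
  Submodule.span K
    {x | ∃ f ∈ homogeneousSubmodule (Fin 3) K 1, ∃ g ∈ degComp J (d - 1), x = f * g}

/-- `v_d(J) = dim_K J_d / (R_1 · J_{d-1})`, the number of minimal generators of `J`
in degree `d`. -/
noncomputable def vnum {K : Type*} [Field K] (J : Ideal (MvPolynomial (Fin 3) K)) (d : ℕ) : ℕ :=
  Module.finrank K
    (↥(degComp J d) ⧸ Submodule.comap (degComp J d).subtype (oneGen J d))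

section FatPoints
variable {K : Type*} [Field K]

abbrev H2 (K : Type*) [Field K] (k : ℕ) : Submodule K (MvPolynomial (Fin 2) K) :=
  homogeneousSubmodule (Fin 2) K k

instance H2_finite (k : ℕ) : Module.Finite K (H2 K k) :=
  Module.Finite.iff_fg.mpr (homogeneousSubmodule_fg _ _ k)

lemma finrank_H2 (k : ℕ) : Module.finrank K (H2 K k) = k + 1 := by
  classical
  unfold H2
  rw [homogeneousSubmodule_eq_finsupp_supported]
  have e := (AddMonoidAlgebra.supportedEquivFinsupp (S := K) (R := K) {d : Fin 2 →₀ ℕ | d.degree = k})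
  have : {d : Fin 2 →₀ ℕ | d.degree = k} = ↑(Finset.finsuppAntidiag (Finset.univ : Finset (Fin 2)) k) := by
    ext d
    simp [Finsupp.degree_eq_sum]
  refine e.finrank_eq.trans ?_
  rw [this]
  rw [Module.finrank_finsupp_self]
  refine (Fintype.card_coe _).trans ?_
  rw [Finset.card_finsuppAntidiag_nat_eq_choose]
  simp [add_comm 1 k]

lemma H2_succ {k : ℕ} {f : MvPolynomial (Fin 2) K} (hf : f ∈ H2 K (k + 1)) :
    ∃ g₀ ∈ H2 K k, ∃ g₁ ∈ H2 K k, f = X 0 * g₀ + X 1 * g₁ := by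
  unfold H2 at hf
  rw [← homogeneousSubmodule_one_pow, pow_succ', homogeneousSubmodule_one_pow,
    homogeneousSubmodule_one_eq_span_X] at hf
  induction hf using Submodule.mul_induction_on' with
  | mem_mul_mem a ha b hb =>
    have hr : Set.range (X : Fin 2 → MvPolynomial (Fin 2) K) = {X 0, X 1} := by
      ext y; simp [Fin.exists_fin_two, eq_comm]
    rw [hr, Submodule.mem_span_pair] at ha
    obtain ⟨c, d, rfl⟩ := ha
    refine ⟨c • b, Submodule.smul_mem _ _ hb, d • b, Submodule.smul_mem _ _ hb, ?_⟩
    simp only [smul_eq_C_mul]; ring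
  | add x hx y hy h1 h2 =>
    obtain ⟨a, ha, b, hb, rfl⟩ := h1
    obtain ⟨a', ha', b', hb', rfl⟩ := h2
    exact ⟨a + a', Submodule.add_mem _ ha ha', b + b', Submodule.add_mem _ hb hb', by ring⟩

lemma homog_of_mul {σ : Type*} {f g : MvPolynomial σ K} {a n : ℕ} (hf : f.IsHomogeneous a)
    (hfg : (f * g).IsHomogeneous n) (h0 : f * g ≠ 0) : a ≤ n ∧ g.IsHomogeneous (n - a) := by
  have key : ∀ i, homogeneousComponent (a + i) (f * g) = f * homogeneousComponent i g := by
    intro i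
    conv_lhs => rw [← sum_homogeneousComponent g, Finset.mul_sum, map_sum]
    have h1 : ∀ j, homogeneousComponent (a + i) (f * homogeneousComponent j g) =
        if j = i then f * homogeneousComponent i g else 0 := by
      intro j
      rw [homogeneousComponent_of_mem (hf.mul (homogeneousComponent_isHomogeneous j g))]
      by_cases h : j = i
      · subst h; simp
      · rw [if_neg h, if_neg]; omega
    simp only [h1]
    rw [Finset.sum_ite_eq']
    split_ifs with h
    · rfl
    · rw [homogeneousComponent_eq_zero, mul_zero]
      simpa using h
  have hf0 : f ≠ 0 := left_ne_zero_of_mul h0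
  have hg0 : g ≠ 0 := right_ne_zero_of_mul h0
  have z : ∀ i, a + i ≠ n → homogeneousComponent i g = 0 := by
    intro i hi
    have h1 := key i
    rw [homogeneousComponent_of_mem hfg, if_neg hi] at h1
    exact (mul_eq_zero.mp h1.symm).resolve_left hf0
  have hle : a ≤ n := by
    by_contra hlt
    apply hg0
    rw [← sum_homogeneousComponent g]
    exact Finset.sum_eq_zero fun i _ => z i (by omega)
  refine ⟨hle, ?_⟩
  have : g = homogeneousComponent (n - a) g := by
    ext d
    rw [coeff_homogeneousComponent]
    split_ifs with h
    · rfl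
    · have := congrArg (coeff d) (z d.degree (by omega))
      simpa [coeff_homogeneousComponent] using this
  rw [this]
  exact homogeneousComponent_isHomogeneous _ _

/-- polynomials whose `j`-th coefficient lies in `D j` -/
def Vsp (D : ℕ → Submodule K (MvPolynomial (Fin 2) K)) :
    Submodule K (Polynomial (MvPolynomial (Fin 2) K)) where
  carrier := {F | ∀ j, F.coeff j ∈ D j}
  add_mem' := fun ha hb j => by
    rw [Polynomial.coeff_add]; exact Submodule.add_mem _ (ha j) (hb j)
  zero_mem' := fun j => by simp
  smul_mem' := fun c F h j => by
    rw [Polynomial.coeff_smul]; exact Submodule.smul_mem _ _ (h j)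

lemma mem_Vsp {D : ℕ → Submodule K (MvPolynomial (Fin 2) K)}
    {F : Polynomial (MvPolynomial (Fin 2) K)} : F ∈ Vsp D ↔ ∀ j, F.coeff j ∈ D j := Iff.rfl

noncomputable def VspEquiv (D : ℕ → Submodule K (MvPolynomial (Fin 2) K)) (N : ℕ)
    (hN : ∀ j, N ≤ j → D j = ⊥) : Vsp D ≃ₗ[K] ((j : Fin N) → D j) where
  toFun F j := ⟨F.1.coeff j, F.2 j⟩
  map_add' F G := by ext; simp
  map_smul' c F := by ext; simp
  invFun g := ⟨∑ j : Fin N, Polynomial.monomial j (g j).1, fun j => by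
    rw [Polynomial.finsetSum_coeff]
    refine Submodule.sum_mem _ fun i _ => ?_
    rw [Polynomial.coeff_monomial]
    split_ifs with h
    · subst h; exact (g i).2
    · simp⟩
  left_inv F := by
    ext j : 2
    simp only [Polynomial.finsetSum_coeff, Polynomial.coeff_monomial]
    by_cases hj : j < N
    · rw [Finset.sum_eq_single ⟨j, hj⟩]
      · simp
      · intro b _ hb
        rw [if_neg]; intro h; apply hb; ext; simpa using h
      · simp
    · have := F.2 j
      rw [hN j (by omega), Submodule.mem_bot] at this
      rw [this]
      apply Finset.sum_eq_zero
      intro b _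
      rw [if_neg]; have := b.2; omega
  right_inv g := by
    ext j : 2
    simp only [Polynomial.finsetSum_coeff, Polynomial.coeff_monomial]
    rw [Finset.sum_eq_single j]
    · simp
    · intro b _ hb
      rw [if_neg]; intro h; apply hb; ext; simpa using h
    · simp

lemma finrank_Vsp (D : ℕ → Submodule K (MvPolynomial (Fin 2) K)) (N : ℕ)
    (hN : ∀ j, N ≤ j → D j = ⊥) (hf : ∀ j, Module.Finite K (D j)) :
    Module.Finite K (Vsp D) ∧
    Module.finrank K (Vsp D) = ∑ j ∈ Finset.range N, Module.finrank K (D j) := by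
  have e := VspEquiv D N hN
  refine ⟨Module.Finite.equiv e.symm, ?_⟩
  rw [e.finrank_eq, Module.finrank_pi_fintype, Finset.sum_range]

/-- `h^t * K[x,y]_k` -/
noncomputable def Ssp (h : MvPolynomial (Fin 2) K) (t k : ℕ) :
    Submodule K (MvPolynomial (Fin 2) K) :=
  (H2 K k).map (LinearMap.mulLeft K (h ^ t))

lemma mem_Ssp {h : MvPolynomial (Fin 2) K} {t k : ℕ} {f : MvPolynomial (Fin 2) K} :
    f ∈ Ssp h t k ↔ ∃ g ∈ H2 K k, h ^ t * g = f := Iff.rfl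

instance Ssp_finite (h : MvPolynomial (Fin 2) K) (t k : ℕ) : Module.Finite K (Ssp h t k) := by
  unfold Ssp; infer_instance

lemma finrank_Ssp {h : MvPolynomial (Fin 2) K} (h0 : h ≠ 0) (t k : ℕ) :
    Module.finrank K (Ssp h t k) = k + 1 := by
  have hi : Function.Injective (LinearMap.mulLeft K (h ^ t)) := by
    intro a b hab
    exact mul_left_cancel₀ (pow_ne_zero t h0) hab
  rw [← finrank_H2 (K := K) k]
  exact (Submodule.equivMapOfInjective _ hi _).finrank_eq.symm

lemma Ssp_succ_le {h : MvPolynomial (Fin 2) K} {l : ℕ} (hh : h.IsHomogeneous l) (t k : ℕ) :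
    Ssp h (t + 1) k ≤ Ssp h t (k + l) := by
  rintro f ⟨g, hg, rfl⟩
  refine ⟨h * g, ?_, ?_⟩
  · have := hh.mul ((mem_homogeneousSubmodule _ _).mp hg)
    rw [add_comm] at this
    exact this
  · simp [pow_succ]


lemma mem_map_equiv_iff {R S : Type*} [CommRing R] [CommRing S] [Algebra K R] [Algebra K S]
    (e : R ≃ₐ[K] S) (I : Ideal R) (x : R) : e x ∈ I.map e ↔ x ∈ I := by
  rw [Ideal.mem_map_of_equiv]
  constructor
  · rintro ⟨y, hy, h⟩
    rwa [← e.injective h]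
  · intro h; exact ⟨x, h, rfl⟩

lemma vanishing_span {σ : Type*} [Fintype σ] (q : σ → K) (k : σ) (hk : q k ≠ 0)
    (P : Ideal (MvPolynomial σ K))
    (hP : ∀ F, F ∈ P ↔ ∀ n, eval q (homogeneousComponent n F) = 0) :
    P = Ideal.span (Set.range fun i => C (q k) * X i - C (q i) * X k) := by
  apply le_antisymm
  · intro F hF
    rw [hP] at hF
    rw [← sum_homogeneousComponent F]
    refine Ideal.sum_mem _ fun n _ => ?_
    have hG := homogeneousComponent_isHomogeneous n F
    have hG0 := hF n
    generalize homogeneousComponent n F = G at hG hG0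
    set I := Ideal.span (Set.range fun i => C (q k) * X i - C (q i) * X k) with hI
    have h1 : ∀ i, Ideal.Quotient.mk I (X i) =
        Ideal.Quotient.mk I (C (q i * (q k)⁻¹) * X k) := by
      intro i
      rw [Ideal.Quotient.eq]
      have : (X i - C (q i * (q k)⁻¹) * X k : MvPolynomial σ K) =
          C (q k)⁻¹ * (C (q k) * X i - C (q i) * X k) := by
        have h2 : (C (q k)⁻¹ * C (q k) : MvPolynomial σ K) = 1 := by
          rw [← C_mul, inv_mul_cancel₀ hk, C_1]
        rw [C_mul]
        linear_combination (- X i) * h2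
      rw [this]
      exact Ideal.mul_mem_left _ _ (Ideal.subset_span ⟨i, rfl⟩)
    have h2 : Ideal.Quotient.mk I G = Ideal.Quotient.mk I
        (aeval (fun i => C (q i * (q k)⁻¹) * X k) G) := by
      have e : (Ideal.Quotient.mkₐ K I) = (Ideal.Quotient.mkₐ K I).comp
          (aeval (fun i => C (q i * (q k)⁻¹) * X k)) := by
        ext i
        simpa using h1 i
      exact DFunLike.congr_fun e G
    have h3 : aeval (fun i => C (q i * (q k)⁻¹) * X k) G =
        (X k * C (q k)⁻¹) ^ n * C (eval q G) := by
      rw [aeval_def, eval₂_eq', eval_eq', map_sum, Finset.mul_sum]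
      refine Finset.sum_congr rfl fun d hd => ?_
      have hdn : d.degree = n := by
        by_contra hne
        exact (mem_support_iff.mp hd) (hG.coeff_eq_zero hne)
      have h4 : ∀ i, ((C (q i * (q k)⁻¹) * X k : MvPolynomial σ K)) ^ d i =
          (X k * C (q k)⁻¹) ^ d i * C (q i ^ d i) := by
        intro i
        rw [C_pow, ← mul_pow, C_mul]; ring
      simp only [h4]
      rw [Finset.prod_mul_distrib, Finset.prod_pow_eq_pow_sum, ← Finsupp.degree_eq_sum, hdn,
        C_mul, map_prod, algebraMap_eq]
      ring
    rw [hG0] at h3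
    rw [← Ideal.Quotient.eq_zero_iff_mem, h2, h3]
    simp
  · rw [Ideal.span_le]
    rintro _ ⟨i, rfl⟩
    have hh : (C (q k) * X i - C (q i) * X k : MvPolynomial σ K).IsHomogeneous 1 :=
      (isHomogeneous_C_mul_X _ _).sub (isHomogeneous_C_mul_X _ _)
    rw [SetLike.mem_coe, hP]
    intro n
    rw [homogeneousComponent_of_mem hh]
    split_ifs
    · simp [mul_comm]
    · simp

section powers
variable {A : Type*} [CommRing A]

def Tid (a : A) (m : ℕ) : Ideal (Polynomial A) where
  carrier := {F | ∀ j, a ^ (m - j) ∣ F.coeff j}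
  add_mem' := fun hF hG j => by
    rw [Polynomial.coeff_add]; exact dvd_add (hF j) (hG j)
  zero_mem' := fun j => by simp
  smul_mem' := fun G F hF j => by
    rw [smul_eq_mul, Polynomial.coeff_mul]
    refine Finset.dvd_sum fun x hx => ?_
    have : x.2 ≤ j := by
      have := Finset.HasAntidiagonal.mem_antidiagonal.mp hx
      omega
    exact ((pow_dvd_pow a (by omega)).trans (hF x.2)).mul_left _

lemma mem_Tid {a : A} {m : ℕ} {F : Polynomial A} :
    F ∈ Tid a m ↔ ∀ j, a ^ (m - j) ∣ F.coeff j := Iff.rfl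

lemma span_pow_eq_Tid (a : A) (m : ℕ) :
    Ideal.span {Polynomial.X, Polynomial.C a} ^ m = Tid a m := by
  apply le_antisymm
  · induction m with
    | zero => intro F _ j; simp
    | succ m ih =>
      rw [pow_succ, Ideal.mul_le]
      intro r hr s hs
      obtain ⟨u, v, rfl⟩ := Ideal.mem_span_pair.mp hs
      have hr' := ih hr
      rw [mem_Tid] at hr'
      have h1 : r * Polynomial.X ∈ Tid a (m + 1) := by
        intro j
        cases j with
        | zero => simp
        | succ j =>
          rw [Polynomial.coeff_mul_X]
          simpa using hr' j
      have h2 : r * Polynomial.C a ∈ Tid a (m + 1) := by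
        intro j
        rw [Polynomial.coeff_mul_C]
        refine (pow_dvd_pow a (show m + 1 - j ≤ m - j + 1 by omega)).trans ?_
        rw [pow_succ]
        exact mul_dvd_mul_right (hr' j) _
      have : r * (u * Polynomial.X + v * Polynomial.C a) =
          u * (r * Polynomial.X) + v * (r * Polynomial.C a) := by ring
      rw [this]
      exact Ideal.add_mem _ (Ideal.mul_mem_left _ _ h1) (Ideal.mul_mem_left _ _ h2)
  · intro F hF
    rw [F.as_sum_support_C_mul_X_pow]
    refine Ideal.sum_mem _ fun j _ => ?_
    obtain ⟨b, hb⟩ := hF j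
    rw [hb]
    have h1 : Polynomial.C a ^ (m - j) * Polynomial.X ^ j ∈
        Ideal.span {Polynomial.X, Polynomial.C a} ^ m := by
      refine Ideal.pow_le_pow_right (show m ≤ (m - j) + j by omega) ?_
      rw [pow_add]
      exact Ideal.mul_mem_mul (Ideal.pow_mem_pow (Ideal.subset_span (by simp)) _)
        (Ideal.pow_mem_pow (Ideal.subset_span (by simp)) _)
    have : Polynomial.C (a ^ (m - j) * b) * Polynomial.X ^ j =
        Polynomial.C b * (Polynomial.C a ^ (m - j) * Polynomial.X ^ j) := by
      simp only [map_mul, map_pow]; ring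
    rw [this]
    exact Ideal.mul_mem_left _ _ h1

end powers

/-- the linear form on the line vanishing at `(a, b)`. -/
noncomputable def lamb (q : Fin 3 → K) : MvPolynomial (Fin 2) K := C (q 2) * X 0 - C (q 1) * X 1

lemma mem_pow_line (q : Fin 3 → K) (hq : q ≠ 0) (h0 : q 0 = 0)
    (P : Ideal (MvPolynomial (Fin 3) K))
    (hP : ∀ F, F ∈ P ↔ ∀ n, eval q (homogeneousComponent n F) = 0) (m : ℕ)
    (F : MvPolynomial (Fin 3) K) :
    F ∈ P ^ m ↔ ∀ j, lamb q ^ (m - j) ∣ (finSuccEquiv K 2 F).coeff j := by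
  have key : P.map (finSuccEquiv K 2) = Ideal.span {Polynomial.X, Polynomial.C (lamb q)} := by
    have hk : ∃ k, q k ≠ 0 := by
      by_contra h; push Not at h; exact hq (funext h)
    have x1 : (X 1 : MvPolynomial (Fin 3) K) = X (Fin.succ 0) := rfl
    have x2 : (X 2 : MvPolynomial (Fin 3) K) = X (Fin.succ 1) := rfl
    have c1 : ∀ c : K, finSuccEquiv K 2 (C c) = Polynomial.C (C c) := by
      intro c; simp [finSuccEquiv_apply]
    apply le_antisymm
    · obtain ⟨k, hk⟩ := hk
      rw [vanishing_span q k hk P hP, Ideal.map_span, Ideal.span_le]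
      rintro _ ⟨_, ⟨i, rfl⟩, rfl⟩
      rw [SetLike.mem_coe, Ideal.mem_span_pair]
      have hk0 : k ≠ 0 := by rintro rfl; exact hk h0
      fin_cases k <;> fin_cases i <;> simp [h0, x1, x2, finSuccEquiv_X_zero, finSuccEquiv_X_succ, c1] at hk hk0 ⊢
      · exact ⟨Polynomial.C (C (q 1)), 0, by ring⟩
      · exact ⟨0, 0, by ring⟩
      · exact ⟨0, -1, by simp [lamb]; ring⟩
      · exact ⟨Polynomial.C (C (q 2)), 0, by ring⟩
      · exact ⟨0, 1, by simp [lamb]⟩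
      · exact ⟨0, 0, by ring⟩
    · rw [Ideal.span_le]
      have hm1 : (X 0 : MvPolynomial (Fin 3) K) ∈ P := by
        rw [hP]; intro n
        rw [homogeneousComponent_of_mem (isHomogeneous_X _ _)]
        split_ifs <;> simp [h0]
      have hm2 : (C (q 2) * X 1 - C (q 1) * X 2 : MvPolynomial (Fin 3) K) ∈ P := by
        rw [hP]; intro n
        rw [homogeneousComponent_of_mem ((isHomogeneous_C_mul_X _ _).sub (isHomogeneous_C_mul_X _ _))]
        split_ifs <;> simp [mul_comm]
      rintro y (rfl | rfl)
      · have := Ideal.mem_map_of_mem (finSuccEquiv K 2) hm1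
        rwa [finSuccEquiv_X_zero] at this
      · have := Ideal.mem_map_of_mem (finSuccEquiv K 2) hm2
        simpa [x1, x2, finSuccEquiv_X_succ, c1, lamb] using this
  rw [← mem_Tid, ← span_pow_eq_Tid, ← key, ← Ideal.map_pow]
  exact (mem_map_equiv_iff (finSuccEquiv K 2) (P ^ m) F).symm

lemma mem_pow_pt (q : Fin 3 → K) (h0 : q 0 ≠ 0) (h1 : q 1 = 0) (h2 : q 2 = 0)
    (P : Ideal (MvPolynomial (Fin 3) K))
    (hP : ∀ F, F ∈ P ↔ ∀ n, eval q (homogeneousComponent n F) = 0) (m : ℕ)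
    (F : MvPolynomial (Fin 3) K) :
    F ∈ P ^ m ↔ ∀ j, (finSuccEquiv K 2 F).coeff j ∈ idealOfVars (Fin 2) K ^ m := by
  have x1 : (X 1 : MvPolynomial (Fin 3) K) = X (Fin.succ 0) := rfl
  have x2 : (X 2 : MvPolynomial (Fin 3) K) = X (Fin.succ 1) := rfl
  have c1 : ∀ c : K, finSuccEquiv K 2 (C c) = Polynomial.C (C c) := by
    intro c; simp [finSuccEquiv_apply]
  have key : P.map (finSuccEquiv K 2) = (idealOfVars (Fin 2) K).map Polynomial.C := by
    apply le_antisymm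
    · rw [vanishing_span q 0 h0 P hP, Ideal.map_span, Ideal.span_le]
      rintro _ ⟨_, ⟨i, rfl⟩, rfl⟩
      have hx : ∀ i : Fin 2, Polynomial.C (X i) ∈ (idealOfVars (Fin 2) K).map Polynomial.C :=
        fun i => Ideal.mem_map_of_mem _ (Ideal.subset_span ⟨i, rfl⟩)
      fin_cases i <;> simp [h1, h2, x1, x2, finSuccEquiv_X_zero, finSuccEquiv_X_succ, c1]
      · exact Ideal.mul_mem_left _ _ (hx 0)
      · exact Ideal.mul_mem_left _ _ (hx 1)
    · rw [idealOfVars, Ideal.map_span, Ideal.span_le]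
      rintro _ ⟨_, ⟨i, rfl⟩, rfl⟩
      have hm : (X i.succ : MvPolynomial (Fin 3) K) ∈ P := by
        rw [hP]; intro n
        rw [homogeneousComponent_of_mem (isHomogeneous_X _ _)]
        fin_cases i <;> split_ifs <;> simp [h1, h2]
      have := Ideal.mem_map_of_mem (finSuccEquiv K 2) hm
      rwa [finSuccEquiv_X_succ] at this
  rw [← Ideal.mem_map_C_iff, Ideal.map_pow, ← key, ← Ideal.map_pow]
  exact (mem_map_equiv_iff (finSuccEquiv K 2) (P ^ m) F).symm

lemma homog_iff (F : MvPolynomial (Fin 3) K) (d : ℕ) :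
    F.IsHomogeneous d ↔ ∀ j, (j ≤ d → (finSuccEquiv K 2 F).coeff j ∈ H2 K (d - j)) ∧
      (d < j → (finSuccEquiv K 2 F).coeff j = 0) := by
  constructor
  · intro hF j
    refine ⟨fun hj => hF.finSuccEquiv_coeff_isHomogeneous j (d - j) (by omega), fun hj => ?_⟩
    ext e
    rw [finSuccEquiv_coeff_coeff, hF.coeff_eq_zero, coeff_zero]
    intro h
    have := Finsupp.degree_eq_sum (e.cons j)
    rw [h, Fin.sum_univ_succ, Finsupp.cons_zero] at this
    omega
  · intro h e he
    have hc : e.degree = e 0 + e.tail.degree := by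
      rw [Finsupp.degree_eq_sum, Finsupp.degree_eq_sum, Fin.sum_univ_succ]; rfl
    have h3 : coeff e.tail ((finSuccEquiv K 2 F).coeff (e 0)) ≠ 0 := by
      rwa [finSuccEquiv_coeff_coeff, Finsupp.cons_tail]
    have : e.degree = d := by
      by_cases hj : e 0 ≤ d
      · have h4 := (h (e 0)).1 hj
        have : e.tail.degree = d - e 0 := by
          by_contra hne
          exact h3 (IsHomogeneous.coeff_eq_zero ((mem_homogeneousSubmodule _ _).mp h4) hne)
        omega
      · rw [(h (e 0)).2 (by omega)] at h3
        simp at h3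
    rw [← this, Finsupp.degree_eq_weight_one]
    rfl


lemma lamb_homog (q : Fin 3 → K) : (lamb q).IsHomogeneous 1 :=
  (isHomogeneous_C_mul_X _ _).sub (isHomogeneous_C_mul_X _ _)

lemma lamb_ne_zero {q : Fin 3 → K} (hq : q ≠ 0) (h0 : q 0 = 0) : lamb q ≠ 0 := by
  intro h
  apply hq
  have h1 := congrArg (eval ![1, 0]) h
  have h2 := congrArg (eval ![0, 1]) h
  simp [lamb] at h1 h2
  ext i
  fin_cases i <;> simp [h0, h1, h2]

lemma lamb_irreducible {q : Fin 3 → K} (hq : q ≠ 0) (h0 : q 0 = 0) : Irreducible (lamb q) := by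
  have hne := lamb_ne_zero hq h0
  apply irreducible_of_totalDegree_eq_one ((lamb_homog q).totalDegree hne)
  intro x hx
  rw [isUnit_iff_ne_zero]
  rintro rfl
  apply hne
  ext i
  simpa using hx i

lemma lamb_not_dvd {q r : Fin 3 → K} (hq : q ≠ 0) (h0 : q 0 = 0) (h0r : r 0 = 0)
    (hqr : ∀ c : K, c • q ≠ r) : ¬ lamb q ∣ lamb r := by
  rintro ⟨g, hg⟩
  have h1 := congrArg (eval ![q 1, q 2]) hg
  simp [lamb] at h1
  have h2 : r 2 * q 1 = r 1 * q 2 := by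
    have : (q 2 * q 1 - q 1 * q 2) = 0 := by ring
    rw [this, zero_mul, sub_eq_zero] at h1
    exact h1
  by_cases hq1 : q 1 = 0
  · have hq2 : q 2 ≠ 0 := by
      intro hq2; apply hq; ext i; fin_cases i <;> simp [h0, hq1, hq2]
    apply hqr (r 2 / q 2)
    ext i
    fin_cases i
    · simp [h0, h0r]
    · simp only [Pi.smul_apply, smul_eq_mul, Fin.mk_one]
      field_simp; linear_combination h2
    · simp [hq2]
  · apply hqr (r 1 / q 1)
    ext i
    fin_cases i
    · simp [h0, h0r]
    · simp [hq1]
    · simp only [Pi.smul_apply, smul_eq_mul, Fin.reduceFinMk]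
      field_simp; linear_combination -h2

section normalized
variable {l : ℕ} (q : Fin l → Fin 3 → K)

noncomputable def hform : MvPolynomial (Fin 2) K := ∏ i, lamb (q i)

lemma hform_homog : (hform q).IsHomogeneous l := by
  have := IsHomogeneous.prod Finset.univ (fun i => lamb (q i)) (fun _ => 1)
    (fun i _ => lamb_homog (q i))
  simpa [hform] using this

lemma hform_ne_zero (hq : ∀ i, q i ≠ 0) (h0 : ∀ i, q i 0 = 0) : hform q ≠ 0 :=
  Finset.prod_ne_zero_iff.mpr fun i _ => lamb_ne_zero (hq i) (h0 i)

lemma hform_pow_dvd (hq : ∀ i, q i ≠ 0) (h0 : ∀ i, q i 0 = 0)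
    (hd : ∀ i j, i ≠ j → ∀ c : K, c • q i ≠ q j) (t : ℕ) (f : MvPolynomial (Fin 2) K) :
    hform q ^ t ∣ f ↔ ∀ i, lamb (q i) ^ t ∣ f := by
  constructor
  · intro h i
    have h1 : lamb (q i) ∣ hform q :=
      Finset.dvd_prod_of_mem (fun i => lamb (q i)) (Finset.mem_univ i)
    exact (pow_dvd_pow_of_dvd h1 t).trans h
  · intro h
    rw [hform, ← Finset.prod_pow]
    apply Fintype.prod_dvd_of_isRelPrime _ h
    intro i j hij
    apply IsRelPrime.pow
    rw [(lamb_irreducible (hq i) (h0 i)).isRelPrime_iff_not_dvd]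
    exact lamb_not_dvd (hq i) (h0 i) (h0 j) (hd i j hij)

/-- coefficient spaces of the degree-`d` component of the fat point ideal. -/
noncomputable def Dsp (m d j : ℕ) : Submodule K (MvPolynomial (Fin 2) K) :=
  if m + j ≤ d ∧ l * (m - j) + j ≤ d then Ssp (hform q) (m - j) (d - j - l * (m - j)) else ⊥

lemma mem_Dsp_iff (hq : ∀ i, q i ≠ 0) (h0 : ∀ i, q i 0 = 0)
    (hd : ∀ i j, i ≠ j → ∀ c : K, c • q i ≠ q j) (m d j : ℕ) (f : MvPolynomial (Fin 2) K) :
    f ∈ Dsp q m d j ↔ ((j ≤ d → f ∈ H2 K (d - j)) ∧ (d < j → f = 0)) ∧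
      (∀ i, lamb (q i) ^ (m - j) ∣ f) ∧ f ∈ idealOfVars (Fin 2) K ^ m := by
  rw [← hform_pow_dvd q hq h0 hd]
  have hp : (hform q ^ (m - j)).IsHomogeneous (l * (m - j)) := (hform_homog q).pow _
  by_cases hf : f = 0
  · subst hf; simp
  constructor
  · intro h
    unfold Dsp at h
    split_ifs at h with hc
    · obtain ⟨g, hg, rfl⟩ := mem_Ssp.mp h
      have hh : (hform q ^ (m - j) * g).IsHomogeneous (d - j) := by
        have := hp.mul ((mem_homogeneousSubmodule _ _).mp hg)
        rwa [show l * (m - j) + (d - j - l * (m - j)) = d - j by omega] at this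
      refine ⟨⟨fun _ => hh, fun h => by omega⟩, dvd_mul_right _ _, ?_⟩
      rw [mem_pow_idealOfVars_iff']
      intro x hx
      exact hh.coeff_eq_zero (by omega)
    · exact absurd h hf
  · rintro ⟨⟨h1, h2⟩, ⟨g, rfl⟩, h3⟩
    have hjd : j ≤ d := by
      by_contra hlt; exact hf (h2 (by omega))
    have h4 : (hform q ^ (m - j) * g).IsHomogeneous (d - j) := h1 hjd
    obtain ⟨h5, h6⟩ := homog_of_mul hp h4 hf
    have h7 : m ≤ d - j := by
      by_contra hlt
      apply hf
      ext x
      rw [coeff_zero]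
      by_cases hx : x.degree < m
      · exact (mem_pow_idealOfVars_iff' _ _).mp h3 x hx
      · exact h4.coeff_eq_zero (by omega)
    unfold Dsp
    rw [if_pos ⟨by omega, by omega⟩]
    exact ⟨g, h6, rfl⟩

instance Dsp_finite (m d j : ℕ) : Module.Finite K (Dsp q m d j) := by
  by_cases h : m + j ≤ d ∧ l * (m - j) + j ≤ d
  · rw [Dsp, if_pos h]; infer_instance
  · rw [Dsp, if_neg h]; infer_instance

lemma finrank_Dsp (hq : ∀ i, q i ≠ 0) (h0 : ∀ i, q i 0 = 0) (m d j : ℕ) :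
    Module.finrank K (Dsp q m d j) =
      if m + j ≤ d ∧ l * (m - j) + j ≤ d then d - j - l * (m - j) + 1 else 0 := by
  by_cases h : m + j ≤ d ∧ l * (m - j) + j ≤ d
  · rw [Dsp, if_pos h, if_pos h]
    exact finrank_Ssp (hform_ne_zero q hq h0) _ _
  · rw [Dsp, if_neg h, if_neg h]
    simp

lemma Dsp_z (m d j : ℕ) : Dsp q m d j ≤ Dsp q m (d + 1) (j + 1) := by
  by_cases hc : m + j ≤ d ∧ l * (m - j) + j ≤ d
  · have hmul : l * (m - (j + 1)) ≤ l * (m - j) := Nat.mul_le_mul_left _ (by omega)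
    unfold Dsp
    rw [if_pos hc, if_pos ⟨by omega, by omega⟩]
    by_cases hj : m ≤ j
    · rw [show m - j = 0 by omega, show m - (j + 1) = 0 by omega]
      simp
    · obtain ⟨t, ht⟩ : ∃ t, m - j = t + 1 := ⟨m - j - 1, by omega⟩
      rw [show m - (j + 1) = t by omega, ht]
      rw [ht, mul_add] at hc
      refine (Ssp_succ_le (hform_homog q) t _).trans (le_of_eq ?_)
      congr 1
      rw [mul_add]; omega
  · unfold Dsp
    rw [if_neg hc]; exact bot_le

lemma Dsp_x (m d j : ℕ) (i : Fin 2) {f : MvPolynomial (Fin 2) K} (hf : f ∈ Dsp q m d j) :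
    X i * f ∈ Dsp q m (d + 1) j := by
  unfold Dsp at hf
  split_ifs at hf with hc
  · unfold Dsp
    rw [if_pos ⟨by omega, by omega⟩]
    obtain ⟨g, hg, rfl⟩ := mem_Ssp.mp hf
    refine mem_Ssp.mpr ⟨X i * g, ?_, by ring⟩
    have := (isHomogeneous_X K i).mul ((mem_homogeneousSubmodule _ _).mp hg)
    rw [show 1 + (d - j - l * (m - j)) = d + 1 - j - l * (m - j) by omega] at this
    exact this
  · rw [(Submodule.mem_bot K).mp hf]; simp

/-- coefficient spaces of `R_1 J_d` -/
noncomputable def Esp (m d j : ℕ) : Submodule K (MvPolynomial (Fin 2) K) :=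
  if m + j ≤ d ∧ l * (m - j) + j ≤ d then Dsp q m (d + 1) j
  else if 1 ≤ j then Dsp q m d (j - 1) else ⊥

instance Esp_finite (m d j : ℕ) : Module.Finite K (Esp q m d j) := by
  by_cases h : m + j ≤ d ∧ l * (m - j) + j ≤ d
  · rw [Esp, if_pos h]; infer_instance
  · rw [Esp, if_neg h]
    by_cases hj : 1 ≤ j
    · rw [if_pos hj]; infer_instance
    · rw [if_neg hj]; infer_instance

lemma Esp_le (m d j : ℕ) : Esp q m d j ≤ Dsp q m (d + 1) j := by
  unfold Esp
  split_ifs with h1 h2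
  · rfl
  · have := Dsp_z q m d (j - 1)
    rwa [Nat.sub_add_cancel h2] at this
  · exact bot_le

lemma E_z (m d j : ℕ) : Dsp q m d j ≤ Esp q m d (j + 1) := by
  unfold Esp
  rw [if_pos (show 1 ≤ j + 1 by omega)]
  split_ifs
  · exact Dsp_z q m d j
  · rfl

lemma E_x (m d j : ℕ) (i : Fin 2) {f : MvPolynomial (Fin 2) K} (hf : f ∈ Dsp q m d j) :
    X i * f ∈ Esp q m d j := by
  by_cases hc : m + j ≤ d ∧ l * (m - j) + j ≤ d
  · unfold Esp
    rw [if_pos hc]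
    exact Dsp_x q m d j i hf
  · unfold Dsp at hf
    rw [if_neg hc] at hf
    rw [(Submodule.mem_bot K).mp hf]; simp

section ideal
variable (q₀ : Fin 3 → K) (P : Fin l → Ideal (MvPolynomial (Fin 3) K))
  (P₀ : Ideal (MvPolynomial (Fin 3) K)) (m : ℕ) (J : Ideal (MvPolynomial (Fin 3) K))

lemma map_degComp (hq : ∀ i, q i ≠ 0) (h0 : ∀ i, q i 0 = 0)
    (hd : ∀ i j, i ≠ j → ∀ c : K, c • q i ≠ q j)
    (h1 : q₀ 0 ≠ 0) (h2 : q₀ 1 = 0) (h3 : q₀ 2 = 0)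
    (hP : ∀ i F, F ∈ P i ↔ ∀ n, eval (q i) (homogeneousComponent n F) = 0)
    (hP₀ : ∀ F, F ∈ P₀ ↔ ∀ n, eval q₀ (homogeneousComponent n F) = 0)
    (hJ : ∀ F, F ∈ J ↔ (∀ i, F ∈ P i ^ m) ∧ F ∈ P₀ ^ m) (d : ℕ) :
    (degComp J d).map (finSuccEquiv K 2).toLinearMap = Vsp (Dsp q m d) := by
  have key : ∀ F, F ∈ degComp J d ↔ finSuccEquiv K 2 F ∈ Vsp (Dsp q m d) := by
    intro F
    rw [mem_Vsp]
    simp only [mem_Dsp_iff q hq h0 hd]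
    rw [degComp, Submodule.mem_inf, Submodule.restrictScalars_mem, hJ, mem_homogeneousSubmodule,
      homog_iff, mem_pow_pt q₀ h1 h2 h3 P₀ hP₀]
    simp only [fun i => mem_pow_line (q i) (hq i) (h0 i) (P i) (hP i)]
    constructor
    · rintro ⟨⟨ha, hb⟩, hc⟩ j
      exact ⟨hc j, fun i => ha i j, hb j⟩
    · intro h
      exact ⟨⟨fun i j => (h j).2.1 i, fun j => (h j).2.2⟩, fun j => (h j).1⟩
  ext G
  rw [Submodule.mem_map]
  constructor
  · rintro ⟨F, hF, rfl⟩
    exact (key F).mp hF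
  · intro h
    refine ⟨(finSuccEquiv K 2).symm G, ?_, by simp⟩
    rw [key]; simpa using h

lemma map_oneGen (d : ℕ)
    (hD : (degComp J d).map (finSuccEquiv K 2).toLinearMap = Vsp (Dsp q m d)) :
    (oneGen J (d + 1)).map (finSuccEquiv K 2).toLinearMap = Vsp (Esp q m d) := by
  have hD' : ∀ F ∈ degComp J d, finSuccEquiv K 2 F ∈ Vsp (Dsp q m d) := by
    intro F hF; rw [← hD]; exact Submodule.mem_map_of_mem hF
  apply le_antisymm
  · rw [Submodule.map_le_iff_le_comap, oneGen, Submodule.span_le]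
    rintro _ ⟨f, hf, g, hg, rfl⟩
    have hg' := hD' g hg
    rw [mem_Vsp] at hg'
    rw [homogeneousSubmodule_one_eq_span_X] at hf
    rw [SetLike.mem_coe]
    induction hf using Submodule.span_induction with
    | mem x hx =>
      obtain ⟨i, rfl⟩ := hx
      rw [Submodule.mem_comap, AlgEquiv.toLinearMap_apply, map_mul, mem_Vsp]
      intro j
      cases i using Fin.cases with
      | zero =>
        rw [finSuccEquiv_X_zero]
        cases j with
        | zero => simp
        | succ j =>
          rw [Polynomial.coeff_X_mul]
          exact E_z q m d j (hg' j)
      | succ i =>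
        rw [finSuccEquiv_X_succ, Polynomial.coeff_C_mul]
        exact E_x q m d j i (hg' j)
    | zero => rw [zero_mul]; exact Submodule.zero_mem _
    | add x y _ _ hx hy => rw [add_mul]; exact Submodule.add_mem _ hx hy
    | smul c x _ hx => rw [smul_mul_assoc]; exact Submodule.smul_mem _ _ hx
  · have hX : ∀ (i : Fin 3) (G), G ∈ Vsp (Dsp q m d) → finSuccEquiv K 2 (X i) * G ∈
        (oneGen J (d + 1)).map (finSuccEquiv K 2).toLinearMap := by
      intro i G hG
      rw [← hD] at hG
      obtain ⟨F, hF, rfl⟩ := hG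
      refine ⟨X i * F, Submodule.subset_span ⟨X i, isHomogeneous_X _ _, F, hF, rfl⟩, ?_⟩
      simp
    have hmon : ∀ j f, f ∈ Dsp q m d j → Polynomial.monomial j f ∈ Vsp (Dsp q m d) := by
      intro j f hf i
      rw [Polynomial.coeff_monomial]
      split_ifs with h
      · rwa [← h]
      · simp
    intro F hF
    rw [F.as_sum_support]
    refine Submodule.sum_mem _ fun j _ => ?_
    have hf := hF j
    generalize F.coeff j = f at hf
    unfold Esp at hf
    split_ifs at hf with hc hj
    · unfold Dsp at hf
      rw [if_pos ⟨by omega, by omega⟩] at hf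
      obtain ⟨g, hg, rfl⟩ := mem_Ssp.mp hf
      rw [show d + 1 - j - l * (m - j) = d - j - l * (m - j) + 1 by omega] at hg
      obtain ⟨g₀, hg₀, g₁, hg₁, rfl⟩ := H2_succ hg
      have hs : ∀ g ∈ H2 K (d - j - l * (m - j)), hform q ^ (m - j) * g ∈ Dsp q m d j := by
        intro g hg
        unfold Dsp
        rw [if_pos hc]
        exact ⟨g, hg, rfl⟩
      have e : Polynomial.monomial j (hform q ^ (m - j) * (X 0 * g₀ + X 1 * g₁)) =
          finSuccEquiv K 2 (X (Fin.succ 0)) * Polynomial.monomial j (hform q ^ (m - j) * g₀) +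
          finSuccEquiv K 2 (X (Fin.succ 1)) * Polynomial.monomial j (hform q ^ (m - j) * g₁) := by
        rw [finSuccEquiv_X_succ, finSuccEquiv_X_succ, Polynomial.C_mul_monomial,
          Polynomial.C_mul_monomial, ← map_add]
        congr 1; ring
      rw [e]
      exact Submodule.add_mem _ (hX _ _ (hmon _ _ (hs _ hg₀))) (hX _ _ (hmon _ _ (hs _ hg₁)))
    · have e : Polynomial.monomial j f =
          finSuccEquiv K 2 (X 0) * Polynomial.monomial (j - 1) f := by
        rw [finSuccEquiv_X_zero, Polynomial.X_mul_monomial, Nat.sub_add_cancel hj]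
      rw [e]
      exact hX _ _ (hmon _ _ hf)
    · rw [(Submodule.mem_bot K).mp hf]; simp

lemma finrank_step (hq : ∀ i, q i ≠ 0) (h0 : ∀ i, q i 0 = 0) (d s : ℕ) (hl : 2 ≤ l)
    (hs : d + 1 + s = 2 * m) (hs2 : l * (s + 1) ≤ m) (j : ℕ) :
    Module.finrank K (Dsp q m (d + 1) j) = Module.finrank K (Esp q m d j) +
      ((if j = m - s then l else 0) + if l * (m - j) + j = d + 1 ∧ m + j < d + 1 then 1 else 0) := by
  have hsm : 2 * (s + 1) ≤ m := (Nat.mul_le_mul_right _ hl).trans hs2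
  have hs3 : l * s + l ≤ m := by rw [← Nat.mul_succ]; exact hs2
  by_cases hA : j = m - s
  · have e1 : m - j = s := by omega
    have e2 : m - (j - 1) = s + 1 := by omega
    rw [finrank_Dsp q hq h0]
    unfold Esp
    rw [if_neg (show ¬ (m + j ≤ d ∧ _) from fun h => by omega), if_pos (show 1 ≤ j by omega), finrank_Dsp q hq h0,
      e1, e2, if_pos hA, if_neg (show ¬ (_ ∧ m + j < d + 1) from fun h => by omega),
      if_pos ⟨by omega, by omega⟩, if_pos ⟨by omega, by omega⟩, Nat.mul_succ]
    omega
  · rw [if_neg hA]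
    by_cases hc : m + j ≤ d + 1 ∧ l * (m - j) + j ≤ d + 1
    · by_cases hB : l * (m - j) + j = d + 1
      · rw [if_pos ⟨hB, by omega⟩, finrank_Dsp q hq h0, if_pos hc]
        unfold Esp
        rw [if_neg (show ¬ (_ ∧ l * (m - j) + j ≤ d) from fun h => by omega)]
        have : Module.finrank K (↥(if 1 ≤ j then Dsp q m d (j - 1) else ⊥)) = 0 := by
          by_cases hj : 1 ≤ j
          · rw [if_pos hj, finrank_Dsp q hq h0, if_neg]
            rw [show m - (j - 1) = m - j + 1 by omega, Nat.mul_succ]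
            omega
          · rw [if_neg hj]; simp
        rw [this]
        omega
      · rw [if_neg (fun h => hB h.1)]
        unfold Esp
        rw [if_pos ⟨by omega, by omega⟩]
        rfl
    · have h1 : Dsp q m (d + 1) j = ⊥ := by unfold Dsp; rw [if_neg hc]
      have h2 : Esp q m d j = ⊥ := by
        rw [eq_bot_iff, ← h1]; exact Esp_le q m d j
      rw [h1, h2, if_neg (fun h => hc ⟨by omega, by omega⟩)]
      rfl

lemma sum_step (d s : ℕ) (hl : 2 ≤ l) (hm : (l - 1) ∣ m)
    (hs : d + 1 + s = 2 * m) (hs2 : l * (s + 1) ≤ m) :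
    ∑ j ∈ Finset.range (d + 2), ((if j = m - s then l else 0) +
      if l * (m - j) + j = d + 1 ∧ m + j < d + 1 then 1 else 0) =
      l + if (l - 1) ∣ s then 1 else 0 := by
  have hsm : 2 * (s + 1) ≤ m := (Nat.mul_le_mul_right _ hl).trans hs2
  have hs3 : l * s + l ≤ m := by rw [← Nat.mul_succ]; exact hs2
  rw [Finset.sum_add_distrib, Finset.sum_ite_eq', if_pos (Finset.mem_range.mpr (by omega))]
  congr 1
  obtain ⟨r, rfl⟩ : ∃ r, l = r + 1 := ⟨l - 1, by omega⟩
  simp only [Nat.add_sub_cancel] at hm ⊢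
  have equ : ∀ j, (((r + 1) * (m - j) + j = d + 1 ∧ m + j < d + 1) ↔
      (j ≤ m ∧ r * (m - j) = m - s ∧ j < m - s)) := by
    intro j
    rw [add_mul, one_mul]
    constructor
    · rintro ⟨h1, h2⟩; omega
    · rintro ⟨h1, h2, h3⟩; omega
  simp only [equ]
  split_ifs with hd
  · obtain ⟨t, ht⟩ : r ∣ m - s := Nat.dvd_sub hm hd
    have ht2 : s < t := by
      by_contra hlt
      have : r * t ≤ r * s := Nat.mul_le_mul_left _ (by omega)
      rw [add_mul] at hs3
      omega
    have ht3 : t ≤ m := by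
      have : 1 * t ≤ r * t := Nat.mul_le_mul_right _ (by omega)
      omega
    rw [Finset.sum_eq_single (m - t)]
    · rw [if_pos]
      rw [show m - (m - t) = t by omega]
      omega
    · intro b _ hb
      rw [if_neg]
      rintro ⟨h1, h2, h3⟩
      rw [ht] at h2
      have := Nat.eq_of_mul_eq_mul_left (by omega) h2
      omega
    · intro h
      exact absurd (Finset.mem_range.mpr (by omega)) h
  · apply Finset.sum_eq_zero
    intro j _
    rw [if_neg]
    rintro ⟨h1, h2, h3⟩
    apply hd
    have h4 : r ∣ m - s := ⟨_, h2.symm⟩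
    have := Nat.dvd_sub hm h4
    rwa [show m - (m - s) = s by omega] at this

lemma vnum_normalized (hq : ∀ i, q i ≠ 0) (h0 : ∀ i, q i 0 = 0)
    (hd : ∀ i j, i ≠ j → ∀ c : K, c • q i ≠ q j)
    (h1 : q₀ 0 ≠ 0) (h2 : q₀ 1 = 0) (h3 : q₀ 2 = 0)
    (hP : ∀ i F, F ∈ P i ↔ ∀ n, eval (q i) (homogeneousComponent n F) = 0)
    (hP₀ : ∀ F, F ∈ P₀ ↔ ∀ n, eval q₀ (homogeneousComponent n F) = 0)
    (hJ : ∀ F, F ∈ J ↔ (∀ i, F ∈ P i ^ m) ∧ F ∈ P₀ ^ m) (d s : ℕ)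
    (hl : 2 ≤ l) (hm : (l - 1) ∣ m)
    (hs : d + 1 + s = 2 * m) (hs2 : l * (s + 1) ≤ m) :
    vnum J (d + 1) = l + if (l - 1) ∣ s then 1 else 0 := by
  have hD := map_degComp q q₀ P P₀ m J hq h0 hd h1 h2 h3 hP hP₀ hJ
  have hE := map_oneGen q m J d (hD d)
  have hinj : Function.Injective (finSuccEquiv K 2).toLinearMap := (finSuccEquiv K 2).injective
  have eD := (Submodule.equivMapOfInjective _ hinj (degComp J (d + 1)))
  have eE := (Submodule.equivMapOfInjective _ hinj (oneGen J (d + 1)))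
  rw [hD (d + 1)] at eD
  rw [hE] at eE
  have bD : ∀ j, d + 2 ≤ j → Dsp q m (d + 1) j = ⊥ := by
    intro j hj; unfold Dsp; rw [if_neg]; omega
  have bE : ∀ j, d + 2 ≤ j → Esp q m d j = ⊥ := by
    intro j hj; rw [eq_bot_iff, ← bD j hj]; exact Esp_le q m d j
  obtain ⟨fD, rD⟩ := finrank_Vsp _ _ bD (fun j => inferInstance)
  obtain ⟨fE, rE⟩ := finrank_Vsp _ _ bE (fun j => inferInstance)
  have hle : oneGen J (d + 1) ≤ degComp J (d + 1) := by
    rw [← Submodule.map_le_map_iff_of_injective hinj, hE, hD]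
    intro F hF j
    exact Esp_le q m d j (hF j)
  have : Module.Finite K (degComp J (d + 1)) := Module.Finite.equiv eD.symm
  have h4 := Submodule.finrank_quotient_add_finrank
    (Submodule.comap (degComp J (d + 1)).subtype (oneGen J (d + 1)))
  rw [(Submodule.comapSubtypeEquivOfLe hle).finrank_eq, eE.finrank_eq, eD.finrank_eq, rD, rE] at h4
  simp only [finrank_step q m hq h0 d s hl hs hs2] at h4
  rw [Finset.sum_add_distrib (s := Finset.range (d + 2)) (f := fun j => Module.finrank K (Esp q m d j)),
    sum_step m d s hl hm hs hs2] at h4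
  unfold vnum
  omega

end ideal
end normalized

lemma vnum_add (J : Ideal (MvPolynomial (Fin 3) K)) (d : ℕ) :
    vnum J (d + 1) + Module.finrank K (oneGen J (d + 1)) = Module.finrank K (degComp J (d + 1)) := by
  have hle : oneGen J (d + 1) ≤ degComp J (d + 1) := by
    rw [oneGen, Submodule.span_le]
    rintro _ ⟨f, hf, g, hg, rfl⟩
    have hg1 : g ∈ J := hg.1
    have hg2 : g.IsHomogeneous d := hg.2
    have hf2 : f.IsHomogeneous 1 := hf
    refine ⟨Ideal.mul_mem_left _ _ hg1, ?_⟩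
    have := hf2.mul hg2
    rw [add_comm] at this
    exact this
  have hfin : Module.Finite K (homogeneousSubmodule (Fin 3) K (d + 1)) :=
    Module.Finite.iff_fg.mpr (homogeneousSubmodule_fg _ _ _)
  have : Module.Finite K (degComp J (d + 1)) :=
    Submodule.finiteDimensional_of_le (inf_le_right : degComp J (d + 1) ≤ _)
  have h4 := Submodule.finrank_quotient_add_finrank
    (Submodule.comap (degComp J (d + 1)).subtype (oneGen J (d + 1)))
  rw [(Submodule.comapSubtypeEquivOfLe hle).finrank_eq] at h4
  exact h4

lemma vnum_comap (e : MvPolynomial (Fin 3) K ≃ₐ[K] MvPolynomial (Fin 3) K)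
    (he : ∀ n F, (e F).IsHomogeneous n ↔ F.IsHomogeneous n)
    (J J' : Ideal (MvPolynomial (Fin 3) K)) (hJ : ∀ F, F ∈ J' ↔ e F ∈ J) (d : ℕ) :
    vnum J' (d + 1) = vnum J (d + 1) := by
  have hinj : Function.Injective e.toLinearMap := e.injective
  have key : ∀ n F, F ∈ degComp J' n ↔ e F ∈ degComp J n := by
    intro n F
    simp only [degComp, Submodule.mem_inf, Submodule.restrictScalars_mem, hJ,
      mem_homogeneousSubmodule, he]
  have hD : ∀ n, (degComp J' n).map e.toLinearMap = degComp J n := by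
    intro n
    ext F
    constructor
    · rintro ⟨G, hG, rfl⟩
      exact (key n G).mp hG
    · intro hF
      exact ⟨e.symm F, (key n _).mpr (by simpa using hF), by simp⟩
  have hE : (oneGen J' (d + 1)).map e.toLinearMap = oneGen J (d + 1) := by
    rw [oneGen, oneGen, Submodule.map_span]
    congr 1
    ext F
    constructor
    · rintro ⟨_, ⟨f, hf, g, hg, rfl⟩, rfl⟩
      exact ⟨e f, (he 1 f).mpr hf, e g, (key _ g).mp hg, by simp⟩
    · rintro ⟨f, hf, g, hg, rfl⟩
      refine ⟨e.symm f * e.symm g, ⟨e.symm f, (he 1 _).mp (by simpa using hf), e.symm g,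
        (key _ _).mpr (by simpa using hg), rfl⟩, by simp⟩
  have h1 := vnum_add J d
  have h2 := vnum_add J' d
  rw [(Submodule.equivMapOfInjective _ hinj (degComp J' (d + 1))).finrank_eq, hD,
    (Submodule.equivMapOfInjective _ hinj (oneGen J' (d + 1))).finrank_eq, hE] at h2
  omega

lemma aeval_toMv_comp (M N : Matrix (Fin 3) (Fin 3) K) (h : M * N = 1) :
    (aeval N.toMvPolynomial).comp (aeval M.toMvPolynomial) =
      AlgHom.id K (MvPolynomial (Fin 3) K) := by
  apply MvPolynomial.algHom_ext
  intro i
  have := Matrix.toMvPolynomial_mul M N i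
  rw [h, Matrix.toMvPolynomial_one] at this
  rw [AlgHom.comp_apply, aeval_X]
  exact this.symm

lemma exists_coord (M N : Matrix (Fin 3) (Fin 3) K) (h : M * N = 1) (h' : N * M = 1) :
    ∃ e : MvPolynomial (Fin 3) K ≃ₐ[K] MvPolynomial (Fin 3) K,
      (∀ n F, (e F).IsHomogeneous n ↔ F.IsHomogeneous n) ∧
      (∀ q F, eval q (e F) = eval (M.mulVec q) F) := by
  let e := AlgEquiv.ofAlgHom (aeval M.toMvPolynomial : MvPolynomial (Fin 3) K →ₐ[K] _)
    (aeval N.toMvPolynomial) (aeval_toMv_comp N M h') (aeval_toMv_comp M N h)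
  have h1 : ∀ (A : Matrix (Fin 3) (Fin 3) K) n (F : MvPolynomial (Fin 3) K), F.IsHomogeneous n →
      (aeval A.toMvPolynomial F).IsHomogeneous n := by
    intro A n F hF
    have := hF.aeval A.toMvPolynomial (fun i => A.toMvPolynomial_isHomogeneous i)
    simpa using this
  refine ⟨e, fun n F => ⟨fun hF => ?_, fun hF => h1 M n F hF⟩, fun q F => ?_⟩
  · have h2 := h1 N n _ hF
    have h3 : aeval N.toMvPolynomial (e F) = F := e.symm_apply_apply F
    rwa [h3] at h2
  · change eval q (aeval M.toMvPolynomial F) = _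
    have : ((aeval q).comp (aeval M.toMvPolynomial) : MvPolynomial (Fin 3) K →ₐ[K] K) =
        aeval (M.mulVec q) := by
      apply MvPolynomial.algHom_ext
      intro i
      simp [Matrix.toMvPolynomial_eval_eq_apply]
    have := DFunLike.congr_fun this F
    simpa using this

lemma hc_equiv (e : MvPolynomial (Fin 3) K ≃ₐ[K] MvPolynomial (Fin 3) K)
    (he : ∀ n F, (e F).IsHomogeneous n ↔ F.IsHomogeneous n) (n : ℕ)
    (F : MvPolynomial (Fin 3) K) :
    homogeneousComponent n (e F) = e (homogeneousComponent n F) := by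
  conv_lhs => rw [← sum_homogeneousComponent F, map_sum, map_sum]
  have h1 : ∀ j, homogeneousComponent n (e (homogeneousComponent j F)) =
      if j = n then e (homogeneousComponent n F) else 0 := by
    intro j
    rw [homogeneousComponent_of_mem ((he j _).mpr (homogeneousComponent_isHomogeneous j F))]
    by_cases h : j = n
    · subst h; simp
    · rw [if_neg h, if_neg (Ne.symm h)]
  simp only [h1]
  rw [Finset.sum_ite_eq']
  split_ifs with h
  · rfl
  · rw [homogeneousComponent_eq_zero, map_zero]
    simpa using h

lemma exists_matrix (L q : Fin 3 → K) (h : ∑ j, L j * q j ≠ 0) :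
    ∃ M : Matrix (Fin 3) (Fin 3) K, IsUnit M.det ∧ M 0 = L ∧
      M.mulVec q 1 = 0 ∧ M.mulVec q 2 = 0 := by
  have hq : ∃ k, q k ≠ 0 := by
    by_contra hn
    push Not at hn
    simp [hn] at h
  obtain ⟨k, hk⟩ := hq
  rw [Fin.sum_univ_three] at h
  fin_cases k
  · replace hk : q 0 ≠ 0 := hk
    refine ⟨Matrix.of ![L, ![-q 1, q 0, 0], ![-q 2, 0, q 0]], ?_, rfl, ?_, ?_⟩
    · have hd : (Matrix.of ![L, ![-q 1, q 0, 0], ![-q 2, 0, q 0]] : Matrix (Fin 3) (Fin 3) K).det =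
          (q 0 * (L 0 * q 0 + L 1 * q 1 + L 2 * q 2)) := by
        rw [Matrix.det_fin_three]
        simp
        ring
      rw [isUnit_iff_ne_zero, hd]
      exact mul_ne_zero hk h
    · simp [Matrix.mulVec, dotProduct, Fin.sum_univ_three] <;> ring
    · simp [Matrix.mulVec, dotProduct, Fin.sum_univ_three] <;> ring
  · replace hk : q 1 ≠ 0 := hk
    refine ⟨Matrix.of ![L, ![q 1, -q 0, 0], ![0, -q 2, q 1]], ?_, rfl, ?_, ?_⟩
    · have hd : (Matrix.of ![L, ![q 1, -q 0, 0], ![0, -q 2, q 1]] : Matrix (Fin 3) (Fin 3) K).det =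
          -(q 1 * (L 0 * q 0 + L 1 * q 1 + L 2 * q 2)) := by
        rw [Matrix.det_fin_three]
        simp
        ring
      rw [isUnit_iff_ne_zero, hd]
      exact neg_ne_zero.mpr (mul_ne_zero hk h)
    · simp [Matrix.mulVec, dotProduct, Fin.sum_univ_three] <;> ring
    · simp [Matrix.mulVec, dotProduct, Fin.sum_univ_three] <;> ring
  · replace hk : q 2 ≠ 0 := hk
    refine ⟨Matrix.of ![L, ![q 2, 0, -q 0], ![0, q 2, -q 1]], ?_, rfl, ?_, ?_⟩
    · have hd : (Matrix.of ![L, ![q 2, 0, -q 0], ![0, q 2, -q 1]] : Matrix (Fin 3) (Fin 3) K).det =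
          (q 2 * (L 0 * q 0 + L 1 * q 1 + L 2 * q 2)) := by
        rw [Matrix.det_fin_three]
        simp
        ring
      rw [isUnit_iff_ne_zero, hd]
      exact mul_ne_zero hk h
    · simp [Matrix.mulVec, dotProduct, Fin.sum_univ_three] <;> ring
    · simp [Matrix.mulVec, dotProduct, Fin.sum_univ_three] <;> ring

lemma vnum_general (l : ℕ) (hl : 2 < l)
    (p : Fin (l + 1) → Fin 3 → K) (hp0 : ∀ i, p i ≠ 0)
    (hdist : ∀ i j, i ≠ j → ∀ c : K, c • p i ≠ p j)
    (L : Fin 3 → K)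
    (hon : ∀ i : Fin (l + 1), (i : ℕ) < l → ∑ j, L j * p i j = 0)
    (hoff : ∑ j, L j * p (Fin.last l) j ≠ 0)
    (P : Fin (l + 1) → Ideal (MvPolynomial (Fin 3) K))
    (hP : ∀ i F, F ∈ P i ↔ ∀ n, eval (p i) (homogeneousComponent n F) = 0)
    (m : ℕ) (hm : (l - 1) ∣ m)
    (Im : Ideal (MvPolynomial (Fin 3) K)) (hIm : Im = ⨅ i, P i ^ m) (d s : ℕ)
    (hs : d + s = 2 * m) (hs2 : l * (s + 1) ≤ m) :
    vnum Im d = l + if (l - 1) ∣ s then 1 else 0 := by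
  have hsm : 2 * (s + 1) ≤ m := (Nat.mul_le_mul_right _ hl.le).trans hs2
  obtain ⟨d, rfl⟩ : ∃ d', d = d' + 1 := ⟨d - 1, by omega⟩
  obtain ⟨M, hM, hM0, hM1, hM2⟩ := exists_matrix L (p (Fin.last l)) hoff
  have hNM : M⁻¹ * M = 1 := Matrix.nonsing_inv_mul M hM
  have hMN : M * M⁻¹ = 1 := Matrix.mul_nonsing_inv M hM
  have hinj : ∀ u v, M.mulVec u = M.mulVec v → u = v := by
    intro u v huv
    have := congrArg (M⁻¹.mulVec) huv
    simpa [Matrix.mulVec_mulVec, hNM] using this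
  obtain ⟨e, he, hev⟩ := exists_coord M M⁻¹ hMN hNM
  have hM0' : ∀ v, M.mulVec v 0 = ∑ j, L j * v j := by
    intro v; rw [← hM0]; rfl
  let P' : Fin (l + 1) → Ideal (MvPolynomial (Fin 3) K) := fun i => (P i).map e.symm
  have hP'mem : ∀ (I : Ideal (MvPolynomial (Fin 3) K)) F, F ∈ I.map e.symm ↔ e F ∈ I := by
    intro I F
    have := mem_map_equiv_iff e.symm I (e F)
    rwa [e.symm_apply_apply] at this
  have hP' : ∀ i F, F ∈ P' i ↔ ∀ n, eval (M.mulVec (p i)) (homogeneousComponent n F) = 0 := by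
    intro i F
    rw [hP'mem, hP]
    simp only [hc_equiv e he, hev]
  rw [← vnum_comap e he Im (Im.map e.symm) (hP'mem Im)]
  refine vnum_normalized (fun i : Fin l => M.mulVec (p i.castSucc)) (M.mulVec (p (Fin.last l)))
    (fun i => P' i.castSucc) (P' (Fin.last l)) m _ ?_ ?_ ?_ ?_ hM1 hM2 ?_ ?_ ?_ d s hl.le hm hs hs2
  · intro i h
    exact hp0 _ (hinj _ _ (h.trans (Matrix.mulVec_zero M).symm))
  · intro i
    rw [hM0']; exact hon _ (by simp)
  · intro i j hij c h
    rw [← Matrix.mulVec_smul] at h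
    exact hdist _ _ (fun h => hij (Fin.castSucc_injective _ h)) c (hinj _ _ h)
  · rw [hM0']; exact hoff
  · intro i F; exact hP' _ F
  · intro F; exact hP' _ F
  · intro F
    have h1 : ∀ i, F ∈ P' i ^ m ↔ e F ∈ P i ^ m := by
      intro i
      rw [← hP'mem, Ideal.map_pow]
    rw [hP'mem, hIm, Ideal.mem_iInf, h1]
    simp only [h1]
    exact Fin.forall_fin_succ'

end FatPoints

theorem stmt_5
    (K : Type*) [Field K] [CharZero K]
    -- `l > 2` points on a line plus one point off the line
    (l : ℕ) (hl : 2 < l)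
    (p : Fin (l + 1) → Fin 3 → K) (hp0 : ∀ i, p i ≠ 0)
    (hdist : ∀ i j, i ≠ j → ∀ c : K, c • p i ≠ p j)
    (L : Fin 3 → K) (hL : L ≠ 0)
    (hon : ∀ i : Fin (l + 1), (i : ℕ) < l → ∑ j, L j * p i j = 0)
    (hoff : ∑ j, L j * p (Fin.last l) j ≠ 0)
    -- `P i` is the homogeneous prime ideal of all forms vanishing at `p i`
    (P : Fin (l + 1) → Ideal (MvPolynomial (Fin 3) K))
    (hP : ∀ i F, F ∈ P i ↔ ∀ n, eval (p i) (homogeneousComponent n F) = 0)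
    -- `m = ρ·l·(l−1)` with `ρ ≥ 1`
    (ρ : ℕ) (hρ : 1 ≤ ρ) (m : ℕ) (hm : m = ρ * l * (l - 1))
    -- the uniform fat point ideal `I^{(m)} = P_1^m ∩ ⋯ ∩ P_{l+1}^m`
    (Im : Ideal (MvPolynomial (Fin 3) K)) (hIm : Im = ⨅ i, P i ^ m) :
    ∀ d : ℕ, 2 * m - m / l < d → d ≤ 2 * m →
      -- (i) `d = 2m − w(l−1)` for some `0 ≤ w ≤ ρ − 1`
      ((∃ w : ℕ, w ≤ ρ - 1 ∧ d + w * (l - 1) = 2 * m) → vnum Im d = l + 1) ∧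
      -- (ii) `d = 2m + 1 − p − w(l−1)` for admissible `(w, p)`
      ((∃ w q : ℕ,
          ((w = 0 ∧ 2 ≤ q ∧ q ≤ l - 2) ∨
           (1 ≤ w ∧ w ≤ ρ - 1 ∧ (q = 0 ∨ (2 ≤ q ∧ q ≤ l - 2))) ∨
           (w = ρ ∧ q = 0)) ∧
          d + q + w * (l - 1) = 2 * m + 1) → vnum Im d = l) ∧
      -- (iii) every other degree in this range
      ((¬(∃ w : ℕ, w ≤ ρ - 1 ∧ d + w * (l - 1) = 2 * m)) →
       (¬(∃ w q : ℕ,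
          ((w = 0 ∧ 2 ≤ q ∧ q ≤ l - 2) ∨
           (1 ≤ w ∧ w ≤ ρ - 1 ∧ (q = 0 ∨ (2 ≤ q ∧ q ≤ l - 2))) ∨
           (w = ρ ∧ q = 0)) ∧
          d + q + w * (l - 1) = 2 * m + 1)) →
        vnum Im d = 0) := by
  intro d hd1 hd2
  obtain ⟨k, rfl⟩ : ∃ k, l = k + 3 := ⟨l - 3, by omega⟩
  have hk1 : k + 3 - 1 = k + 2 := by omega
  have hk2 : k + 3 - 2 = k + 1 := by omega
  have hdiv : m / (k + 3) = ρ * (k + 2) := by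
    rw [hm, hk1, show ρ * (k + 3) * (k + 2) = (k + 3) * (ρ * (k + 2)) by ring]
    exact Nat.mul_div_cancel_left _ (by omega)
  obtain ⟨s, hs⟩ : ∃ s, d + s = 2 * m := ⟨2 * m - d, by omega⟩
  have hsl : s + 1 ≤ ρ * (k + 2) := by omega
  have hs2 : (k + 3) * (s + 1) ≤ m := by
    rw [hm, hk1, show ρ * (k + 3) * (k + 2) = (k + 3) * (ρ * (k + 2)) by ring]
    exact Nat.mul_le_mul_left _ hsl
  have key := vnum_general (k + 3) hl p hp0 hdist L hon hoff P hP m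
    ⟨ρ * (k + 3), by rw [hm]; ring⟩ Im hIm d s hs hs2
  rw [hk1] at key
  simp only [hk1, hk2]
  have hmod : s % (k + 2) < k + 2 := Nat.mod_lt _ (by omega)
  refine ⟨?_, ?_, ?_⟩
  · rintro ⟨w, _, hw⟩
    rw [key, if_pos ⟨w, by rw [mul_comm]; omega⟩]
  · rintro ⟨w, q, hwq, hq⟩
    rw [key, if_neg, add_zero]
    rintro ⟨c, rfl⟩
    rw [mul_comm (k + 2) c] at hs
    have h1 : c * (k + 2) + 1 = q + w * (k + 2) := by omega
    have h2 : (c * (k + 2) + 1) % (k + 2) = (q + w * (k + 2)) % (k + 2) := by rw [h1]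
    rw [Nat.add_mul_mod_self_right, add_comm, Nat.add_mul_mod_self_right,
      Nat.mod_eq_of_lt (by omega), Nat.mod_eq_of_lt (by omega)] at h2
    omega
  · intro hn1 hn2
    exfalso
    have hdm := Nat.div_add_mod s (k + 2)
    rw [mul_comm] at hdm
    generalize s / (k + 2) = w at hdm
    generalize s % (k + 2) = r at hdm hmod
    have hw : w < ρ := by
      by_contra hlt
      have : ρ * (k + 2) ≤ w * (k + 2) := Nat.mul_le_mul_right _ (by omega)
      omega
    by_cases hr0 : r = 0
    · exact hn1 ⟨w, by omega, by omega⟩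
    by_cases hr1 : r = k + 1
    · refine hn2 ⟨w + 1, 0, ?_, ?_⟩
      · omega
      · rw [add_mul]; omega
    · exact hn2 ⟨w, r + 1, by omega, by omega⟩
end

section
/- Suppose m ≥ 1 is an integer divisible by l(l−1). Then the total number of minimal generators of I^{(m)} equals 2m − m/l + 1; that is, dim_K ( I^{(m)} / ( (x,y,z)·I^{(m)} ) ) = 2m − m/l + 1, which is one more than the least degree of a nonzero homogeneous element of I^{(m)}. -/
open MvPolynomial Filter

section Helpers
variable {K : Type*} [Field K]

lemma aux_bind_homog {σ : Type*} [Fintype σ] (p : σ → K) (s f : MvPolynomial σ K) (n : ℕ)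
    (hf : f.IsHomogeneous n) :
    bind₁ (fun j => C (p j) * s) f = C (eval p f) * s ^ n := by
  classical
  conv_lhs => rw [f.as_sum]
  rw [eval_eq, map_sum, map_sum, Finset.sum_mul]
  refine Finset.sum_congr rfl fun d hd => ?_
  have hdeg : ∑ i ∈ d.support, d i = n := by
    have := hf.degree_eq_sum_deg_support hd
    simpa using this.symm
  rw [bind₁_monomial]
  simp only [mul_pow, Finset.prod_mul_distrib, Finset.prod_pow_eq_pow_sum, hdeg, map_mul, map_prod,
    map_pow]
  ring

lemma aux_mem_of_eval {σ : Type*} [Fintype σ] (I : Ideal (MvPolynomial σ K)) (p : σ → K)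
    (s f : MvPolynomial σ K) (n : ℕ) (hf : f.IsHomogeneous n)
    (hI : ∀ j, X j - C (p j) * s ∈ I) (h0 : eval p f = 0) : f ∈ I := by
  have h1 : (Ideal.Quotient.mkₐ K I) = (Ideal.Quotient.mkₐ K I).comp (bind₁ (fun j => C (p j) * s)) := by
    apply MvPolynomial.algHom_ext
    intro j
    simpa [Ideal.Quotient.mkₐ_eq_mk] using (Ideal.Quotient.eq.mpr (hI j))
  have h2 := DFunLike.congr_fun h1 f
  rw [AlgHom.comp_apply, aux_bind_homog p s f n hf, h0] at h2
  rw [← Ideal.Quotient.eq_zero_iff_mem]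
  simpa using h2

noncomputable def lf (q : Fin 2 → K) : MvPolynomial (Fin 2) K := C (q 1) * X 0 - C (q 0) * X 1

lemma exists_s (q : Fin 2 → K) (hq : q ≠ 0) : ∃ s : MvPolynomial (Fin 2) K, s.IsHomogeneous 1 ∧
    eval q s = 1 ∧ (∀ j, X j - C (q j) * s ∈ Ideal.span {lf q}) := by
  have h01 : q 0 ≠ 0 ∨ q 1 ≠ 0 := by
    by_contra! h
    apply hq; ext j; fin_cases j <;> simp [h]
  have key : ∀ c d : K, c * q 0 + d * q 1 = 1 → ∃ s : MvPolynomial (Fin 2) K, s.IsHomogeneous 1 ∧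
    eval q s = 1 ∧ (∀ j, X j - C (q j) * s ∈ Ideal.span {lf q}) := by
    intro c d h
    have hC : (C c * C (q 0) + C d * C (q 1) : MvPolynomial (Fin 2) K) = 1 := by
      rw [← C_mul, ← C_mul, ← C_add, h, C_1]
    refine ⟨C c * X 0 + C d * X 1, (isHomogeneous_C_mul_X c 0).add (isHomogeneous_C_mul_X d 1), by simpa using h, ?_⟩
    intro j
    rw [Ideal.mem_span_singleton]
    fin_cases j
    · refine ⟨C d, ?_⟩
      simp only [lf]
      simp only [Fin.zero_eta]
      linear_combination - X 0 * hC
    · refine ⟨- C c, ?_⟩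
      simp only [lf]
      simp only [Fin.mk_one]
      linear_combination - X 1 * hC
  rcases h01 with h | h
  · exact key (q 0)⁻¹ 0 (by field_simp; simp)
  · exact key 0 (q 1)⁻¹ (by field_simp; simp)

lemma lf_homog (q : Fin 2 → K) : (lf q).IsHomogeneous 1 :=
  (isHomogeneous_C_mul_X _ _).sub (isHomogeneous_C_mul_X _ _)

lemma lf_eval (q r : Fin 2 → K) : eval r (lf q) = q 1 * r 0 - q 0 * r 1 := by simp [lf]

lemma lf_eval_self (q : Fin 2 → K) : eval q (lf q) = 0 := by rw [lf_eval]; ring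

lemma lf_dvd (q : Fin 2 → K) (hq : q ≠ 0) (f : MvPolynomial (Fin 2) K) (n : ℕ)
    (hf : f.IsHomogeneous n) (h0 : eval q f = 0) : lf q ∣ f := by
  obtain ⟨s, _, _, hs⟩ := exists_s q hq
  rw [← Ideal.mem_span_singleton]
  exact aux_mem_of_eval _ q s f n hf hs h0

lemma lf_ne_zero (q : Fin 2 → K) (hq : q ≠ 0) : lf q ≠ 0 := by
  intro h
  apply hq
  have h0 : ∀ r : Fin 2 → K, q 1 * r 0 - q 0 * r 1 = 0 := fun r => by
    rw [← lf_eval, h, map_zero]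
  have h1 := h0 ![1, 0]
  have h2 := h0 ![0, 1]
  ext j
  fin_cases j
  · simpa using h2
  · simpa using h1

lemma lf_irred (q : Fin 2 → K) (hq : q ≠ 0) : Irreducible (lf q) := by
  apply irreducible_of_totalDegree_eq_one
  · exact (lf_homog q).totalDegree (lf_ne_zero q hq)
  · intro x hx
    by_contra hu
    have hx0 : x = 0 := by
      by_contra h; exact hu (isUnit_iff_ne_zero.mpr h)
    apply lf_ne_zero q hq
    ext d
    have := hx d
    rw [hx0] at this
    simpa using this

lemma not_dvd (q r : Fin 2 → K) (hqr : eval r (lf q) ≠ 0) : ¬ lf q ∣ lf r := by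
  rintro ⟨g, hg⟩
  by_cases hq : q = 0
  · subst hq; simp [lf_eval] at hqr
  have h2 : eval q (lf r) = 0 := by rw [hg, map_mul, lf_eval_self, zero_mul]
  apply hqr
  rw [lf_eval] at h2 ⊢
  linear_combination -h2

lemma lf_relPrime (q r : Fin 2 → K) (hqr : eval r (lf q) ≠ 0) : IsRelPrime (lf q) (lf r) := by
  have hq : q ≠ 0 := by rintro rfl; simp [lf_eval] at hqr
  exact ((lf_irred q hq).isRelPrime_iff_not_dvd).mpr (not_dvd q r hqr)

lemma homComp_mul (F g : MvPolynomial (Fin 2) K) (a d : ℕ) (hF : F.IsHomogeneous a) :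
    homogeneousComponent (a + d) (F * g) = F * homogeneousComponent d g := by
  conv_lhs => rw [← sum_homogeneousComponent g, Finset.mul_sum, map_sum]
  have h : ∀ i, homogeneousComponent (a + d) (F * homogeneousComponent i g)
      = if i = d then F * homogeneousComponent d g else 0 := by
    intro i
    rw [homogeneousComponent_of_mem (n := a + i) (hF.mul (homogeneousComponent_isHomogeneous i g))]
    by_cases hid : i = d
    · subst hid; simp
    · simp [hid, Ne.symm hid]
  simp only [h, Finset.sum_ite_eq', Finset.mem_range]
  split_ifs with hd
  · rfl
  · rw [homogeneousComponent_eq_zero _ _ (by omega), mul_zero]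

lemma mem_pow_iff_comp (n : ℕ) (g : MvPolynomial (Fin 2) K) :
    g ∈ idealOfVars (Fin 2) K ^ n ↔ ∀ d < n, homogeneousComponent d g = 0 := by
  rw [mem_pow_idealOfVars_iff']
  constructor
  · intro h d hd
    ext x
    rw [coeff_homogeneousComponent]
    split_ifs with hx
    · simpa using h x (by omega)
    · simp
  · intro h x hx
    have := congrArg (coeff x) (h _ hx)
    simpa [coeff_homogeneousComponent] using this

lemma homog_mem_pow (n d : ℕ) (g : MvPolynomial (Fin 2) K) (hg : g.IsHomogeneous d) (hnd : n ≤ d) :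
    g ∈ idealOfVars (Fin 2) K ^ n := by
  rw [mem_pow_idealOfVars_iff']
  intro x hx
  exact hg.coeff_eq_zero (by omega)

lemma mul_mem_pow_iff (F g : MvPolynomial (Fin 2) K) (a n : ℕ) (hF : F.IsHomogeneous a) (hF0 : F ≠ 0) :
    F * g ∈ idealOfVars (Fin 2) K ^ n ↔ g ∈ idealOfVars (Fin 2) K ^ (n - a) := by
  constructor
  · rw [mem_pow_iff_comp, mem_pow_iff_comp]
    intro h d hd
    have := h (a + d) (by omega)
    rw [homComp_mul F g a d hF] at this
    exact (mul_eq_zero.mp this).resolve_left hF0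
  · intro h
    have h1 := Ideal.mul_mem_mul (homog_mem_pow a a F hF le_rfl) h
    rw [← pow_add] at h1
    exact Ideal.pow_le_pow_right (by omega) h1

open Polynomial in
lemma mem_span_pow_iff {S : Type*} [CommRing S] (ℓ : S) (m : ℕ) (f : S[X])
    (J : Ideal S[X]) (hJ : J = Ideal.span {(Polynomial.X : S[X]), Polynomial.C ℓ}) :
    f ∈ J ^ m ↔ ∀ k, ℓ ^ (m - k) ∣ f.coeff k := by
  constructor
  · induction m generalizing f with
    | zero => intro _ k; simp
    | succ m ih =>
      intro hf
      rw [pow_succ'] at hf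
      refine Submodule.mul_induction_on hf ?_ ?_
      · intro r hr s hs k
        obtain ⟨a, b, rfl⟩ := Ideal.mem_span_pair.mp (hJ ▸ hr)
        have e : (a * Polynomial.X + b * Polynomial.C ℓ) * s = (a * s) * Polynomial.X + Polynomial.C ℓ * (b * s) := by ring
        rw [e, Polynomial.coeff_add, Polynomial.coeff_C_mul]
        refine dvd_add ?_ ?_
        · cases k with
          | zero => simp
          | succ k =>
            rw [Polynomial.coeff_mul_X]
            have := ih _ (Ideal.mul_mem_left _ a hs) k
            simpa using this
        · have := mul_dvd_mul_left ℓ (ih _ (Ideal.mul_mem_left _ b hs) k)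
          rw [← pow_succ'] at this
          exact (pow_dvd_pow _ (by omega)).trans this
      · intro x y hx hy k
        rw [Polynomial.coeff_add]
        exact dvd_add (hx k) (hy k)
  · intro h
    rw [f.as_sum_support]
    refine Ideal.sum_mem _ fun k _ => ?_
    obtain ⟨c, hc⟩ := h k
    rw [hc, ← Polynomial.C_mul_X_pow_eq_monomial, Polynomial.C_mul, Polynomial.C_pow]
    have e : Polynomial.C ℓ ^ (m - k) * Polynomial.C c * Polynomial.X ^ k = Polynomial.C c * (Polynomial.C ℓ ^ (m - k) * Polynomial.X ^ k) := by ring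
    rw [e]
    apply Ideal.mul_mem_left
    have hX : Polynomial.X ∈ J := by rw [hJ]; exact Ideal.subset_span (by simp)
    have hl : Polynomial.C ℓ ∈ J := by rw [hJ]; exact Ideal.subset_span (by simp)
    have h1 := Ideal.mul_mem_mul (Ideal.pow_mem_pow hl (m - k)) (Ideal.pow_mem_pow hX k)
    rw [← pow_add] at h1
    exact Ideal.pow_le_pow_right (by omega) h1


open Polynomial in
noncomputable def cf (K : Type*) [Field K] (k : ℕ) :
    (MvPolynomial (Fin 2) K)[X] →ₗ[K] MvPolynomial (Fin 2) K where
  toFun f := f.coeff k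
  map_add' f g := Polynomial.coeff_add f g k
  map_smul' c f := by simp

noncomputable def FF {l : ℕ} (q : Fin l → Fin 2 → K) : MvPolynomial (Fin 2) K := ∏ i, lf (q i)

open Polynomial in
noncomputable def T0 (F : MvPolynomial (Fin 2) K) (m : ℕ) :
    (MvPolynomial (Fin 2) K)[X] →ₗ[K] (MvPolynomial (Fin 2) K)[X] :=
  Polynomial.lsum fun k => ((Polynomial.monomial k).restrictScalars K) ∘ₗ LinearMap.mulLeft K (F ^ (m - k))

lemma T0_coeff (F : MvPolynomial (Fin 2) K) (m : ℕ) (g : Polynomial (MvPolynomial (Fin 2) K)) (k : ℕ) :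
    (T0 F m g).coeff k = F ^ (m - k) * g.coeff k := by
  simp only [T0, Polynomial.lsum_apply, Polynomial.sum_def, Polynomial.finsetSum_coeff]
  simp only [LinearMap.comp_apply, LinearMap.mulLeft_apply, LinearMap.restrictScalars_apply,
    Polynomial.coeff_monomial, Finset.sum_ite_eq', Polynomial.mem_support_iff]
  split_ifs with h
  · rfl
  · simp at h; simp [h]

lemma T0_inj (F : MvPolynomial (Fin 2) K) (hF : F ≠ 0) (m : ℕ) : Function.Injective (T0 F m) := by
  intro f g h
  ext1 k
  have := congrArg (fun f => Polynomial.coeff f k) h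
  simp only [T0_coeff] at this
  exact mul_left_cancel₀ (pow_ne_zero _ hF) this

noncomputable def GG (K : Type*) [Field K] (l m : ℕ) :
    Submodule K (Polynomial (MvPolynomial (Fin 2) K)) where
  carrier := {g | ∀ k, g.coeff k ∈ idealOfVars (Fin 2) K ^ (m - l * (m - k))}
  add_mem' := by
    intro a b ha hb k
    rw [Polynomial.coeff_add]
    exact Ideal.add_mem _ (ha k) (hb k)
  zero_mem' := by intro k; simp
  smul_mem' := by
    intro c x hx k
    rw [Polynomial.coeff_smul, MvPolynomial.smul_eq_C_mul]
    exact Ideal.mul_mem_left _ _ (hx k)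

lemma mem_GG {l m : ℕ} {g : Polynomial (MvPolynomial (Fin 2) K)} :
    g ∈ GG K l m ↔ ∀ k, g.coeff k ∈ idealOfVars (Fin 2) K ^ (m - l * (m - k)) := Iff.rfl

noncomputable def Phi {l : ℕ} (q : Fin l → Fin 2 → K) (m n : ℕ) :
    Polynomial (MvPolynomial (Fin 2) K) →ₗ[K] (Fin (m - n + 1) → K) × (Fin n → Fin l → K) :=
  LinearMap.prod
    (LinearMap.pi fun b => (MvPolynomial.lcoeff K (0 : Fin 2 →₀ ℕ)) ∘ₗ cf K (m - n - b))
    (LinearMap.pi fun a => LinearMap.pi fun i =>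
      (aeval (q i)).toLinearMap ∘ₗ homogeneousComponent (m - l * a) ∘ₗ cf K (m - a))

lemma mem_ker_Phi {l : ℕ} (q : Fin l → Fin 2 → K) (m n : ℕ) (g : Polynomial (MvPolynomial (Fin 2) K)) :
    Phi q m n g = 0 ↔ (∀ b : Fin (m - n + 1), (g.coeff (m - n - b)).coeff 0 = 0) ∧
      ∀ (a : Fin n) i, eval (q i) (homogeneousComponent (m - l * a) (g.coeff (m - a))) = 0 := by
  simp only [Phi, Prod.ext_iff, funext_iff]
  rfl

lemma FF_homog {l : ℕ} (q : Fin l → Fin 2 → K) : (FF q).IsHomogeneous l := by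
  have := IsHomogeneous.prod Finset.univ (fun i => lf (q i)) (fun _ => 1) (fun i _ => lf_homog (q i))
  simpa [FF] using this

lemma FF_pow_homog {l : ℕ} (q : Fin l → Fin 2 → K) (a : ℕ) : (FF q ^ a).IsHomogeneous (l * a) :=
  (FF_homog q).pow a

lemma FF_ne {l : ℕ} (q : Fin l → Fin 2 → K) (hq0 : ∀ i, q i ≠ 0) : FF q ≠ 0 :=
  Finset.prod_ne_zero_iff.mpr fun i _ => lf_ne_zero _ (hq0 i)

lemma FF_eval {l : ℕ} (q : Fin l → Fin 2 → K) (i : Fin l) : eval (q i) (FF q) = 0 := by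
  rw [FF, map_prod]
  exact Finset.prod_eq_zero (Finset.mem_univ i) (lf_eval_self _)

lemma FF_pow_dvd {l : ℕ} (q : Fin l → Fin 2 → K)
    (hq : ∀ i j, i ≠ j → eval (q j) (lf (q i)) ≠ 0) (a : ℕ) (c : MvPolynomial (Fin 2) K) :
    FF q ^ a ∣ c ↔ ∀ i, lf (q i) ^ a ∣ c := by
  constructor
  · intro h i
    have h1 : lf (q i) ∣ FF q := Finset.dvd_prod_of_mem (fun i => lf (q i)) (Finset.mem_univ i)
    exact (pow_dvd_pow_of_dvd h1 a).trans h
  · intro h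
    rw [FF, ← Finset.prod_pow]
    apply Fintype.prod_dvd_of_isRelPrime _ h
    intro i j hij
    exact (lf_relPrime _ _ (hq i j hij)).pow

lemma mem_T0_iff {l : ℕ} (q : Fin l → Fin 2 → K) (hq0 : ∀ i, q i ≠ 0)
    (hq : ∀ i j, i ≠ j → eval (q j) (lf (q i)) ≠ 0) (m : ℕ) (f : Polynomial (MvPolynomial (Fin 2) K)) :
    f ∈ (GG K l m).map (T0 (FF q) m) ↔
      (∀ i k, lf (q i) ^ (m - k) ∣ f.coeff k) ∧ ∀ k, f.coeff k ∈ idealOfVars (Fin 2) K ^ m := by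
  constructor
  · rintro ⟨g, hg, rfl⟩
    refine ⟨fun i k => ?_, fun k => ?_⟩
    · rw [T0_coeff]
      exact (FF_pow_dvd q hq _ _).mp (Dvd.intro _ rfl) i
    · rw [T0_coeff, mul_mem_pow_iff _ _ _ _ (FF_pow_homog q _) (pow_ne_zero _ (FF_ne q hq0))]
      exact hg k
  · rintro ⟨h1, h2⟩
    have h3 : ∀ k, ∃ c, f.coeff k = FF q ^ (m - k) * c := fun k =>
      (FF_pow_dvd q hq _ _).mpr (fun i => h1 i k)
    choose c hc using h3
    have hcf : ∀ k, (∑ j ∈ f.support, Polynomial.monomial j (c j)).coeff k = c k := by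
      intro k
      simp only [Polynomial.finsetSum_coeff, Polynomial.coeff_monomial, Finset.sum_ite_eq',
        Polynomial.mem_support_iff]
      split_ifs with h
      · rfl
      · replace h : f.coeff k = 0 := by
          by_contra hne
          exact h (Polynomial.mem_support_iff.mpr hne)
        rw [hc] at h
        exact ((mul_eq_zero.mp h).resolve_left (pow_ne_zero _ (FF_ne q hq0))).symm
    refine ⟨∑ j ∈ f.support, Polynomial.monomial j (c j), ?_, ?_⟩
    · intro k
      rw [hcf, ← mul_mem_pow_iff _ _ _ _ (FF_pow_homog q _) (pow_ne_zero _ (FF_ne q hq0)), ← hc]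
      exact h2 k
    · ext1 k
      rw [T0_coeff, hcf, hc]

lemma X_mul_mem {l : ℕ} (hl : 0 < l) (q : Fin l → Fin 2 → K) (hq0 : ∀ i, q i ≠ 0)
    (m n : ℕ) (hmn : m = l * n)
    (J : Ideal (Polynomial (MvPolynomial (Fin 2) K)))
    (hJ : ∀ f, f ∈ J ↔ f ∈ (GG K l m).map (T0 (FF q) m))
    (f : Polynomial (MvPolynomial (Fin 2) K)) (hf : f ∈ J) :
    Polynomial.X * f ∈ (GG K l m ⊓ LinearMap.ker (Phi q m n)).map (T0 (FF q) m) := by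
  have h1 := (hJ _).mp (Ideal.mul_mem_left J Polynomial.X hf)
  obtain ⟨g, hg, rfl⟩ := (hJ _).mp hf
  obtain ⟨g', hg', h⟩ := h1
  refine ⟨g', ⟨hg', ?_⟩, h⟩
  have hk : ∀ k, (FF q) ^ (m - k) * g'.coeff k = (Polynomial.X * T0 (FF q) m g).coeff k := by
    intro k
    rw [← h, T0_coeff]
  have h0 : g'.coeff 0 = 0 := by
    have := hk 0
    rw [Polynomial.coeff_X_mul_zero] at this
    exact (mul_eq_zero.mp this).resolve_left (pow_ne_zero _ (FF_ne q hq0))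
  have hs : ∀ k, k + 1 ≤ m → g'.coeff (k + 1) = FF q * g.coeff k := by
    intro k hkm
    have := hk (k + 1)
    rw [Polynomial.coeff_X_mul, T0_coeff, show m - k = (m - (k + 1)) + 1 by omega, pow_succ, mul_assoc] at this
    exact mul_left_cancel₀ (pow_ne_zero _ (FF_ne q hq0)) this
  have hn : n ≤ m := by rw [hmn]; exact Nat.le_mul_of_pos_left n hl
  rw [SetLike.mem_coe, LinearMap.mem_ker, mem_ker_Phi]
  refine ⟨fun b => ?_, fun a i => ?_⟩
  · rcases Nat.eq_zero_or_pos (m - n - b) with h | h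
    · rw [h, h0]; simp
    · obtain ⟨k, hk'⟩ : ∃ k, m - n - b = k + 1 := ⟨m - n - b - 1, by omega⟩
      rw [hk', hs k (by omega)]
      have : (FF q).coeff 0 = 0 := (FF_homog q).coeff_eq_zero (by simp; omega)
      rw [← constantCoeff_eq, map_mul, constantCoeff_eq, this, zero_mul]
  · obtain ⟨k, hk'⟩ : ∃ k, m - a = k + 1 := ⟨m - a - 1, by omega⟩
    have hle : l ≤ m - l * a := by
      have : l * (a + 1) ≤ l * n := Nat.mul_le_mul_left l a.2
      rw [hmn]; rw [mul_add, mul_one] at this; omega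
    rw [hk', hs k (by omega), show m - l * a = l + (m - l * a - l) by omega,
      homComp_mul _ _ _ _ (FF_homog q), map_mul, FF_eval, zero_mul]

lemma C_mul_mem {l : ℕ} (hl : 0 < l) (q : Fin l → Fin 2 → K) (hq0 : ∀ i, q i ≠ 0)
    (m n : ℕ) (hmn : m = l * n)
    (J : Ideal (Polynomial (MvPolynomial (Fin 2) K)))
    (hJ : ∀ f, f ∈ J ↔ f ∈ (GG K l m).map (T0 (FF q) m))
    (f : Polynomial (MvPolynomial (Fin 2) K)) (hf : f ∈ J) (j : Fin 2) :
    Polynomial.C (X j) * f ∈ (GG K l m ⊓ LinearMap.ker (Phi q m n)).map (T0 (FF q) m) := by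
  obtain ⟨g, hg, rfl⟩ := (hJ _).mp hf
  refine ⟨Polynomial.C (X j) * g, ⟨fun k => ?_, ?_⟩, ?_⟩
  · rw [Polynomial.coeff_C_mul]
    exact Ideal.mul_mem_left _ _ (hg k)
  · rw [SetLike.mem_coe, LinearMap.mem_ker, mem_ker_Phi]
    have hn : n ≤ m := by rw [hmn]; exact Nat.le_mul_of_pos_left n hl
    refine ⟨fun b => ?_, fun a i => ?_⟩
    · rw [Polynomial.coeff_C_mul, ← constantCoeff_eq, map_mul]; simp
    · have hle : l ≤ m - l * a := by
        have : l * (a + 1) ≤ l * n := Nat.mul_le_mul_left l a.2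
        rw [hmn]; rw [mul_add, mul_one] at this; omega
      rw [Polynomial.coeff_C_mul, show m - l * a = 1 + (m - l * a - 1) by omega,
        homComp_mul _ _ _ _ (isHomogeneous_X K j)]
      have := (mem_pow_iff_comp _ _).mp (hg (m - a)) (m - l * a - 1)
        (by rw [show m - (m - (a : ℕ)) = a by omega]; omega)
      rw [this, mul_zero, map_zero]
  · ext1 k
    simp only [T0_coeff, Polynomial.coeff_C_mul]
    ring

lemma ker_mem {l : ℕ} (hl : 0 < l) (q : Fin l → Fin 2 → K) (hq0 : ∀ i, q i ≠ 0)
    (hq : ∀ i j, i ≠ j → eval (q j) (lf (q i)) ≠ 0)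
    (m n : ℕ) (hmn : m = l * n)
    (J N : Ideal (Polynomial (MvPolynomial (Fin 2) K)))
    (hJ : ∀ f, f ∈ J ↔ f ∈ (GG K l m).map (T0 (FF q) m))
    (hNX : Polynomial.X ∈ N) (hNC : ∀ j, Polynomial.C (X j) ∈ N)
    (g : Polynomial (MvPolynomial (Fin 2) K)) (hg : g ∈ GG K l m) (hker : Phi q m n g = 0) :
    T0 (FF q) m g ∈ N * J := by
  have hn : n ≤ m := by rw [hmn]; exact Nat.le_mul_of_pos_left n hl
  have hmono : ∀ k c, c ∈ idealOfVars (Fin 2) K ^ (m - l * (m - k)) →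
      Polynomial.monomial k (FF q ^ (m - k) * c) ∈ J := by
    intro k c hc
    rw [hJ]
    refine ⟨Polynomial.monomial k c, fun k' => ?_, ?_⟩
    · rw [Polynomial.coeff_monomial]
      split_ifs with h
      · rw [← h]; exact hc
      · exact zero_mem _
    · ext1 k'
      rw [T0_coeff, Polynomial.coeff_monomial, Polynomial.coeff_monomial]
      split_ifs with h
      · rw [h]
      · simp
  have hNC' : ∀ r ∈ idealOfVars (Fin 2) K, Polynomial.C r ∈ N := by
    have : idealOfVars (Fin 2) K ≤ N.comap Polynomial.C := by
      rw [idealOfVars, Ideal.span_le]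
      rintro _ ⟨j, rfl⟩
      exact hNC j
    exact fun r hr => this hr
  have hY : ∀ k c, c ∈ idealOfVars (Fin 2) K ^ (m - l * (m - k) + 1) →
      Polynomial.monomial k (FF q ^ (m - k) * c) ∈ N * J := by
    intro k c hc
    rw [pow_succ'] at hc
    refine Submodule.mul_induction_on hc ?_ ?_
    · intro r hr s hs
      have := Ideal.mul_mem_mul (hNC' r hr) (hmono k s hs)
      rw [Polynomial.C_mul_monomial] at this
      convert this using 2
      ring
    · intro x y hx hy
      rw [mul_add, map_add]
      exact Ideal.add_mem _ hx hy
  have hZ : ∀ k c, c ∈ idealOfVars (Fin 2) K ^ (m - l * (m - k)) →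
      Polynomial.monomial (k + 1) (FF q ^ (m - k) * c) ∈ N * J := by
    intro k c hc
    have := Ideal.mul_mem_mul hNX (hmono k c hc)
    rwa [Polynomial.X_mul_monomial] at this
  obtain ⟨hk1, hk2⟩ := (mem_ker_Phi q m n g).mp hker
  rw [(T0 (FF q) m g).as_sum_support]
  refine Ideal.sum_mem _ fun k _ => ?_
  rw [T0_coeff]
  rcases lt_or_ge m k with hmk | hmk
  · obtain ⟨k', rfl⟩ : ∃ k', k = k' + 1 := ⟨k - 1, by omega⟩
    have := hZ k' (g.coeff (k' + 1)) (by
      have := hg (k' + 1)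
      rwa [show m - (k' + 1) = m - k' by omega] at this)
    rwa [show m - k' = m - (k' + 1) by omega] at this
  rcases le_or_gt n (m - k) with hnk | hnk
  · apply hY
    have he : m - l * (m - k) = 0 := by
      have := Nat.mul_le_mul_left l hnk
      omega
    rw [he, mem_pow_iff_comp]
    intro d hd
    obtain rfl : d = 0 := by omega
    have := hk1 ⟨m - n - k, by omega⟩
    rw [show m - n - (m - n - k) = k by omega] at this
    rw [homogeneousComponent_zero, this, C_0]
  · have h2 := hk2 ⟨m - k, hnk⟩
    simp only at h2
    rw [show m - (m - k) = k by omega] at h2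
    set e := m - l * (m - k) with he
    have hle : l ≤ e := by
      have : l * (m - k + 1) ≤ l * n := Nat.mul_le_mul_left l hnk
      rw [mul_add, mul_one] at this; omega
    obtain ⟨h', hh'⟩ : FF q ∣ homogeneousComponent e (g.coeff k) := by
      have := (FF_pow_dvd q hq 1 (homogeneousComponent e (g.coeff k))).mpr (fun i => by
        rw [pow_one]
        exact lf_dvd _ (hq0 i) _ e (homogeneousComponent_isHomogeneous _ _) (h2 i))
      rwa [pow_one] at this
    obtain ⟨k', rfl⟩ : ∃ k', k = k' + 1 := ⟨k - 1, by omega⟩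
    have hsplit : FF q ^ (m - (k' + 1)) * g.coeff (k' + 1) =
        FF q ^ (m - (k' + 1)) * (g.coeff (k' + 1) - homogeneousComponent e (g.coeff (k' + 1)))
        + FF q ^ (m - k') * h' := by
      rw [hh', show m - k' = m - (k' + 1) + 1 by omega, pow_succ]
      ring
    rw [hsplit, map_add]
    refine Ideal.add_mem _ (hY _ _ ?_) (hZ _ _ ?_)
    · rw [← he, mem_pow_iff_comp]
      intro d hd
      rw [map_sub, homogeneousComponent_of_mem (homogeneousComponent_mem e _)]
      split_ifs with hde
      · rw [hde, sub_self]
      · rw [sub_zero]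
        exact (mem_pow_iff_comp _ _).mp (hg (k' + 1)) d (by omega)
    · have hx : FF q * h' ∈ idealOfVars (Fin 2) K ^ e := by
        rw [← hh']
        exact homog_mem_pow e e _ (homogeneousComponent_isHomogeneous _ _) le_rfl
      rw [mul_mem_pow_iff _ _ _ _ (FF_homog q) (FF_ne q hq0)] at hx
      have : m - l * (m - k') = e - l := by
        rw [show m - k' = m - (k' + 1) + 1 by omega, mul_add, mul_one]
        omega
      rwa [this]

lemma exists_interp {l : ℕ} (q : Fin l → Fin 2 → K) (hq0 : ∀ i, q i ≠ 0)
    (hq : ∀ i j, i ≠ j → eval (q j) (lf (q i)) ≠ 0) (e : ℕ) (he : l ≤ e) (v : Fin l → K) :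
    ∃ h : MvPolynomial (Fin 2) K, h.IsHomogeneous e ∧ ∀ i, eval (q i) h = v i := by
  classical
  have h1 : ∀ i, ∃ h : MvPolynomial (Fin 2) K, h.IsHomogeneous e ∧
      ∀ j, eval (q j) h = if j = i then 1 else 0 := by
    intro i
    obtain ⟨s, hs, hs1, _⟩ := exists_s (q i) (hq0 i)
    set A := ∏ j ∈ Finset.univ.erase i, lf (q j) with hA
    have hAh : A.IsHomogeneous (l - 1) := by
      have := IsHomogeneous.prod (Finset.univ.erase i) (fun i => lf (q i)) (fun _ => 1) (fun i _ => lf_homog (q i))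
      simpa using this
    have hAi : eval (q i) A ≠ 0 := by
      rw [hA, map_prod, Finset.prod_ne_zero_iff]
      intro j hj
      exact hq j i (Finset.ne_of_mem_erase hj)
    refine ⟨C (eval (q i) A)⁻¹ * (A * s ^ (e - (l - 1))), ?_, ?_⟩
    · apply IsHomogeneous.C_mul
      have := hAh.mul (hs.pow (e - (l - 1)))
      rwa [show l - 1 + 1 * (e - (l - 1)) = e by omega] at this
    · intro j
      rw [map_mul, map_mul, map_pow, eval_C]
      split_ifs with h
      · subst h; rw [hs1]; simp [hAi]
      · have : eval (q j) A = 0 := by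
          rw [hA, map_prod]
          exact Finset.prod_eq_zero (Finset.mem_erase.mpr ⟨h, Finset.mem_univ j⟩) (lf_eval_self _)
        rw [this]; simp
  choose h hh hv using h1
  refine ⟨∑ i, C (v i) * h i, IsHomogeneous.sum _ _ _ fun i _ => (hh i).C_mul _, fun i => ?_⟩
  simp [map_sum, hv]

lemma Phi_surj {l : ℕ} (hl : 0 < l) (q : Fin l → Fin 2 → K) (hq0 : ∀ i, q i ≠ 0)
    (hq : ∀ i j, i ≠ j → eval (q j) (lf (q i)) ≠ 0)
    (m n : ℕ) (hmn : m = l * n) (u : (Fin (m - n + 1) → K) × (Fin n → Fin l → K)) :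
    ∃ g ∈ GG K l m, Phi q m n g = u := by
  have hn : n ≤ m := by rw [hmn]; exact Nat.le_mul_of_pos_left n hl
  have hc : ∀ k, ∃ c ∈ idealOfVars (Fin 2) K ^ (m - l * (m - k)),
      (∀ b : Fin (m - n + 1), k = m - n - b → c.coeff 0 = u.1 b) ∧
      (∀ a : Fin n, k = m - a → ∀ i, eval (q i) (homogeneousComponent (m - l * a) c) = u.2 a i) := by
    intro k
    by_cases h1 : k ≤ m - n
    · refine ⟨C (u.1 ⟨m - n - k, by omega⟩), ?_, ?_, ?_⟩
      · have he : m - l * (m - k) = 0 := by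
          have := Nat.mul_le_mul_left l (show n ≤ m - k by omega)
          omega
        rw [he]; simp
      · intro b hb
        have : (⟨m - n - k, by omega⟩ : Fin (m - n + 1)) = b := by ext; simp; omega
        rw [this]; simp
      · intro a ha; omega
    · by_cases h2 : k ≤ m
      · have hle : l ≤ m - l * (m - k) := by
          have : l * (m - k + 1) ≤ l * n := Nat.mul_le_mul_left l (by omega)
          rw [mul_add, mul_one] at this; omega
        obtain ⟨h, hh, hv⟩ := exists_interp q hq0 hq (m - l * (m - k)) hle (u.2 ⟨m - k, by omega⟩)
        refine ⟨h, homog_mem_pow _ _ _ hh le_rfl, ?_, ?_⟩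
        · intro b hb; omega
        · intro a ha i
          have ha' : (⟨m - k, by omega⟩ : Fin n) = a := by ext; simp; omega
          have ha2 : (a : ℕ) = m - k := by rw [← ha']
          rw [ha2, homogeneousComponent_eq_self hh, hv, ha']
      · refine ⟨0, zero_mem _, ?_, ?_⟩
        · intro b hb; omega
        · intro a ha; omega
  choose c hc1 hc2 hc3 using hc
  have hcf : ∀ k, (∑ j ∈ Finset.range (m + 1), Polynomial.monomial j (c j)).coeff k
      = if k < m + 1 then c k else 0 := by
    intro k
    simp [Polynomial.finsetSum_coeff, Polynomial.coeff_monomial, Finset.sum_ite_eq']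
  refine ⟨∑ j ∈ Finset.range (m + 1), Polynomial.monomial j (c j), fun k => ?_, ?_⟩
  · rw [hcf]
    split_ifs
    · exact hc1 k
    · exact zero_mem _
  · refine Prod.ext (funext fun b => ?_) (funext fun a => funext fun i => ?_)
    · have : (Phi q m n (∑ j ∈ Finset.range (m + 1), Polynomial.monomial j (c j))).1 b =
        ((∑ j ∈ Finset.range (m + 1), Polynomial.monomial j (c j)).coeff (m - n - b)).coeff 0 := rfl
      rw [this, hcf, if_pos (by omega)]
      exact hc2 _ b rfl
    · have : (Phi q m n (∑ j ∈ Finset.range (m + 1), Polynomial.monomial j (c j))).2 a i =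
        eval (q i) (homogeneousComponent (m - l * a) ((∑ j ∈ Finset.range (m + 1), Polynomial.monomial j (c j)).coeff (m - a))) := rfl
      rw [this, hcf, if_pos (by omega)]
      exact hc3 _ a rfl i

lemma finrank_quot {V W U : Type*} [AddCommGroup V] [Module K V] [AddCommGroup W] [Module K W]
    [AddCommGroup U] [Module K U] (T : V →ₗ[K] W) (hT : Function.Injective T) (Φ : V →ₗ[K] U)
    (G : Submodule K V) (A B : Submodule K W) (hA : A = G.map T)
    (hB : B = (G ⊓ LinearMap.ker Φ).map T) (hs : ∀ u, ∃ g ∈ G, Φ g = u) :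
    Module.finrank K (↥A ⧸ Submodule.comap A.subtype B) = Module.finrank K U := by
  subst hA hB
  let e : G ≃ₗ[K] G.map T := Submodule.equivMapOfInjective T hT G
  let Ψ : ↥(G.map T) →ₗ[K] U := (Φ ∘ₗ G.subtype) ∘ₗ e.symm.toLinearMap
  have hk : Submodule.comap (G.map T).subtype ((G ⊓ LinearMap.ker Φ).map T) = LinearMap.ker Ψ := by
    ext x
    obtain ⟨g, rfl⟩ := e.surjective x
    have he : ((e g : G.map T) : W) = T g := rfl
    simp only [Submodule.mem_comap, Submodule.subtype_apply, he, LinearMap.mem_ker, Ψ,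
      LinearMap.comp_apply, LinearEquiv.coe_coe, LinearEquiv.symm_apply_apply]
    constructor
    · rintro ⟨g', hg', h⟩
      rw [← hT h]; exact hg'.2
    · intro h
      exact ⟨g, ⟨g.2, h⟩, rfl⟩
  have hsurj : Function.Surjective Ψ := by
    intro u
    obtain ⟨g, hg, rfl⟩ := hs u
    exact ⟨e ⟨g, hg⟩, by simp [Ψ]⟩
  rw [hk]
  exact (LinearMap.quotKerEquivOfSurjective Ψ hsurj).finrank_eq

lemma ideal_eq_span {σ : Type*} [Fintype σ] (P : Ideal (MvPolynomial σ K)) (c : σ → K)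
    (hP : ∀ f, f ∈ P ↔ ∀ n, eval c (homogeneousComponent n f) = 0)
    (W : Set (MvPolynomial σ K)) (hW : ∀ w ∈ W, w.IsHomogeneous 1 ∧ eval c w = 0)
    (s : MvPolynomial σ K) (hs : ∀ j, X j - C (c j) * s ∈ Ideal.span W) : P = Ideal.span W := by
  apply le_antisymm
  · intro f hf
    rw [← sum_homogeneousComponent f]
    refine Ideal.sum_mem _ fun n _ => ?_
    exact aux_mem_of_eval _ c s _ n (homogeneousComponent_isHomogeneous n f) hs ((hP f).mp hf n)
  · rw [Ideal.span_le]
    intro w hw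
    rw [SetLike.mem_coe, hP]
    intro n
    rw [homogeneousComponent_of_mem (n := 1) (hW w hw).1]
    split_ifs
    · exact (hW w hw).2
    · simp

noncomputable def EE (M M' : Matrix (Fin 3) (Fin 3) K) (h : M * M' = 1) (h' : M' * M = 1) :
    MvPolynomial (Fin 3) K ≃ₐ[K] MvPolynomial (Fin 3) K :=
  AlgEquiv.ofAlgHom (bind₁ M.toMvPolynomial) (bind₁ M'.toMvPolynomial)
    (by
      apply MvPolynomial.algHom_ext
      intro i
      rw [AlgHom.comp_apply, bind₁_X_right, ← Matrix.toMvPolynomial_mul, h', Matrix.toMvPolynomial_one]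
      rfl)
    (by
      apply MvPolynomial.algHom_ext
      intro i
      rw [AlgHom.comp_apply, bind₁_X_right, ← Matrix.toMvPolynomial_mul, h, Matrix.toMvPolynomial_one]
      rfl)

lemma bind_homog (M : Matrix (Fin 3) (Fin 3) K) (f : MvPolynomial (Fin 3) K) (n : ℕ)
    (hf : f.IsHomogeneous n) : (bind₁ M.toMvPolynomial f).IsHomogeneous n := by
  have := hf.aeval (fun i => M.toMvPolynomial i) (n := 1) (fun i => M.toMvPolynomial_isHomogeneous i)
  rw [one_mul] at this
  exact this

lemma bind_comp (M : Matrix (Fin 3) (Fin 3) K) (f : MvPolynomial (Fin 3) K) (n : ℕ) :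
    homogeneousComponent n (bind₁ M.toMvPolynomial f) =
      bind₁ M.toMvPolynomial (homogeneousComponent n f) := by
  conv_lhs => rw [← sum_homogeneousComponent f, map_sum, map_sum]
  have h : ∀ i, homogeneousComponent n (bind₁ M.toMvPolynomial (homogeneousComponent i f))
      = if i = n then bind₁ M.toMvPolynomial (homogeneousComponent n f) else 0 := by
    intro i
    rw [homogeneousComponent_of_mem (n := i) (bind_homog M _ i (homogeneousComponent_isHomogeneous i f))]
    by_cases hid : i = n
    · subst hid; simp
    · simp [hid, Ne.symm hid]
  simp only [h, Finset.sum_ite_eq', Finset.mem_range]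
  split_ifs with hd
  · rfl
  · rw [homogeneousComponent_eq_zero _ _ (by omega), map_zero]

lemma eval_bind (M : Matrix (Fin 3) (Fin 3) K) (f : MvPolynomial (Fin 3) K) (c : Fin 3 → K) :
    eval c (bind₁ M.toMvPolynomial f) = eval (M.mulVec c) f := by
  rw [← coe_aeval_eq_eval, ← coe_aeval_eq_eval]
  simp only [RingHom.coe_coe]
  rw [aeval_bind₁]
  congr 2
  ext i
  rw [← Matrix.toMvPolynomial_eval_eq_apply, ← coe_aeval_eq_eval]
  rfl

lemma mem_map_EE (M M' : Matrix (Fin 3) (Fin 3) K) (h : M * M' = 1) (h' : M' * M = 1)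
    (P : Ideal (MvPolynomial (Fin 3) K)) (p : Fin 3 → K)
    (hP : ∀ f, f ∈ P ↔ ∀ n, eval p (homogeneousComponent n f) = 0) (f : MvPolynomial (Fin 3) K) :
    f ∈ P.map (EE M M' h h') ↔ ∀ n, eval (M'.mulVec p) (homogeneousComponent n f) = 0 := by
  obtain ⟨g, rfl⟩ := (EE M M' h h').surjective f
  have h1 : EE M M' h h' g ∈ P.map (EE M M' h h') ↔ g ∈ P := by
    rw [Ideal.mem_map_of_equiv]
    constructor
    · rintro ⟨x, hx, hxg⟩
      rwa [← (EE M M' h h').injective hxg]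
    · intro hg; exact ⟨g, hg, rfl⟩
  rw [h1, hP]
  have h2 : ∀ n, eval (M'.mulVec p) (homogeneousComponent n (EE M M' h h' g)) = eval p (homogeneousComponent n g) := by
    intro n
    have : EE M M' h h' g = bind₁ M.toMvPolynomial g := rfl
    rw [this, bind_comp, eval_bind, Matrix.mulVec_mulVec, h, Matrix.one_mulVec]
  simp only [h2]

lemma fs_rename (s : MvPolynomial (Fin 2) K) :
    finSuccEquiv K 2 (rename Fin.succ s) = Polynomial.C s := by
  have : ((finSuccEquiv K 2).toAlgHom.comp (rename Fin.succ)).toRingHom = (Polynomial.C : MvPolynomial (Fin 2) K →+* _) := by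
    apply MvPolynomial.ringHom_ext
    · intro r
      simp [finSuccEquiv_apply]
    · intro i
      simp [finSuccEquiv_X_succ]
  exact congrArg (fun φ => φ s) this

lemma map_line (P' : Ideal (MvPolynomial (Fin 3) K)) (c : Fin 3 → K) (q : Fin 2 → K)
    (hP : ∀ f, f ∈ P' ↔ ∀ n, eval c (homogeneousComponent n f) = 0)
    (hc0 : c 0 = 0) (hcq : ∀ j : Fin 2, c j.succ = q j) (hq : q ≠ 0) :
    P'.map (finSuccEquiv K 2) =
      Ideal.span {(Polynomial.X : Polynomial (MvPolynomial (Fin 2) K)), Polynomial.C (lf q)} := by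
  obtain ⟨s, hs1, hs2, hs3⟩ := exists_s q hq
  have hcomp : c ∘ Fin.succ = q := funext hcq
  have h1 : P' = Ideal.span {X 0, rename Fin.succ (lf q)} := by
    refine ideal_eq_span P' c hP _ ?_ (rename Fin.succ s) ?_
    · rintro w (rfl | rfl)
      · exact ⟨isHomogeneous_X _ _, by simpa using hc0⟩
      · refine ⟨(lf_homog q).rename_isHomogeneous, ?_⟩
        rw [eval_rename, hcomp, lf_eval_self]
    · intro j
      refine Fin.cases ?_ (fun j => ?_) j
      · rw [hc0, C_0, zero_mul, sub_zero]
        exact Ideal.subset_span (by simp)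
      · obtain ⟨d, hd⟩ := Ideal.mem_span_singleton.mp (hs3 j)
        have : (X j.succ - C (c j.succ) * rename Fin.succ s : MvPolynomial (Fin 3) K) = rename Fin.succ (X j - C (q j) * s) := by
          simp [hcq]
        rw [this, hd, map_mul]
        exact Ideal.mul_mem_right _ _ (Ideal.subset_span (by simp))
  rw [h1, Ideal.map_span, Set.image_pair, finSuccEquiv_X_zero, fs_rename]

lemma map_off (P' : Ideal (MvPolynomial (Fin 3) K)) (c : Fin 3 → K)
    (hP : ∀ f, f ∈ P' ↔ ∀ n, eval c (homogeneousComponent n f) = 0)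
    (hc0 : c 0 = 1) (hcq : ∀ j : Fin 2, c j.succ = 0) :
    P'.map (finSuccEquiv K 2) = (idealOfVars (Fin 2) K).map Polynomial.C := by
  have h1 : P' = Ideal.span (Set.range fun j : Fin 2 => X j.succ) := by
    refine ideal_eq_span P' c hP _ ?_ (X 0) ?_
    · rintro w ⟨j, rfl⟩
      exact ⟨isHomogeneous_X _ _, by simpa using hcq j⟩
    · intro j
      refine Fin.cases ?_ (fun j => ?_) j
      · simp [hc0]
      · rw [hcq, C_0, zero_mul, sub_zero]
        exact Ideal.subset_span ⟨j, rfl⟩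
  rw [h1, Ideal.map_span, idealOfVars, Ideal.map_span, ← Set.range_comp, ← Set.range_comp]
  congr 2
  ext1 j
  simp [finSuccEquiv_X_succ]

lemma exists_coords (L o : Fin 3 → K) (hL : L ≠ 0) (hoff : ∑ j, L j * o j ≠ 0) :
    ∃ M M' : Matrix (Fin 3) (Fin 3) K, M * M' = 1 ∧ M' * M = 1 ∧
      (M'.mulVec o 0 = 1 ∧ ∀ j : Fin 2, M'.mulVec o j.succ = 0) ∧
      ∀ v, ∑ j, L j * v j = 0 → M'.mulVec v 0 = 0 := by
  let φ : (Fin 3 → K) →ₗ[K] K := Fintype.linearCombination K L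
  have hφ : ∀ v, φ v = ∑ j, L j * v j := by
    intro v
    simp [φ, Fintype.linearCombination_apply, mul_comm]
  have hsurj : Function.Surjective φ := by
    apply LinearMap.surjective_of_ne_zero
    intro h
    apply hoff
    rw [← hφ, h]; rfl
  have hfr : Module.finrank K (LinearMap.ker φ) = 2 := by
    have := φ.finrank_range_add_finrank_ker
    rw [LinearMap.range_eq_top.mpr hsurj] at this
    simp at this
    omega
  let b := Module.finBasisOfFinrankEq K (LinearMap.ker φ) hfr
  have hli : LinearIndependent K (Fin.cons o (fun i => (b i : Fin 3 → K)) : Fin 3 → (Fin 3 → K)) := by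
    rw [linearIndependent_finCons]
    constructor
    · exact b.linearIndependent.map' (LinearMap.ker φ).subtype (Submodule.ker_subtype _)
    · intro ho
      have : Submodule.span K (Set.range fun i => (b i : Fin 3 → K)) ≤ LinearMap.ker φ := by
        rw [Submodule.span_le]
        rintro _ ⟨i, rfl⟩
        exact (b i).2
      have := this ho
      rw [LinearMap.mem_ker, hφ] at this
      exact hoff this
  let B := basisOfLinearIndependentOfCardEqFinrank hli (by simp)
  have hB0 : B 0 = o := by simp [B]
  have hBs : ∀ i : Fin 2, B i.succ = b i := by intro i; simp [B]
  have hrep : ∀ v, (B.toMatrix (Pi.basisFun K (Fin 3))).mulVec v = B.repr v := by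
    intro v
    have := Module.Basis.toMatrix_mulVec_repr (Pi.basisFun K (Fin 3)) B v
    rw [← this]
    congr 1
  refine ⟨(Pi.basisFun K (Fin 3)).toMatrix B, B.toMatrix (Pi.basisFun K (Fin 3)),
    Module.Basis.toMatrix_mul_toMatrix_flip _ _, Module.Basis.toMatrix_mul_toMatrix_flip _ _, ⟨?_, ?_⟩, ?_⟩
  · rw [hrep, ← hB0]; simp
  · intro j; rw [hrep, ← hB0]; simp
  · intro v hv
    rw [hrep]
    have h1 := congrArg φ (B.sum_repr v)
    rw [hφ v, hv, Fin.sum_univ_succ, map_add, map_sum, hB0] at h1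
    simp only [hBs, map_smul] at h1
    have h2 : ∀ i, φ (b i) = 0 := fun i => (b i).2
    simp only [h2, hφ, smul_eq_mul, mul_zero, Finset.sum_const_zero, add_zero] at h1
    exact (mul_eq_zero.mp h1).resolve_right hoff

lemma toMv_sum (M : Matrix (Fin 3) (Fin 3) K) (j : Fin 3) :
    M.toMvPolynomial j = ∑ i, M j i • (X i : MvPolynomial (Fin 3) K) := by
  simp only [Matrix.toMvPolynomial, X, smul_monomial, smul_eq_mul, mul_one]

lemma map_equiv_mem {A B : Type*} [CommRing A] [CommRing B] [Algebra K A] [Algebra K B]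
    (e : A ≃ₐ[K] B) (I : Ideal A) (x : A) : e x ∈ I.map e ↔ x ∈ I := by
  rw [Ideal.mem_map_of_equiv]
  constructor
  · rintro ⟨y, hy, hyx⟩
    rwa [← e.injective hyx]
  · intro hg; exact ⟨x, hg, rfl⟩

lemma pow_map_mem {A B : Type*} [CommRing A] [CommRing B] [Algebra K A] [Algebra K B]
    (e : A ≃ₐ[K] B) (I : Ideal A) (m : ℕ) (x : A) : x ∈ I ^ m ↔ e x ∈ (I.map e) ^ m := by
  rw [← Ideal.map_pow, map_equiv_mem]

lemma map_C_pow {S : Type*} [CommRing S] (I : Ideal S) (m : ℕ) (f : Polynomial S) :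
    f ∈ (I.map (Polynomial.C : S →+* Polynomial S)) ^ m ↔ ∀ k, f.coeff k ∈ I ^ m := by
  rw [← Ideal.map_pow, Ideal.mem_map_C_iff]

lemma map_mul_mem {A B : Type*} [CommRing A] [CommRing B] [Algebra K A] [Algebra K B]
    (e : A ≃ₐ[K] B) (I J : Ideal A) (x : A) (h : e x ∈ I.map e * J.map e) : x ∈ I * J := by
  rw [← Ideal.map_mul, map_equiv_mem] at h
  exact h

lemma exists_E (M M' : Matrix (Fin 3) (Fin 3) K) (h : M * M' = 1) (h' : M' * M = 1) :
    ∃ E : MvPolynomial (Fin 3) K ≃ₐ[K] MvPolynomial (Fin 3) K,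
      (∀ j, E (X j) = ∑ i, M j i • (X i : MvPolynomial (Fin 3) K)) ∧
      (∀ i, E.symm (X i) = M'.toMvPolynomial i) ∧
      (∀ f d, f.IsHomogeneous d → (E f).IsHomogeneous d) ∧
      (∀ f d, f.IsHomogeneous d → (E.symm f).IsHomogeneous d) ∧
      (∀ (P : Ideal (MvPolynomial (Fin 3) K)) (p : Fin 3 → K)
        (_ : ∀ f, f ∈ P ↔ ∀ n, eval p (homogeneousComponent n f) = 0) (f : MvPolynomial (Fin 3) K),
        f ∈ P.map E ↔ ∀ n, eval (M'.mulVec p) (homogeneousComponent n f) = 0) := by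
  have e1 : ∀ f, EE M M' h h' f = bind₁ M.toMvPolynomial f := fun f => by
    rw [EE, AlgEquiv.ofAlgHom_apply]
  have e2 : ∀ f, (EE M M' h h').symm f = bind₁ M'.toMvPolynomial f := fun f => by
    rw [EE, AlgEquiv.ofAlgHom_symm, AlgEquiv.ofAlgHom_apply]
  refine ⟨EE M M' h h', ?_, ?_, ?_, ?_, fun P p hP f => mem_map_EE M M' h h' P p hP f⟩
  · intro j
    rw [e1, bind₁_X_right, toMv_sum]
  · intro i
    rw [e2, bind₁_X_right]
  · intro f d hf
    rw [e1]
    exact bind_homog M f d hf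
  · intro f d hf
    rw [e2]
    exact bind_homog M' f d hf

lemma exists_fs : ∃ fs : MvPolynomial (Fin 3) K ≃ₐ[K] Polynomial (MvPolynomial (Fin 2) K),
    fs = finSuccEquiv K 2 := ⟨_, rfl⟩

end Helpers

theorem stmt_7
    (K : Type*) [Field K] [CharZero K]
    -- `l > 2` points on a line plus one point off the line
    (l : ℕ) (hl : 2 < l)
    (p : Fin (l + 1) → Fin 3 → K) (hp0 : ∀ i, p i ≠ 0)
    (hdist : ∀ i j, i ≠ j → ∀ c : K, c • p i ≠ p j)
    (L : Fin 3 → K) (hL : L ≠ 0)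
    (hon : ∀ i : Fin (l + 1), (i : ℕ) < l → ∑ j, L j * p i j = 0)
    (hoff : ∑ j, L j * p (Fin.last l) j ≠ 0)
    -- `P i` is the homogeneous prime ideal of all forms vanishing at `p i`
    (P : Fin (l + 1) → Ideal (MvPolynomial (Fin 3) K))
    (hP : ∀ i F, F ∈ P i ↔ ∀ n, eval (p i) (homogeneousComponent n F) = 0)
    -- the uniform fat point ideal `I^{(m)} = P_1^m ∩ ⋯ ∩ P_{l+1}^m`
    (m : ℕ) (hm : 1 ≤ m) (hdvd : l * (l - 1) ∣ m)
    (Im : Ideal (MvPolynomial (Fin 3) K)) (hIm : Im = ⨅ i, P i ^ m)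
    -- `MaxI = (x, y, z)` is the irrelevant maximal ideal
    (MaxI : Ideal (MvPolynomial (Fin 3) K))
    (hMax : MaxI = Ideal.span {X 0, X 1, X 2}) :
    -- `dim_K ( I^{(m)} / ((x,y,z)·I^{(m)}) ) = 2m − m/l + 1`
    Module.finrank K
      (↥(Submodule.restrictScalars K Im) ⧸
        Submodule.comap (Submodule.restrictScalars K Im).subtype
          (Submodule.restrictScalars K (MaxI * Im))) = 2 * m - m / l + 1 ∧
    -- which is one more than the least degree of a nonzero homogeneous element of `I^{(m)}`
    2 * m - m / l + 1 = sInf {d | hdim Im d ≠ 0} + 1 := by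
  obtain ⟨n, hmn⟩ : l ∣ m := (Dvd.intro _ rfl).trans hdvd
  have hl0 : 0 < l := by omega
  have hdiv : m / l = n := by rw [hmn]; exact Nat.mul_div_cancel_left n hl0
  have hn : n ≤ m := by rw [hmn]; exact Nat.le_mul_of_pos_left n hl0
  rw [hdiv]
  obtain ⟨M, M', hMM, hMM', ⟨ho0, hos⟩, hline⟩ := exists_coords L (p (Fin.last l)) hL hoff
  obtain ⟨q, hqdef⟩ : ∃ q : Fin l → Fin 2 → K,
      ∀ i j, M'.mulVec (p i.castSucc) j.succ = q i j := ⟨_, fun _ _ => rfl⟩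
  have hc0 : ∀ i : Fin l, M'.mulVec (p i.castSucc) 0 = 0 := fun i => hline _ (hon _ (by simp))
  have hMinj : ∀ v w : Fin 3 → K, M'.mulVec v = M'.mulVec w → v = w := by
    intro v w h
    have := congrArg M.mulVec h
    rwa [Matrix.mulVec_mulVec, Matrix.mulVec_mulVec, hMM, Matrix.one_mulVec, Matrix.one_mulVec] at this
  have hq0 : ∀ i, q i ≠ 0 := by
    intro i h
    apply hp0 i.castSucc
    apply hMinj
    rw [Matrix.mulVec_zero]
    ext j
    refine Fin.cases (hc0 i) (fun j => ?_) j
    rw [hqdef, h]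
    rfl
  have hq : ∀ i j, i ≠ j → eval (q j) (lf (q i)) ≠ 0 := by
    intro i j hij h
    rw [lf_eval] at h
    have key : ∀ c : K, c * q i 0 = q j 0 → c * q i 1 = q j 1 → False := by
      intro c h1 h2
      apply hdist i.castSucc j.castSucc (by simpa using hij) c
      apply hMinj
      rw [Matrix.mulVec_smul]
      ext k
      refine Fin.cases ?_ (fun k => ?_) k
      · simp [hc0]
      · rw [Pi.smul_apply, hqdef, hqdef, smul_eq_mul]
        fin_cases k
        · exact h1
        · exact h2
    by_cases h0 : q i 0 = 0
    · have h1 : q i 1 ≠ 0 := by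
        intro h1
        apply hq0 i
        ext k
        fin_cases k
        · exact h0
        · exact h1
      refine key (q j 1 / q i 1) ?_ (by field_simp)
      rw [h0] at h ⊢
      have : q j 0 = 0 := by
        have : q i 1 * q j 0 = 0 := by linear_combination h
        exact (mul_eq_zero.mp this).resolve_left h1
      rw [this, mul_zero]
    · refine key (q j 0 / q i 0) (by field_simp) ?_
      field_simp
      linear_combination h
  obtain ⟨E, hEX, hEsX, hEh, hEsh, hEm⟩ := exists_E M M' hMM hMM'
  obtain ⟨fs, hfs⟩ := exists_fs (K := K)
  have hfs0 : fs (X 0) = Polynomial.X := by rw [hfs, finSuccEquiv_X_zero]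
  have hfs1 : ∀ i : Fin 2, fs (X i.succ) = Polynomial.C (X i) := by
    intro i
    rw [hfs, finSuccEquiv_X_succ]
  obtain ⟨J, hJdef⟩ : ∃ J : Ideal (Polynomial (MvPolynomial (Fin 2) K)), J = (Im.map E).map fs :=
    ⟨_, rfl⟩
  have hJe : ∀ f, fs (E f) ∈ J ↔ f ∈ Im := by
    intro f
    rw [hJdef, map_equiv_mem, map_equiv_mem]
  have hJ : ∀ f, f ∈ J ↔ f ∈ (GG K l m).map (T0 (FF q) m) := by
    intro f
    obtain ⟨f1, rfl⟩ := fs.surjective f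
    obtain ⟨f, rfl⟩ := E.surjective f1
    rw [hJe, mem_T0_iff q hq0 hq, hIm, Ideal.mem_iInf]
    have hA : ∀ i, f ∈ P i ^ m ↔ fs (E f) ∈ (((P i).map E).map fs) ^ m := fun i => by
      rw [pow_map_mem E, pow_map_mem fs]
    simp only [hA]
    have hB : ∀ i : Fin l, fs (E f) ∈ (((P i.castSucc).map E).map fs) ^ m ↔
        ∀ k, lf (q i) ^ (m - k) ∣ (fs (E f)).coeff k := by
      intro i
      apply mem_span_pow_iff
      rw [hfs]
      exact map_line _ (M'.mulVec (p i.castSucc)) (q i) (hEm _ _ (hP _))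
        (hc0 i) (hqdef i) (hq0 i)
    have hC : fs (E f) ∈ (((P (Fin.last l)).map E).map fs) ^ m ↔
        ∀ k, (fs (E f)).coeff k ∈ idealOfVars (Fin 2) K ^ m := by
      have h9 : ((P (Fin.last l)).map E).map fs = (idealOfVars (Fin 2) K).map Polynomial.C := by
        rw [hfs]
        exact map_off _ _ (hEm _ _ (hP _)) ho0 hos
      rw [h9]
      exact map_C_pow _ _ _
    constructor
    · intro h
      exact ⟨fun i => (hB i).mp (h _), hC.mp (h _)⟩
    · rintro ⟨h1, h2⟩ i
      exact Fin.lastCases (hC.mpr h2) (fun i => (hB i).mpr (h1 i)) i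
  have hXmem : ∀ j, (X j : MvPolynomial (Fin 3) K) ∈ MaxI := by
    intro j
    rw [hMax]
    apply Ideal.subset_span
    fin_cases j <;> simp
  constructor
  · obtain ⟨T, hTe⟩ : ∃ T : Polynomial (MvPolynomial (Fin 2) K) →ₗ[K] MvPolynomial (Fin 3) K,
        ∀ g, fs (E (T g)) = T0 (FF q) m g := by
      refine ⟨(E.symm.toLinearMap ∘ₗ fs.symm.toLinearMap) ∘ₗ T0 (FF q) m, fun g => ?_⟩
      rw [LinearMap.comp_apply, LinearMap.comp_apply, AlgEquiv.toLinearMap_apply,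
        AlgEquiv.toLinearMap_apply, AlgEquiv.apply_symm_apply, AlgEquiv.apply_symm_apply]
    have hinj : Function.Injective (fun f => fs (E f)) := fs.injective.comp E.injective
    have hTinj : Function.Injective T := by
      intro a b h
      apply T0_inj (FF q) (FF_ne q hq0) m
      rw [← hTe, ← hTe, h]
    have hmap : ∀ (H : Submodule K (Polynomial (MvPolynomial (Fin 2) K))) f,
        f ∈ H.map T ↔ fs (E f) ∈ H.map (T0 (FF q) m) := by
      intro H f
      constructor
      · rintro ⟨g, hg, rfl⟩
        exact ⟨g, hg, (hTe g).symm⟩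
      · rintro ⟨g, hg, h⟩
        exact ⟨g, hg, hinj (by simp only [hTe, h])⟩
    rw [finrank_quot T hTinj (Phi q m n) (GG K l m) _ _ ?_ ?_ (Phi_surj hl0 q hq0 hq m n hmn)]
    · simp only [Module.finrank_prod, Module.finrank_fintype_fun_eq_card, Fintype.card_fin,
        Module.finrank_pi_fintype, Finset.sum_const, Finset.card_univ, smul_eq_mul]
      rw [mul_comm n l, ← hmn]
      omega
    · ext f
      rw [Submodule.restrictScalars_mem, hmap, ← hJ, hJe]
    · ext f
      rw [Submodule.restrictScalars_mem, hmap]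
      constructor
      · intro hf
        refine Submodule.mul_induction_on hf ?_ ?_
        · intro r hr
          rw [hMax] at hr
          refine Submodule.span_induction ?_ ?_ ?_ ?_ hr
          · intro x hx s hs
            obtain ⟨j, rfl⟩ : ∃ j : Fin 3, x = X j := by
              rcases hx with rfl | rfl | rfl
              exacts [⟨0, rfl⟩, ⟨1, rfl⟩, ⟨2, rfl⟩]
            rw [map_mul, map_mul, hEX, map_sum, Finset.sum_mul]
            refine Submodule.sum_mem _ fun i _ => ?_
            rw [map_smul, smul_mul_assoc]
            refine Submodule.smul_mem _ _ ?_
            have hs' := (hJe s).mpr hs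
            refine Fin.cases ?_ (fun i => ?_) i
            · rw [hfs0]
              exact X_mul_mem hl0 q hq0 m n hmn J hJ _ hs'
            · rw [hfs1]
              exact C_mul_mem hl0 q hq0 m n hmn J hJ _ hs' i
          · intro s _
            rw [zero_mul, map_zero, map_zero]
            exact zero_mem _
          · intro x y _ _ hx hy s hs
            rw [add_mul, map_add, map_add]
            exact Submodule.add_mem _ (hx s hs) (hy s hs)
          · intro a x _ hx s hs
            rw [smul_eq_mul, mul_comm a x, mul_assoc]
            exact hx _ (Ideal.mul_mem_left _ _ hs)
        · intro x y hx hy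
          rw [map_add, map_add]
          exact Submodule.add_mem _ hx hy
      · rintro ⟨g, ⟨hg, hk⟩, h⟩
        have hXE : ∀ i, (X i : MvPolynomial (Fin 3) K) ∈ MaxI.map E := by
          intro i
          have h1 : M'.toMvPolynomial i ∈ MaxI := by
            rw [toMv_sum]
            refine Ideal.sum_mem _ fun j _ => ?_
            rw [MvPolynomial.smul_eq_C_mul]
            exact Ideal.mul_mem_left _ _ (hXmem j)
          have h2 : E (M'.toMvPolynomial i) = X i := by
            rw [← hEsX, AlgEquiv.apply_symm_apply]
          rw [← h2]
          exact Ideal.mem_map_of_mem _ h1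
        have := ker_mem hl0 q hq0 hq m n hmn J ((MaxI.map E).map fs) hJ
          (by
            rw [← hfs0]
            exact Ideal.mem_map_of_mem _ (hXE 0))
          (fun j => by
            rw [← hfs1]
            exact Ideal.mem_map_of_mem _ (hXE _)) g hg hk
        rw [h, hJdef] at this
        exact map_mul_mem E _ _ _ (map_mul_mem fs _ _ _ this)
  · congr 1
    symm
    apply IsLeast.csInf_eq
    constructor
    · have hfin : Module.Finite K (degComp Im (2 * m - n)) := by
        have : Module.Finite K (homogeneousSubmodule (Fin 3) K (2 * m - n)) :=
          Module.Finite.iff_fg.mpr (homogeneousSubmodule_fg _ _ _)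
        exact Submodule.finiteDimensional_of_le (inf_le_right : degComp Im (2 * m - n) ≤ _)
      intro h0
      rw [hdim, Submodule.finrank_eq_zero] at h0
      set w0 : MvPolynomial (Fin 3) K := X 0 ^ (m - n) * rename Fin.succ (FF q ^ n) with hw0
      have hw0h : w0.IsHomogeneous (2 * m - n) := by
        have := ((isHomogeneous_X K (0 : Fin 3)).pow (m - n)).mul
          ((FF_pow_homog q n).rename_isHomogeneous (f := Fin.succ))
        rwa [← hmn, show 1 * (m - n) + m = 2 * m - n by omega] at this
      have hfw : fs w0 = Polynomial.X ^ (m - n) * Polynomial.C (FF q ^ n) := by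
        rw [hw0, map_mul, map_pow]
        rw [hfs0, hfs, fs_rename]
      have hwI : E.symm w0 ∈ Im := by
        rw [← hJe, AlgEquiv.apply_symm_apply, hJ, mem_T0_iff q hq0 hq, hfw]
        have hco : ∀ k, (Polynomial.X ^ (m - n) * Polynomial.C (FF q ^ n)).coeff k
            = if k = m - n then FF q ^ n else 0 := by
          intro k
          rw [mul_comm, Polynomial.coeff_C_mul_X_pow]
        simp only [hco]
        refine ⟨fun i k => ?_, fun k => ?_⟩
        · split_ifs with h
          · rw [show m - k = n by omega]
            exact (FF_pow_dvd q hq n _).mp dvd_rfl i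
          · exact dvd_zero _
        · split_ifs with h
          · exact homog_mem_pow m (l * n) _ (FF_pow_homog q n) (by omega)
          · exact zero_mem _
      have hmem : E.symm w0 ∈ degComp Im (2 * m - n) :=
        ⟨hwI, hEsh w0 _ hw0h⟩
      rw [h0, Submodule.mem_bot] at hmem
      have hw00 : w0 = 0 := by
        rw [← E.apply_symm_apply w0, hmem, map_zero]
      have : fs w0 = 0 := by rw [hw00, map_zero]
      rw [hfw] at this
      rcases mul_eq_zero.mp this with h | h
      · exact pow_ne_zero _ Polynomial.X_ne_zero h
      · exact pow_ne_zero _ (FF_ne q hq0) (Polynomial.C_eq_zero.mp h)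
    · intro d hd
      have hne : degComp Im d ≠ ⊥ := by
        intro h
        apply hd
        rw [hdim, h, finrank_bot]
      obtain ⟨f, ⟨hfI, hfd⟩, hf0⟩ := Submodule.exists_mem_ne_zero_of_ne_bot hne
      have hEf : (E f).IsHomogeneous d := hEh f d hfd
      have hEf0 : fs (E f) ≠ 0 := by
        intro h
        exact hf0 (by simpa using h)
      obtain ⟨k, hk⟩ : ∃ k, (fs (E f)).coeff k ≠ 0 := by
        by_contra! h
        exact hEf0 (Polynomial.ext (by simpa using h))
      have hkd : k ≤ d := by
        have h1 := Polynomial.le_natDegree_of_ne_zero hk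
        have h2 : (fs (E f)).natDegree = degreeOf 0 (E f) := by
          rw [hfs]
          exact natDegree_finSuccEquiv _
        have h3 := degreeOf_le_totalDegree (E f) 0
        have h4 := hEf.totalDegree_le
        omega
      have hch : ((fs (E f)).coeff k).IsHomogeneous (d - k) := by
        rw [hfs]
        exact hEf.finSuccEquiv_coeff_isHomogeneous k (d - k) (by omega)
      obtain ⟨h1, h2⟩ := (mem_T0_iff q hq0 hq m _).mp ((hJ _).mp ((hJe f).mpr hfI))
      have hA : m ≤ d - k := by
        by_contra! hlt
        have := (mem_pow_iff_comp _ _).mp (h2 k) _ hlt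
        rw [homogeneousComponent_eq_self hch] at this
        exact hk this
      have hB : l * (m - k) ≤ d - k := by
        obtain ⟨c, hc⟩ := (FF_pow_dvd q hq (m - k) _).mpr (fun i => h1 i k)
        have hF0 : FF q ^ (m - k) ≠ 0 := pow_ne_zero _ (FF_ne q hq0)
        have hc0 : c ≠ 0 := by
          rintro rfl
          exact hk (by rw [hc, mul_zero])
        rw [← hch.totalDegree hk, hc, totalDegree_mul_of_isDomain hF0 hc0,
          (FF_pow_homog q _).totalDegree hF0]
        omega
      rcases le_or_gt (m - n) k with h | h
      · omega
      · obtain ⟨b, hb⟩ : ∃ b, m - k = n + b := ⟨m - k - n, by omega⟩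
        rw [hb, mul_add, ← hmn] at hB
        have : b ≤ l * b := Nat.le_mul_of_pos_left b hl0
        omega
end

section
/- For every integer m ≥ 1, the ideal I^{(m)} is generated in degrees at most lm: for every degree d ≥ lm one has (I^{(m)})_{d+1} = R_1 · (I^{(m)})_d, i.e. v_d(I^{(m)}) = 0 for all d > lm. -/
open MvPolynomial Filter

section Helpers

variable {K : Type*} [Field K]

/-- A form vanishing at `p` lies in any ideal modulo which `X j` equals `p j * t`. -/
lemma aux_form_mem (J : Ideal (MvPolynomial (Fin 3) K)) (p : Fin 3 → K)
    (t : MvPolynomial (Fin 3) K) (h : ∀ j, X j - C (p j) * t ∈ J) (n : ℕ)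
    (G : MvPolynomial (Fin 3) K) (hG : G.IsHomogeneous n) (h0 : eval p G = 0) : G ∈ J := by
  rw [← Ideal.Quotient.eq_zero_iff_mem]
  have h1 : ∀ j, Ideal.Quotient.mk J (X j) = Ideal.Quotient.mk J (C (p j) * t) := fun j =>
    Ideal.Quotient.eq.2 (h j)
  have h2 : Ideal.Quotient.mk J G = Ideal.Quotient.mk J (aeval (fun j => C (p j) * t) G) := by
    have : (Ideal.Quotient.mkₐ K J) = (Ideal.Quotient.mkₐ K J).comp
        (aeval (fun j => C (p j) * t)) := by
      ext j
      simpa using h1 j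
    exact DFunLike.congr_fun this G
  have h3 : aeval (fun j => C (p j) * t) G = C (eval p G) * t ^ n := by
    rw [aeval_def, eval₂_eq', eval_eq', map_sum, Finset.sum_mul]
    refine Finset.sum_congr rfl fun s hs => ?_
    have hd := hG.degree_eq_sum_deg_support hs
    have : t ^ n = ∏ i, t ^ s i := by
      rw [Finset.prod_pow_eq_pow_sum, hd]
      congr 1
      exact Finsupp.degree_eq_sum s
    rw [this]
    simp [mul_pow, Finset.prod_mul_distrib, mul_assoc, algebraMap_eq]
  rw [h2, h3, h0]
  simp

lemma aux_ideal_le (J P : Ideal (MvPolynomial (Fin 3) K)) (p : Fin 3 → K)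
    (t : MvPolynomial (Fin 3) K) (h : ∀ j, X j - C (p j) * t ∈ J)
    (hP : ∀ F, F ∈ P ↔ ∀ n, eval p (homogeneousComponent n F) = 0) : P ≤ J := by
  intro F hF
  rw [← sum_homogeneousComponent F]
  exact Ideal.sum_mem _ fun n _ => aux_form_mem J p t h n _
    (homogeneousComponent_isHomogeneous n F) ((hP F).1 hF n)

lemma aux_hom_mem (P : Ideal (MvPolynomial (Fin 3) K)) (p : Fin 3 → K)
    (hP : ∀ F, F ∈ P ↔ ∀ n, eval p (homogeneousComponent n F) = 0)
    (G : MvPolynomial (Fin 3) K) (n : ℕ) (hG : G.IsHomogeneous n) (h0 : eval p G = 0) : G ∈ P := by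
  rw [hP]
  intro k
  rw [homogeneousComponent_of_mem hG]
  split_ifs <;> simp [h0]

/-- The linear form in two variables vanishing at `(a 1, a 2)`. -/
noncomputable def ell (a : Fin 3 → K) : MvPolynomial (Fin 2) K :=
  C (a 2) * X 0 - C (a 1) * X 1

lemma ell_hom (a : Fin 3 → K) : (ell a).IsHomogeneous 1 :=
  (isHomogeneous_C_mul_X _ _).sub (isHomogeneous_C_mul_X _ _)

lemma rename_ell (a : Fin 3 → K) :
    rename Fin.succ (ell a) = C (a 2) * X 1 - C (a 1) * X (2 : Fin 3) := by
  simp [ell]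

lemma aux_on_le (P : Ideal (MvPolynomial (Fin 3) K)) (a : Fin 3 → K) (ha : a ≠ 0) (ha0 : a 0 = 0)
    (hP : ∀ F, F ∈ P ↔ ∀ n, eval a (homogeneousComponent n F) = 0) :
    P ≤ Ideal.span {rename Fin.succ (ell a), X 0} := by
  obtain ⟨u, v, huv⟩ : ∃ u v : K, u * a 1 + v * a 2 = 1 := by
    by_cases h1 : a 1 = 0
    · by_cases h2 : a 2 = 0
      · exact absurd (_root_.funext fun i => by fin_cases i <;> simp [ha0, h1, h2]) ha
      · exact ⟨0, (a 2)⁻¹, by simp [h2]⟩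
    · exact ⟨(a 1)⁻¹, 0, by simp [h1]⟩
  refine aux_ideal_le _ P a (C u * X 1 + C v * X 2) ?_ hP
  have hC : (C u * C (a 1) + C v * C (a 2) : MvPolynomial (Fin 3) K) = 1 := by
    rw [← C_mul, ← C_mul, ← C_add, huv, C_1]
  intro j
  rw [rename_ell, Ideal.mem_span_pair]
  fin_cases j
  · exact ⟨0, 1, by simp [ha0]⟩
  · refine ⟨C v, 0, ?_⟩
    simp only [Fin.mk_one]
    linear_combination (X 1) * hC
  · refine ⟨-C u, 0, ?_⟩
    simp only [Fin.reduceFinMk]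
    linear_combination (X 2) * hC

lemma aux_off_le (P : Ideal (MvPolynomial (Fin 3) K)) (a : Fin 3 → K) (ha0 : a 0 ≠ 0)
    (h1 : a 1 = 0) (h2 : a 2 = 0)
    (hP : ∀ F, F ∈ P ↔ ∀ n, eval a (homogeneousComponent n F) = 0) :
    P ≤ Ideal.span {X 1, X 2} := by
  refine aux_ideal_le _ P a (C (a 0)⁻¹ * X 0) ?_ hP
  have hC : (C (a 0) * C (a 0)⁻¹ : MvPolynomial (Fin 3) K) = 1 := by
    rw [← C_mul, mul_inv_cancel₀ ha0, C_1]
  intro j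
  rw [Ideal.mem_span_pair]
  fin_cases j
  · refine ⟨0, 0, ?_⟩
    simp only [Fin.zero_eta]
    linear_combination (X 0) * hC
  · exact ⟨1, 0, by simp [h1]⟩
  · exact ⟨0, 1, by simp [h2]⟩

lemma finSuccEquiv_rename_succ (g : MvPolynomial (Fin 2) K) :
    finSuccEquiv K 2 (rename Fin.succ g) = Polynomial.C g := by
  have : ((finSuccEquiv K 2).toAlgHom.comp (rename Fin.succ)) =
      (Polynomial.CAlgHom (R := K) (A := MvPolynomial (Fin 2) K)) := by
    ext j : 1
    simp [finSuccEquiv_X_succ]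
  exact DFunLike.congr_fun this g

lemma aux_on_coeff (P : Ideal (MvPolynomial (Fin 3) K)) (a : Fin 3 → K) (ha : a ≠ 0)
    (ha0 : a 0 = 0) (hP : ∀ F, F ∈ P ↔ ∀ n, eval a (homogeneousComponent n F) = 0)
    (m : ℕ) : ∀ F ∈ P ^ m, ∀ k, ell a ^ (m - k) ∣ (finSuccEquiv K 2 F).coeff k := by
  have hb : ∀ F ∈ P, ∀ k, ell a ^ (1 - k) ∣ (finSuccEquiv K 2 F).coeff k := by
    intro F hF k
    rcases k with _ | k
    · obtain ⟨A, B, rfl⟩ := Ideal.mem_span_pair.1 (aux_on_le P a ha ha0 hP hF)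
      simp [finSuccEquiv_rename_succ, finSuccEquiv_X_zero]
    · simp
  induction m with
  | zero => simp
  | succ m ih =>
    intro F hF
    rw [pow_succ] at hF
    refine Submodule.mul_induction_on hF ?_ ?_
    · intro A hA B hB k
      rw [map_mul, Polynomial.coeff_mul]
      refine Finset.dvd_sum fun x hx => ?_
      rw [Finset.HasAntidiagonal.mem_antidiagonal] at hx
      refine dvd_trans (pow_dvd_pow _ ?_) (?_ : ell a ^ ((m - x.1) + (1 - x.2)) ∣ _)
      · omega
      · rw [pow_add]
        exact mul_dvd_mul (ih A hA x.1) (hb B hB x.2)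
    · intro A B hA hB k
      rw [map_add, Polynomial.coeff_add]
      exact dvd_add (hA k) (hB k)

lemma aux_off_coeff (P : Ideal (MvPolynomial (Fin 3) K)) (a : Fin 3 → K) (ha0 : a 0 ≠ 0)
    (h1 : a 1 = 0) (h2 : a 2 = 0)
    (hP : ∀ F, F ∈ P ↔ ∀ n, eval a (homogeneousComponent n F) = 0)
    (m : ℕ) : ∀ F ∈ P ^ m, ∀ k,
      (finSuccEquiv K 2 F).coeff k ∈ idealOfVars (Fin 2) K ^ m := by
  have hX : ∀ j, (X j : MvPolynomial (Fin 2) K) ∈ idealOfVars (Fin 2) K := fun j =>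
    Ideal.subset_span ⟨j, rfl⟩
  have hb : ∀ F ∈ P, ∀ k, (finSuccEquiv K 2 F).coeff k ∈ idealOfVars (Fin 2) K := by
    intro F hF k
    obtain ⟨A, B, rfl⟩ := Ideal.mem_span_pair.1 (aux_off_le P a ha0 h1 h2 hP hF)
    have e1 : finSuccEquiv K 2 (X 1) = Polynomial.C (X 0) := finSuccEquiv_X_succ (j := 0)
    have e2 : finSuccEquiv K 2 (X 2) = Polynomial.C (X 1) := finSuccEquiv_X_succ (j := 1)
    rw [map_add, map_mul, map_mul, e1, e2, Polynomial.coeff_add, Polynomial.coeff_mul_C,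
      Polynomial.coeff_mul_C]
    exact Ideal.add_mem _ (Ideal.mul_mem_left _ _ (hX 0)) (Ideal.mul_mem_left _ _ (hX 1))
  induction m with
  | zero => simp
  | succ m ih =>
    intro F hF
    rw [pow_succ] at hF
    refine Submodule.mul_induction_on hF ?_ ?_
    · intro A hA B hB k
      rw [map_mul, Polynomial.coeff_mul, pow_succ]
      exact Ideal.sum_mem _ fun x hx => Ideal.mul_mem_mul (ih A hA x.1) (hb B hB x.2)
    · intro A B hA hB k
      rw [map_add, Polynomial.coeff_add]
      exact Ideal.add_mem _ (hA k) (hB k)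

lemma ell_relprime (a b : Fin 3 → K) (h : a 1 * b 2 - a 2 * b 1 ≠ 0) :
    IsRelPrime (ell a) (ell b) := by
  intro d hda hdb
  have hu : IsUnit (C (a 1 * b 2 - a 2 * b 1) : MvPolynomial (Fin 2) K) :=
    (isUnit_iff_ne_zero.2 h).map C
  have h0 : d ∣ X 0 := by
    rw [← hu.dvd_mul_left]
    have := dvd_sub (hdb.mul_left (C (a 1))) (hda.mul_left (C (b 1)))
    convert this using 1
    simp only [ell, C_sub, C_mul]; ring
  have h1 : d ∣ X 1 := by
    rw [← hu.dvd_mul_left]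
    have := dvd_sub (hdb.mul_left (C (a 2))) (hda.mul_left (C (b 2)))
    convert this using 1
    simp only [ell, C_sub, C_mul]; ring
  obtain ⟨c, hc⟩ := h0
  rcases (X_prime (R := K) (i := (0 : Fin 2))).irreducible.isUnit_or_isUnit hc with h | h
  · exact h
  · exfalso
    have : (X 0 : MvPolynomial (Fin 2) K) ∣ X 1 := by
      rw [hc]; exact (h.mul_right_dvd).2 h1
    rw [X_dvd_X] at this
    exact absurd this (by decide)

lemma aux_hom_div {a g : MvPolynomial (Fin 2) K} {i n : ℕ} (ha : a.IsHomogeneous i)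
    (hg : g.IsHomogeneous n) (hi : i ≤ n) (h : a ∣ g) :
    ∃ b, b.IsHomogeneous (n - i) ∧ g = a * b := by
  obtain ⟨b, rfl⟩ := h
  letI := gradedAlgebra (σ := Fin 2) (R := K)
  refine ⟨DirectSum.decompose (homogeneousSubmodule (Fin 2) K) b (n - i), (DirectSum.decompose (homogeneousSubmodule (Fin 2) K) b (n - i)).2, ?_⟩
  rw [← DirectSum.coe_decompose_mul_of_left_mem_of_le (homogeneousSubmodule (Fin 2) K) (a := a) ha hi]
  exact (DirectSum.decompose_of_mem_same (homogeneousSubmodule (Fin 2) K) hg).symm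

lemma aux_sum_form [CharZero K] {h : MvPolynomial (Fin 2) K} {n : ℕ} (hh : h.IsHomogeneous (n + 1)) :
    ∃ h0 h1 : MvPolynomial (Fin 2) K, h0.IsHomogeneous n ∧ h1.IsHomogeneous n ∧
      h = X 0 * h0 + X 1 * h1 := by
  have e := hh.sum_X_mul_pderiv
  rw [Fin.sum_univ_two] at e
  have hn : ((n + 1 : ℕ) : K) ≠ 0 := by exact_mod_cast Nat.succ_ne_zero n
  refine ⟨C ((n + 1 : ℕ) : K)⁻¹ * pderiv 0 h, C ((n + 1 : ℕ) : K)⁻¹ * pderiv 1 h,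
    (hh.pderiv).C_mul _, (hh.pderiv).C_mul _, ?_⟩
  have : (C ((n + 1 : ℕ) : K)⁻¹ * C ((n + 1 : ℕ) : K) : MvPolynomial (Fin 2) K) = 1 := by
    rw [← C_mul, inv_mul_cancel₀ hn, C_1]
  rw [nsmul_eq_mul, ← C_eq_coe_nat] at e
  linear_combination (-h) * this - C ((n + 1 : ℕ) : K)⁻¹ * e

lemma aux_decomp (F : MvPolynomial (Fin 3) K) :
    F = ∑ k ∈ Finset.range ((finSuccEquiv K 2 F).natDegree + 1),
      X 0 ^ k * rename Fin.succ ((finSuccEquiv K 2 F).coeff k) := by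
  apply (finSuccEquiv K 2).injective
  rw [map_sum]
  simp only [map_mul, map_pow, finSuccEquiv_X_zero, finSuccEquiv_rename_succ]
  conv_lhs => rw [Polynomial.as_sum_range_C_mul_X_pow (finSuccEquiv K 2 F)]
  exact Finset.sum_congr rfl fun k _ => mul_comm _ _

lemma aux_coeff_zero {F : MvPolynomial (Fin 3) K} {n k : ℕ} (hF : F.IsHomogeneous n) (h : n < k) :
    (finSuccEquiv K 2 F).coeff k = 0 := by
  ext s
  rw [finSuccEquiv_coeff_coeff, coeff_zero]
  apply hF.coeff_eq_zero
  rw [Finsupp.degree_eq_sum, Fin.sum_univ_succ, Finsupp.cons_zero]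
  omega

lemma aux_deg_ge {g : MvPolynomial (Fin 2) K} {n m : ℕ} (hg : g.IsHomogeneous n) (h0 : g ≠ 0)
    (h : g ∈ idealOfVars (Fin 2) K ^ m) : m ≤ n := by
  obtain ⟨s, hs⟩ := support_nonempty.2 h0
  have := (mem_pow_idealOfVars_iff m g).1 h s hs
  have h2 := hg.degree_eq_sum_deg_support hs
  rw [Finsupp.degree_apply] at *
  omega

lemma aux_mem_vars {g : MvPolynomial (Fin 2) K} {n m : ℕ} (hg : g.IsHomogeneous n) (h : m ≤ n) :
    g ∈ idealOfVars (Fin 2) K ^ m := by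
  rw [mem_pow_idealOfVars_iff]
  intro s hs
  have h2 := hg.degree_eq_sum_deg_support hs
  rw [Finsupp.degree_apply] at *
  omega

lemma aux_det (a b : Fin 3 → K) (ha : a ≠ 0) (ha0 : a 0 = 0) (hb0 : b 0 = 0)
    (h : ∀ c : K, c • a ≠ b) : a 1 * b 2 - a 2 * b 1 ≠ 0 := by
  intro hd
  by_cases h1 : a 1 = 0
  · have h2 : a 2 ≠ 0 := fun h2 => ha (_root_.funext fun i => by fin_cases i <;> simp [ha0, h1, h2])
    have hb1 : b 1 = 0 := by simpa [h1, h2] using hd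
    refine h (b 2 / a 2) (_root_.funext fun i => ?_)
    fin_cases i
    · simp [ha0, hb0]
    · simp [h1, hb1]
    · simp [h2]
  · refine h (b 1 / a 1) (_root_.funext fun i => ?_)
    fin_cases i
    · simp [ha0, hb0]
    · simp [h1]
    · simp only [Fin.reduceFinMk, Pi.smul_apply, smul_eq_mul]
      field_simp
      linear_combination -hd

lemma aux_core [CharZero K] (l : ℕ) (hl : 2 < l) (p : Fin (l + 1) → Fin 3 → K)
    (hp0 : ∀ i, p i ≠ 0)
    (hdist : ∀ i j, i ≠ j → ∀ c : K, c • p i ≠ p j)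
    (hon : ∀ i : Fin l, p i.castSucc 0 = 0)
    (hq1 : p (Fin.last l) 1 = 0) (hq2 : p (Fin.last l) 2 = 0)
    (P : Fin (l + 1) → Ideal (MvPolynomial (Fin 3) K))
    (hP : ∀ i F, F ∈ P i ↔ ∀ n, eval (p i) (homogeneousComponent n F) = 0)
    (m : ℕ) (Im : Ideal (MvPolynomial (Fin 3) K)) (hIm : Im = ⨅ i, P i ^ m)
    (d : ℕ) (hd : l * m ≤ d) (F : MvPolynomial (Fin 3) K) (hF : F ∈ Im)
    (hFd : F.IsHomogeneous (d + 1)) : F ∈ oneGen Im (d + 1) := by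
  have hq0 : p (Fin.last l) 0 ≠ 0 := fun h0 => hp0 (Fin.last l)
    (_root_.funext fun i => by fin_cases i <;> simp [h0, hq1, hq2])
  -- the product of the linear forms
  set Q : MvPolynomial (Fin 2) K := ∏ i : Fin l, ell (p i.castSucc) with hQ
  have hQh : Q.IsHomogeneous l := by
    have := IsHomogeneous.prod Finset.univ (fun i : Fin l => ell (p i.castSucc)) (fun _ => 1)
      (fun i _ => ell_hom _)
    simpa using this
  -- criterion for membership in `Im`
  have hmem : ∀ (k n : ℕ) (g : MvPolynomial (Fin 2) K), g.IsHomogeneous n → m ≤ n →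
      Q ^ (m - k) ∣ g → X 0 ^ k * rename Fin.succ g ∈ Im := by
    intro k n g hg hn hdvd
    rw [hIm, Ideal.mem_iInf]
    intro i
    induction i using Fin.lastCases with
    | last =>
      refine Ideal.mul_mem_left _ _ ?_
      have hle : Ideal.map (rename Fin.succ : MvPolynomial (Fin 2) K →ₐ[K] _)
          (idealOfVars (Fin 2) K) ≤ P (Fin.last l) := by
        rw [idealOfVars, Ideal.map_span, Ideal.span_le]
        rintro _ ⟨_, ⟨j, rfl⟩, rfl⟩
        refine aux_hom_mem _ _ (hP _) _ 1 (by rw [rename_X]; exact isHomogeneous_X _ _) ?_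
        fin_cases j <;> simp [hq1, hq2]
      have := Ideal.mem_map_of_mem (rename Fin.succ : MvPolynomial (Fin 2) K →ₐ[K] _)
        (aux_mem_vars hg hn)
      rw [Ideal.map_pow] at this
      exact Ideal.pow_right_mono hle m this
    | cast i =>
      have hz : X 0 ∈ P i.castSucc :=
        aux_hom_mem _ _ (hP _) _ 1 (isHomogeneous_X _ _) (by simp [hon i])
      have hell : rename Fin.succ (ell (p i.castSucc)) ∈ P i.castSucc := by
        refine aux_hom_mem _ _ (hP _) _ 1 (ell_hom _).rename_isHomogeneous ?_
        rw [rename_ell]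
        simp
        ring
      obtain ⟨w, hw⟩ := (pow_dvd_pow_of_dvd (Finset.dvd_prod_of_mem
        (fun i : Fin l => ell (p i.castSucc)) (Finset.mem_univ i)) (m - k)).trans hdvd
      rw [hw, map_mul, map_pow, ← mul_assoc]
      refine Ideal.mul_mem_right _ _ (Ideal.pow_le_pow_right (n := k + (m - k)) (by omega) ?_)
      rw [pow_add]
      exact Ideal.mul_mem_mul (Ideal.pow_mem_pow hz _) (Ideal.pow_mem_pow hell _)
  have hFi : ∀ i, F ∈ P i ^ m := by rwa [hIm, Ideal.mem_iInf] at hF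
  rw [aux_decomp F]
  refine Submodule.sum_mem _ fun k _ => ?_
  set g := (finSuccEquiv K 2 F).coeff k with hg
  by_cases hg0 : g = 0
  · rw [hg0]; simp
  have hk : k ≤ d + 1 := by
    by_contra hk
    exact hg0 (aux_coeff_zero hFd (by omega))
  have hgh : g.IsHomogeneous (d + 1 - k) :=
    hFd.finSuccEquiv_coeff_isHomogeneous k _ (by omega)
  have hgm : m ≤ d + 1 - k :=
    aux_deg_ge hgh hg0 (aux_off_coeff _ _ hq0 hq1 hq2 (hP _) m F (hFi _) k)
  have hgQ : Q ^ (m - k) ∣ g := by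
    rw [hQ, ← Finset.prod_pow]
    refine Finset.prod_dvd_of_isRelPrime ?_ fun i _ =>
      aux_on_coeff _ _ (hp0 _) (hon i) (hP _) m F (hFi _) k
    intro i _ j _ hij
    exact (ell_relprime _ _ (aux_det _ _ (hp0 _) (hon i) (hon j)
      (hdist _ _ (by simpa using hij)))).pow
  have hgen : ∀ f G : MvPolynomial (Fin 3) K, f.IsHomogeneous 1 → G ∈ Im → G.IsHomogeneous d →
      f * G ∈ oneGen Im (d + 1) := fun f G hf hG hGd =>
    Submodule.subset_span ⟨f, hf, G, ⟨hG, hGd⟩, rfl⟩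
  have hren : ∀ (k n : ℕ) (g : MvPolynomial (Fin 2) K), g.IsHomogeneous n → k + n = d →
      (X 0 ^ k * rename Fin.succ g : MvPolynomial (Fin 3) K).IsHomogeneous d := by
    intro k n g hg h
    rw [← h]
    exact (isHomogeneous_X_pow _ _).mul hg.rename_isHomogeneous
  by_cases hkm : m < k
  · obtain ⟨k, rfl⟩ : ∃ k', k = k' + 1 := ⟨k - 1, by omega⟩
    rw [pow_succ', mul_assoc]
    refine hgen _ _ (isHomogeneous_X _ _) (hmem k _ g hgh hgm ?_) (hren _ _ _ hgh (by omega))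
    rw [show m - k = 0 by omega]
    simp
  · obtain ⟨e, rfl⟩ : ∃ e, m = k + e := ⟨m - k, by omega⟩
    have hke : k + e - k = e := by omega
    rw [hke] at hgQ
    have h3 : 3 * k ≤ l * k := Nat.mul_le_mul_right _ hl
    have h4 : 3 * e ≤ l * e := Nat.mul_le_mul_right _ hl
    rw [mul_add] at hd
    obtain ⟨h, hh, hgeq⟩ := aux_hom_div (hQh.pow e) hgh (by omega) hgQ
    obtain ⟨n, hn⟩ : ∃ n, d + 1 - k - l * e = n + 1 := ⟨d - k - l * e, by omega⟩
    rw [hn] at hh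
    obtain ⟨h0, h1, hh0, hh1, rfl⟩ := aux_sum_form hh
    have key : ∀ (j : Fin 2) (u : MvPolynomial (Fin 2) K), u.IsHomogeneous n →
        X j.succ * (X 0 ^ k * rename Fin.succ (Q ^ e * u)) ∈ oneGen Im (d + 1) := by
      intro j u hu
      have hQu := (hQh.pow e).mul hu
      refine hgen _ _ (isHomogeneous_X _ _) (hmem k _ _ hQu (by omega) ?_)
        (hren _ _ _ hQu (by omega))
      rw [hke]
      exact dvd_mul_right _ _
    have := Submodule.add_mem _ (key 0 h0 hh0) (key 1 h1 hh1)
    convert this using 1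
    rw [hgeq]
    simp only [map_mul, map_add, map_pow, rename_X]
    ring

/-- Linear change of coordinates. -/
noncomputable def linSub (T : (Fin 3 → K) →ₗ[K] (Fin 3 → K)) :
    MvPolynomial (Fin 3) K →ₐ[K] MvPolynomial (Fin 3) K :=
  aeval fun j => ∑ k, C (T (Pi.single k 1) j) * X k

lemma linSub_hom (T : (Fin 3 → K) →ₗ[K] (Fin 3 → K)) (F : MvPolynomial (Fin 3) K) (n : ℕ)
    (hF : F.IsHomogeneous n) : (linSub T F).IsHomogeneous n := by
  have := hF.aeval (fun j => ∑ k, C (T (Pi.single k 1) j) * X k) (n := 1)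
    (fun j => IsHomogeneous.sum _ _ _ fun k _ => isHomogeneous_C_mul_X _ _)
  simpa [linSub] using this

lemma lin_apply (T : (Fin 3 → K) →ₗ[K] (Fin 3 → K)) (a : Fin 3 → K) (j : Fin 3) :
    T a j = ∑ k, T (Pi.single k 1) j * a k := by
  conv_lhs => rw [LinearMap.pi_apply_eq_sum_univ T a]
  simp only [Finset.sum_apply, Pi.smul_apply, smul_eq_mul]
  refine Finset.sum_congr rfl fun k _ => ?_
  rw [mul_comm]
  have : (fun i => if k = i then (1 : K) else 0) = Pi.single k 1 := by
    ext i
    simp [Pi.single_apply, eq_comm]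
  rw [this]

lemma linSub_eval (T : (Fin 3 → K) →ₗ[K] (Fin 3 → K)) (a : Fin 3 → K)
    (F : MvPolynomial (Fin 3) K) : eval a (linSub T F) = eval (T a) F := by
  have : (aeval (R := K) a).comp (linSub T) = aeval (T a) := by
    ext j
    simp [linSub, lin_apply T a j]
  exact DFunLike.congr_fun this F

lemma linSub_comp [CharZero K] (T S : (Fin 3 → K) →ₗ[K] (Fin 3 → K)) (h : T ∘ₗ S = LinearMap.id)
    (F : MvPolynomial (Fin 3) K) : linSub S (linSub T F) = F := by
  apply MvPolynomial.funext
  intro a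
  rw [linSub_eval, linSub_eval, ← LinearMap.comp_apply, h, LinearMap.id_apply]

lemma linSub_component (T : (Fin 3 → K) →ₗ[K] (Fin 3 → K)) (F : MvPolynomial (Fin 3) K) (n : ℕ) :
    homogeneousComponent n (linSub T F) = linSub T (homogeneousComponent n F) := by
  conv_lhs => rw [← sum_homogeneousComponent F, map_sum, map_sum]
  have : ∀ i, homogeneousComponent n (linSub T (homogeneousComponent i F)) =
      if n = i then linSub T (homogeneousComponent i F) else 0 := fun i =>
    homogeneousComponent_of_mem (linSub_hom T _ i (homogeneousComponent_isHomogeneous i F))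
  simp only [this]
  rw [Finset.sum_ite_eq]
  split_ifs with h
  · rfl
  · rw [homogeneousComponent_eq_zero _ _ (by simpa [Nat.lt_succ_iff] using h), map_zero]

lemma exists_coord_s8 (L q : Fin 3 → K) (h : ∑ j, L j * q j ≠ 0) :
    ∃ T : (Fin 3 → K) ≃ₗ[K] (Fin 3 → K), T q 1 = 0 ∧ T q 2 = 0 ∧
      ∀ a, ∑ j, L j * a j = 0 → T a 0 = 0 := by
  let φ : (Fin 3 → K) →ₗ[K] K := ∑ j, L j • LinearMap.proj j
  have hφ : ∀ a, φ a = ∑ j, L j * a j := by intro a; simp [φ]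
  have hφq : φ q ≠ 0 := by rwa [hφ]
  have hsurj : LinearMap.range φ = ⊤ :=
    LinearMap.range_eq_top.2 (LinearMap.surjective (fun h0 => hφq (by rw [h0]; rfl)))
  have hker : Module.finrank K (LinearMap.ker φ) = 2 := by
    have := LinearMap.finrank_range_add_finrank_ker φ
    rw [hsurj, finrank_top, Module.finrank_self, Module.finrank_fin_fun] at this
    omega
  let b := Module.finBasisOfFinrankEq K (LinearMap.ker φ) hker
  let v : Fin 3 → (Fin 3 → K) := Fin.cons q (fun i : Fin 2 => (b i : Fin 3 → K))
  have hsp : Submodule.span K (Set.range (fun i : Fin 2 => (b i : Fin 3 → K))) ≤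
      LinearMap.ker φ := by
    rw [Submodule.span_le]
    rintro _ ⟨i, rfl⟩
    exact (b i).2
  have hli : LinearIndependent K v := by
    rw [linearIndependent_finCons]
    refine ⟨b.linearIndependent.map' (LinearMap.ker φ).subtype (Submodule.ker_subtype _), ?_⟩
    exact fun hq => hφq (hsp hq)
  let B := basisOfLinearIndependentOfCardEqFinrank hli (by simp)
  have hB : ∀ i, B i = v i := fun i => by simp [B]
  have hq : B.equivFun q = Pi.single 0 1 := by
    rw [show q = B 0 by rw [hB]; rfl]
    ext i
    simp [Pi.single_apply, eq_comm]
  refine ⟨B.equivFun, by rw [hq]; simp, by rw [hq]; simp, fun a ha => ?_⟩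
  have := congrArg φ (B.sum_equivFun a)
  rw [Fin.sum_univ_succ, hB] at this
  simp only [hB, map_add, map_smul, map_sum] at this
  have h0 : ∀ i : Fin 2, φ (v i.succ) = 0 := fun i => (b i).2
  rw [hφ a, ha] at this
  simpa [h0, show v 0 = q from rfl, hφq] using this

end Helpers

lemma aux_main {K : Type*} [Field K] [CharZero K]
    (l : ℕ) (hl : 2 < l)
    (p : Fin (l + 1) → Fin 3 → K) (hp0 : ∀ i, p i ≠ 0)
    (hdist : ∀ i j, i ≠ j → ∀ c : K, c • p i ≠ p j)
    (L : Fin 3 → K)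
    (hon : ∀ i : Fin (l + 1), (i : ℕ) < l → ∑ j, L j * p i j = 0)
    (hoff : ∑ j, L j * p (Fin.last l) j ≠ 0)
    (P : Fin (l + 1) → Ideal (MvPolynomial (Fin 3) K))
    (hP : ∀ i F, F ∈ P i ↔ ∀ n, eval (p i) (homogeneousComponent n F) = 0)
    (m : ℕ)
    (Im : Ideal (MvPolynomial (Fin 3) K)) (hIm : Im = ⨅ i, P i ^ m)
    (d : ℕ) (hd : l * m ≤ d) : degComp Im (d + 1) = oneGen Im (d + 1) := by
  apply le_antisymm
  · rintro F ⟨hF, hFd⟩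
    obtain ⟨T, hT1, hT2, hT0⟩ := exists_coord_s8 L (p (Fin.last l)) hoff
    have hST : ∀ F, linSub T.symm.toLinearMap (linSub T.toLinearMap F) = F :=
      linSub_comp (K := K) _ _ (by ext; simp)
    have hTS : ∀ F, linSub T.toLinearMap (linSub T.symm.toLinearMap F) = F :=
      linSub_comp (K := K) _ _ (by ext; simp)
    let σ : MvPolynomial (Fin 3) K ≃ₐ[K] MvPolynomial (Fin 3) K :=
      AlgEquiv.ofAlgHom (linSub T.toLinearMap) (linSub T.symm.toLinearMap)
        (AlgHom.ext hTS) (AlgHom.ext hST)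
    have hσ : ∀ F, σ F = linSub T.toLinearMap F := fun F => rfl
    have hσs : ∀ F, σ.symm F = linSub T.symm.toLinearMap F := fun F => rfl
    have hmemσ : ∀ (J : Ideal (MvPolynomial (Fin 3) K)) (G : MvPolynomial (Fin 3) K),
        G ∈ J.map σ.symm ↔ σ G ∈ J := by
      intro J G
      rw [Ideal.mem_map_of_equiv]
      constructor
      · rintro ⟨x, hx, rfl⟩
        simpa using hx
      · intro h
        exact ⟨_, h, by simp⟩
    have hmemI : ∀ G, G ∈ (⨅ i, ((P i).map σ.symm) ^ m) ↔ σ G ∈ Im := by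
      intro G
      rw [hIm, Ideal.mem_iInf, Ideal.mem_iInf]
      refine forall_congr' fun i => ?_
      rw [← Ideal.map_pow, hmemσ]
    have hcore := aux_core l hl (fun i => T (p i)) (fun i h => hp0 i (by simpa using h))
      (fun i j hij c h => hdist i j hij c (T.injective (by simpa using h)))
      (fun i => hT0 _ (hon _ (by simp))) hT1 hT2
      (fun i => (P i).map σ.symm) (fun i F => by
        rw [hmemσ, hP]
        refine forall_congr' fun n => ?_
        rw [hσ, linSub_component, linSub_eval]
        rfl) m _ rfl d hd (σ.symm F) (by rw [hmemI]; simpa using hF)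
      (by rw [hσs]; exact linSub_hom _ _ _ hFd)
    have hmap : ∀ G ∈ oneGen (⨅ i, ((P i).map σ.symm) ^ m) (d + 1), σ G ∈ oneGen Im (d + 1) := by
      intro G hG
      refine Submodule.span_induction ?_ ?_ ?_ ?_ hG
      · rintro _ ⟨f, hf, g, ⟨hg, hgd⟩, rfl⟩
        rw [map_mul]
        exact Submodule.subset_span ⟨_, linSub_hom _ _ _ hf, _,
          ⟨(hmemI g).1 hg, linSub_hom _ _ _ hgd⟩, rfl⟩
      · rw [map_zero]; exact Submodule.zero_mem _
      · intro x y _ _ hx hy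
        rw [map_add]; exact Submodule.add_mem _ hx hy
      · intro c x _ hx
        rw [map_smul]; exact Submodule.smul_mem _ c hx
    simpa using hmap _ hcore
  · refine Submodule.span_le.2 ?_
    rintro _ ⟨f, hf, g, ⟨hg, hgd⟩, rfl⟩
    refine ⟨Ideal.mul_mem_left _ _ hg, ?_⟩
    have := IsHomogeneous.mul hf hgd
    rw [add_comm] at this
    exact this

theorem stmt_8
    (K : Type*) [Field K] [CharZero K]
    -- `l > 2` points on a line plus one point off the line
    (l : ℕ) (hl : 2 < l)
    (p : Fin (l + 1) → Fin 3 → K) (hp0 : ∀ i, p i ≠ 0)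
    (hdist : ∀ i j, i ≠ j → ∀ c : K, c • p i ≠ p j)
    (L : Fin 3 → K) (hL : L ≠ 0)
    (hon : ∀ i : Fin (l + 1), (i : ℕ) < l → ∑ j, L j * p i j = 0)
    (hoff : ∑ j, L j * p (Fin.last l) j ≠ 0)
    -- `P i` is the homogeneous prime ideal of all forms vanishing at `p i`
    (P : Fin (l + 1) → Ideal (MvPolynomial (Fin 3) K))
    (hP : ∀ i F, F ∈ P i ↔ ∀ n, eval (p i) (homogeneousComponent n F) = 0)
    -- the uniform fat point ideal `I^{(m)} = P_1^m ∩ ⋯ ∩ P_{l+1}^m`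
    (m : ℕ) (hm : 1 ≤ m)
    (Im : Ideal (MvPolynomial (Fin 3) K)) (hIm : Im = ⨅ i, P i ^ m) :
    -- `(I^{(m)})_{d+1} = R_1 · (I^{(m)})_d` for all `d ≥ lm`
    (∀ d : ℕ, l * m ≤ d → degComp Im (d + 1) = oneGen Im (d + 1)) ∧
    -- i.e. `v_d(I^{(m)}) = 0` for all `d > lm`
    (∀ d : ℕ, l * m < d → vnum Im d = 0) := by
  have key := aux_main l hl p hp0 hdist L hon hoff P hP m Im hIm
  refine ⟨key, fun d hd => ?_⟩
  obtain ⟨d, rfl⟩ : ∃ d', d = d' + 1 := ⟨d - 1, by omega⟩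
  unfold vnum
  rw [← key d (by omega), Submodule.comap_subtype_self]
  exact Module.finrank_zero_of_subsingleton
end

section
/- The scaled initial degrees of the symbolic powers converge: lim_{m → ∞} α(I^{(m)})/m = 2 − 1/l, where α(I^{(m)}) denotes the least degree of a nonzero homogeneous element of I^{(m)}. (This is the x-intercept of the limiting shape of the symbolic generic initial system of I.) -/
open MvPolynomial Filter

namespace FatPts

variable {K : Type*} [Field K]

/-- linear form with coefficient vector `a` -/
noncomputable def lin (a : Fin 3 → K) : MvPolynomial (Fin 3) K := ∑ j, C (a j) * X j

lemma lin_hom (a : Fin 3 → K) : (lin a).IsHomogeneous 1 :=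
  IsHomogeneous.sum _ _ _ fun _ _ => isHomogeneous_C_mul_X _ _

lemma eval_lin (a v : Fin 3 → K) : eval v (lin a) = ∑ j, a j * v j := by
  simp [lin]

lemma lin_ne_zero {a : Fin 3 → K} (ha : a ≠ 0) : lin a ≠ 0 := by
  intro h
  apply ha
  funext j
  have := eval_lin a (Pi.single j 1)
  rw [h] at this
  simpa [Pi.single_apply] using this.symm

lemma hom_factor (a : Fin 3 → K) (d : ℕ) (f : MvPolynomial (Fin 3) K) (hf : f.IsHomogeneous d)
    (hf0 : f ≠ 0) (hd : lin a ∣ f) :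
    ∃ e g, d = e + 1 ∧ g.IsHomogeneous e ∧ f = lin a * g := by
  obtain ⟨h, rfl⟩ := hd
  have key : lin a * h = ∑ i ∈ Finset.range (h.totalDegree + 1),
      if d = 1 + i then lin a * homogeneousComponent i h else 0 := by
    conv_lhs => rw [← homogeneousComponent_eq_self hf, ← sum_homogeneousComponent h,
      Finset.mul_sum, map_sum]
    refine Finset.sum_congr rfl fun i _ => ?_
    exact homogeneousComponent_of_mem
      ((lin_hom a).mul (homogeneousComponent_isHomogeneous i h))
  rcases d with _ | e
  · exfalso
    apply hf0
    rw [key]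
    refine Finset.sum_eq_zero fun i _ => ?_
    rw [if_neg (by omega)]
  · refine ⟨e, homogeneousComponent e h, rfl, homogeneousComponent_isHomogeneous e h, ?_⟩
    rw [key, Finset.sum_eq_single e]
    · rw [if_pos (by omega)]
    · intro b _ hb
      rw [if_neg (by omega)]
    · intro hb
      rw [homogeneousComponent_eq_zero]
      · simp
      · simpa using hb

lemma hom_decomp (a : Fin 3 → K) (d : ℕ) : ∀ (f : MvPolynomial (Fin 3) K), f.IsHomogeneous d →
    f ≠ 0 → ∃ c e g, d = c + e ∧ g.IsHomogeneous e ∧ f = lin a ^ c * g ∧ ¬ lin a ∣ g := by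
  induction d with
  | zero =>
    intro f hf hf0
    refine ⟨0, 0, f, rfl, hf, by simp, fun h => ?_⟩
    obtain ⟨e, g, h, _⟩ := hom_factor a 0 f hf hf0 h
    omega
  | succ d ih =>
    intro f hf hf0
    by_cases h : lin a ∣ f
    · obtain ⟨e, g, h1, h2, rfl⟩ := hom_factor a _ f hf hf0 h
      obtain rfl : d = e := by omega
      obtain ⟨c, e, g', h3, h4, rfl, h6⟩ := ih g h2 (right_ne_zero_of_mul hf0)
      exact ⟨c + 1, e, g', by omega, h4, by ring, h6⟩
    · exact ⟨0, d + 1, f, by omega, hf, by simp, h⟩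

lemma span_plane (L u w v : Fin 3 → K) (hL : L ≠ 0) (hu : u ≠ 0) (huw : ∀ c : K, c • u ≠ w)
    (h1 : ∑ j, L j * u j = 0) (h2 : ∑ j, L j * w j = 0) (h3 : ∑ j, L j * v j = 0) :
    ∃ x y : K, v = x • u + y • w := by
  have hdet : (Matrix.of ![u, w, v]).det = 0 := by
    rw [← Matrix.exists_mulVec_eq_zero_iff]
    refine ⟨L, hL, ?_⟩
    ext i
    fin_cases i <;> simp [Matrix.mulVec, dotProduct, mul_comm (_ : K) (L _), h1, h2, h3]
  rw [← Matrix.exists_vecMul_eq_zero_iff] at hdet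
  obtain ⟨r, hr, h⟩ := hdet
  have h' : ∀ j, r 0 * u j + r 1 * w j + r 2 * v j = 0 := fun j => by
    have := congrFun h j
    simpa [Matrix.vecMul, dotProduct, Fin.sum_univ_three] using this
  by_cases h2 : r 2 = 0
  · exfalso
    by_cases hb : r 1 = 0
    · apply hr
      have ha : r 0 = 0 := by
        by_contra ha
        apply hu
        funext j
        have := h' j
        simpa [h2, hb, ha] using this
      funext i
      fin_cases i <;> simp [ha, hb, h2]
    · apply huw (-(r 0) / r 1)
      funext j
      have := h' j
      simp only [Pi.smul_apply, smul_eq_mul]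
      field_simp
      rw [h2] at this
      linear_combination -this
  · refine ⟨-(r 0) / r 2, -(r 1) / r 2, ?_⟩
    funext j
    have := h' j
    simp only [Pi.smul_apply, Pi.add_apply, smul_eq_mul]
    field_simp
    linear_combination this

/-- restriction to the affine line `a + t v` -/
noncomputable def psi (a v : Fin 3 → K) : MvPolynomial (Fin 3) K →ₐ[K] Polynomial K :=
  aeval fun j => Polynomial.C (a j) + Polynomial.X * Polynomial.C (v j)

/-- restriction to the generic affine line through `a` -/
noncomputable def phi (a : Fin 3 → K) :
    MvPolynomial (Fin 3) K →ₐ[K] Polynomial (MvPolynomial (Fin 3) K) :=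
  aeval fun j => Polynomial.C (C (a j)) + Polynomial.X * Polynomial.C (X j)

lemma map_phi (a v : Fin 3 → K) (f : MvPolynomial (Fin 3) K) :
    Polynomial.map (eval v) (phi a f) = psi a v f := by
  have : (Polynomial.mapAlgHom (aeval v : MvPolynomial (Fin 3) K →ₐ[K] K)).comp (phi a)
      = psi a v := by
    apply MvPolynomial.algHom_ext
    intro i
    simp [phi, psi]
  have := DFunLike.congr_fun this f
  simpa using this

lemma eval_psi (a v : Fin 3 → K) (t : K) (f : MvPolynomial (Fin 3) K) :
    Polynomial.eval t (psi a v f) = eval (a + t • v) f := by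
  have : (Polynomial.aeval t).comp (psi a v) = (aeval (a + t • v)) := by
    apply MvPolynomial.algHom_ext
    intro i
    simp [psi]
    ring
  have := DFunLike.congr_fun this f
  simpa [Polynomial.coe_aeval_eq_eval, MvPolynomial.coe_aeval_eq_eval] using this

lemma phi_lin (a L : Fin 3 → K) :
    phi a (lin L) = Polynomial.C (C (∑ j, L j * a j)) + Polynomial.X * Polynomial.C (lin L) := by
  simp only [phi, lin, map_mul, aeval_X, Fin.sum_univ_three, algHom_C, map_add,
    Polynomial.algebraMap_apply, MvPolynomial.algebraMap_eq]
  ring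

lemma psi_lin (a v L : Fin 3 → K) :
    psi a v (lin L) = Polynomial.C (∑ j, L j * a j) +
      Polynomial.X * Polynomial.C (∑ j, L j * v j) := by
  rw [← map_phi, phi_lin, Polynomial.map_add, Polynomial.map_mul, Polynomial.map_C, Polynomial.map_C,
    Polynomial.map_X, eval_C, eval_lin]

lemma natDegree_psi (a v : Fin 3 → K) (g : MvPolynomial (Fin 3) K) (e : ℕ)
    (hg : g.IsHomogeneous e) : (psi a v g).natDegree ≤ e := by
  have := MvPolynomial.aeval_natDegree_le (m := e) (n := 1) g hg.totalDegree_le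
    (fun j => Polynomial.C (a j) + Polynomial.X * Polynomial.C (v j)) (fun i => by compute_degree)
  simpa [psi] using this

lemma aeval_scale {S : Type*} [CommRing S] [Algebra K S] (r : S) (x : Fin 3 → S)
    (g : MvPolynomial (Fin 3) K) (e : ℕ) (hg : g.IsHomogeneous e) :
    aeval (fun j => r * x j) g = r ^ e * aeval x g := by
  rw [aeval_def, aeval_def, eval₂_eq, eval₂_eq, Finset.mul_sum]
  refine Finset.sum_congr rfl fun d hd => ?_
  have := hg (mem_support_iff.1 hd)
  rw [← this]
  simp only [mul_pow, Finset.prod_mul_distrib, Finset.prod_pow_eq_pow_sum]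
  have h2 : (Finsupp.weight (1 : Fin 3 → ℕ)) d = ∑ i ∈ d.support, d i := by
    simp [Finsupp.weight_apply, Finsupp.sum]
  rw [h2]
  ring

lemma psi_mem_pow (a : Fin 3 → K) (P : Ideal (MvPolynomial (Fin 3) K))
    (hP : ∀ F, F ∈ P ↔ ∀ n, eval a (homogeneousComponent n F) = 0) (m : ℕ)
    (f : MvPolynomial (Fin 3) K) (hf : f ∈ P ^ m) : Polynomial.X ^ m ∣ phi a f := by
  have h1 : P.map (phi a : MvPolynomial (Fin 3) K →+* Polynomial (MvPolynomial (Fin 3) K)) ≤ Ideal.span {Polynomial.X} := by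
    rw [Ideal.map_le_iff_le_comap]
    intro F hF
    rw [Ideal.mem_comap, Ideal.mem_span_singleton, Polynomial.X_dvd_iff]
    have e0 : eval a F = 0 := by
      rw [← sum_homogeneousComponent F, map_sum]
      exact Finset.sum_eq_zero fun i _ => (hP F).1 hF i
    have : ((Polynomial.aeval (0 : MvPolynomial (Fin 3) K)).restrictScalars K).comp (phi a)
        = (Algebra.ofId K _).comp (aeval a) := by
      apply MvPolynomial.algHom_ext
      intro i
      simp [phi, Algebra.ofId_apply]
    have := DFunLike.congr_fun this F
    simp only [AlgHom.comp_apply, AlgHom.restrictScalars_apply] at this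
    rw [RingHom.coe_coe, Polynomial.coeff_zero_eq_eval_zero, ← Polynomial.coe_aeval_eq_eval, this]
    simp [e0]
  have h2 := Ideal.mem_map_of_mem (phi a : MvPolynomial (Fin 3) K →+* Polynomial (MvPolynomial (Fin 3) K)) hf
  rw [Ideal.map_pow] at h2
  have := Ideal.pow_right_mono h1 m h2
  rwa [Ideal.span_singleton_pow, Ideal.mem_span_singleton] at this

lemma dvd_of_psi_zero [Infinite K] (L M A B u : Fin 3 → K) (hL : L ≠ 0)
    (hspan : ∀ v : Fin 3 → K, ∑ j, L j * v j = 0 → ∃ y : K, v = (∑ j, M j * v j) • A + y • B)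
    (hLu : ∑ j, L j * u j = 0) (hMu : ∑ j, M j * u j ≠ 0)
    (g : MvPolynomial (Fin 3) K) (e : ℕ) (hg : g.IsHomogeneous e) (h0 : psi A B g = 0) :
    lin L ∣ g := by
  obtain ⟨j, hj⟩ := Function.ne_iff.1 hL
  have hj : L j ≠ 0 := hj
  let s : Fin 3 → K := Pi.single j (L j)⁻¹
  have hs : ∑ k, L k * s k = 1 := by
    simp [s, Pi.single_apply, hj]
  let σ : MvPolynomial (Fin 3) K →ₐ[K] MvPolynomial (Fin 3) K :=
    aeval fun k => X k - C (s k) * lin L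
  have hσ : ∀ v F, eval v (σ F) = eval (v - (∑ k, L k * v k) • s) F := by
    intro v F
    have : (aeval v : _ →ₐ[K] K).comp σ = aeval (v - (∑ k, L k * v k) • s) := by
      apply MvPolynomial.algHom_ext
      intro i
      simp [σ, eval_lin, mul_comm]
    have := DFunLike.congr_fun this F
    simpa [MvPolynomial.coe_aeval_eq_eval] using this
  have hplane : ∀ v, eval v (σ (lin M * g)) = 0 := by
    intro v
    rw [hσ]
    set v' := v - (∑ k, L k * v k) • s with hv'
    have hLv : ∑ k, L k * v' k = 0 := by
      have : ∑ k, L k * v' k = ∑ k, L k * v k - (∑ k, L k * v k) * ∑ k, L k * s k := by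
        simp only [hv', Fin.sum_univ_three, Pi.sub_apply, Pi.smul_apply, smul_eq_mul]
        ring
      rw [this, hs]; ring
    obtain ⟨y, hy⟩ := hspan v' hLv
    rw [map_mul, eval_lin]
    by_cases hM : ∑ j, M j * v' j = 0
    · rw [hM, zero_mul]
    set c := ∑ j, M j * v' j with hc
    have h1 : eval (A + (y / c) • B) g = 0 := by
      rw [← eval_psi, h0]; simp
    have h2 := aeval_scale c (A + (y / c) • B) g e hg
    have h3 : (fun j => c * (A + (y / c) • B) j) = v' := by
      rw [hy]
      funext j
      simp only [Pi.add_apply, Pi.smul_apply, smul_eq_mul]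
      field_simp
    rw [h3] at h2
    have h4 : eval v' g = c ^ e * eval (A + (y / c) • B) g := by
      simpa [MvPolynomial.coe_aeval_eq_eval] using h2
    rw [h4, h1]; ring
  have hz : σ (lin M * g) = 0 := MvPolynomial.funext fun v => by rw [hplane v, map_zero]
  rw [map_mul] at hz
  have hσM : σ (lin M) ≠ 0 := by
    intro h
    apply hMu
    have := hσ u (lin M)
    rw [h, hLu, zero_smul, sub_zero, eval_lin, map_zero] at this
    exact this.symm
  have hσg : σ g = 0 := (mul_eq_zero.1 hz).resolve_left hσM
  have hq : (Ideal.Quotient.mkₐ K (Ideal.span {lin L})).comp σ =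
      Ideal.Quotient.mkₐ K (Ideal.span {lin L}) := by
    apply MvPolynomial.algHom_ext
    intro i
    have : (Ideal.Quotient.mk (Ideal.span {lin L})) (lin L) = 0 :=
      Ideal.Quotient.eq_zero_iff_mem.2 (Ideal.mem_span_singleton_self _)
    simp [σ, this]
  have := DFunLike.congr_fun hq g
  simp only [AlgHom.comp_apply, hσg, map_zero] at this
  rw [← Ideal.mem_span_singleton]
  exact Ideal.Quotient.eq_zero_iff_mem.1 this.symm

lemma exists_M [Infinite K] {n : ℕ} (p : Fin n → Fin 3 → K) (hp : ∀ i, p i ≠ 0) :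
    ∃ M : Fin 3 → K, ∀ i, ∑ j, M j * p i j ≠ 0 := by
  have h : (∏ i, lin (p i)) ≠ 0 := Finset.prod_ne_zero_iff.2 fun i _ => lin_ne_zero (hp i)
  have : ∃ M : Fin 3 → K, eval M (∏ i, lin (p i)) ≠ 0 := by
    by_contra! hc
    exact h (MvPolynomial.funext fun v => by rw [hc v, map_zero])
  obtain ⟨M, hM⟩ := this
  refine ⟨M, fun i => ?_⟩
  rw [map_prod, Finset.prod_ne_zero_iff] at hM
  have := hM i (Finset.mem_univ i)
  rw [eval_lin] at this
  simpa only [mul_comm] using this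

/-- order of vanishing after dividing by a power of the line -/
lemma on_line (L a : Fin 3 → K) (hL : L ≠ 0) (hLa : ∑ j, L j * a j = 0) (m c : ℕ)
    (g : MvPolynomial (Fin 3) K) (h : Polynomial.X ^ m ∣ phi a (lin L ^ c * g)) :
    Polynomial.X ^ (m - c) ∣ phi a g := by
  rcases le_or_gt m c with hmc | hmc
  · rw [Nat.sub_eq_zero_of_le hmc]; simp
  rw [map_mul, map_pow, phi_lin, hLa] at h
  simp only [map_zero, zero_add, mul_pow] at h
  obtain ⟨k, rfl⟩ := Nat.exists_eq_add_of_lt hmc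
  have e1 : c + k + 1 - c = k + 1 := by omega
  rw [e1]
  rw [show c + k + 1 = c + (k + 1) by ring, pow_add, mul_assoc] at h
  have h := (mul_dvd_mul_iff_left (pow_ne_zero c Polynomial.X_ne_zero)).1 h
  refine Polynomial.prime_X.pow_dvd_of_dvd_mul_left _ ?_ h
  rw [Polynomial.X_dvd_iff, ← map_pow, Polynomial.coeff_C_zero]
  exact pow_ne_zero _ (lin_ne_zero hL)

lemma off_line [Infinite K] (L a : Fin 3 → K) (hLa : ∑ j, L j * a j ≠ 0) (m c e : ℕ)
    (g : MvPolynomial (Fin 3) K) (hg : g.IsHomogeneous e) (hg0 : g ≠ 0)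
    (h : Polynomial.X ^ m ∣ phi a (lin L ^ c * g)) : m ≤ e := by
  have : ∃ w : Fin 3 → K, eval w g ≠ 0 := by
    by_contra! hc
    exact hg0 (MvPolynomial.funext fun v => by rw [hc v, map_zero])
  obtain ⟨w, hw⟩ := this
  have h1 := Polynomial.map_dvd (eval (w - a)) h
  rw [map_phi, Polynomial.map_pow, Polynomial.map_X, map_mul, map_pow] at h1
  have h2 : Polynomial.X ^ m ∣ psi a (w - a) g := by
    refine Polynomial.prime_X.pow_dvd_of_dvd_mul_left _ ?_ h1
    intro h3
    have h3 := Polynomial.prime_X.dvd_of_dvd_pow h3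
    rw [psi_lin, Polynomial.X_dvd_iff] at h3
    apply hLa
    rw [Polynomial.coeff_add, Polynomial.coeff_C_zero, Polynomial.coeff_X_mul_zero, add_zero] at h3
    exact h3
  have h3 : psi a (w - a) g ≠ 0 := by
    intro h0
    apply hw
    have := eval_psi a (w - a) 1 g
    rw [h0] at this
    simpa using this.symm
  have := Polynomial.natDegree_le_of_dvd h2 h3
  rw [Polynomial.natDegree_X_pow] at this
  exact this.trans (natDegree_psi _ _ _ _ hg)

lemma plane_bound [Infinite K] (l : ℕ) (hl : 2 < l) (p : Fin l → Fin 3 → K) (hp0 : ∀ i, p i ≠ 0)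
    (hdist : ∀ i j, i ≠ j → ∀ c : K, c • p i ≠ p j)
    (L : Fin 3 → K) (hL : L ≠ 0) (hon : ∀ i, ∑ j, L j * p i j = 0)
    (k e : ℕ) (g : MvPolynomial (Fin 3) K) (hg : g.IsHomogeneous e) (hgL : ¬ lin L ∣ g)
    (h : ∀ i, Polynomial.X ^ k ∣ phi (p i) g) : l * k ≤ e := by
  obtain ⟨M, hM⟩ := exists_M p hp0
  let i0 : Fin l := ⟨0, by omega⟩
  let i1 : Fin l := ⟨1, by omega⟩
  have h01 : i0 ≠ i1 := by simp [i0, i1]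
  set M0 := ∑ j, M j * p i0 j with hM0
  set M1 := ∑ j, M j * p i1 j with hM1
  have hM0' : M0 ≠ 0 := hM i0
  have hM1' : M1 ≠ 0 := hM i1
  let A := M0⁻¹ • p i0
  let B := M1⁻¹ • p i1 - A
  have hspan : ∀ v : Fin 3 → K, ∑ j, L j * v j = 0 →
      ∃ y : K, v = (∑ j, M j * v j) • A + y • B := by
    intro v hv
    obtain ⟨x, y, rfl⟩ := span_plane L (p i0) (p i1) v hL (hp0 i0) (hdist i0 i1 h01)
      (hon i0) (hon i1) hv
    refine ⟨y * M1, ?_⟩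
    have : ∑ j, M j * (x • p i0 + y • p i1) j = x * M0 + y * M1 := by
      simp only [hM0, hM1, Fin.sum_univ_three, Pi.add_apply, Pi.smul_apply, smul_eq_mul]
      ring
    rw [this]
    funext j
    simp only [A, B, Pi.add_apply, Pi.sub_apply, Pi.smul_apply, smul_eq_mul]
    field_simp
    ring
  have hne : psi A B g ≠ 0 := fun h0 =>
    hgL (dvd_of_psi_zero L M A B (p i0) hL hspan (hon i0) (hM i0) g e hg h0)
  choose y hy using fun i => hspan (p i) (hon i)
  let t : Fin l → K := fun i => y i / (∑ j, M j * p i j)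
  have hpt : ∀ i, p i = (∑ j, M j * p i j) • (A + t i • B) := by
    intro i
    conv_lhs => rw [hy i]
    have := hM i
    have h2 : (∑ j, M j * p i j) * t i = y i := by
      simp only [t]
      field_simp
    rw [smul_add, smul_smul _ (t i), h2]
  have ht : Function.Injective t := by
    intro i j hij
    by_contra hne
    apply hdist i j hne ((∑ k, M k * p j k) / (∑ k, M k * p i k))
    conv_rhs => rw [hpt j, ← hij]
    conv_lhs => rw [hpt i]
    rw [smul_smul, ← hpt i, div_mul_cancel₀ _ (hM i)]
  have hdiv : ∀ i, (Polynomial.X - Polynomial.C (t i)) ^ k ∣ psi A B g := by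
    intro i
    set c := ∑ j, M j * p i j with hc
    have hc0 : c ≠ 0 := hM i
    have h1 := Polynomial.map_dvd (eval (c • B)) (h i)
    rw [map_phi, Polynomial.map_pow, Polynomial.map_X] at h1
    have h2 : psi (p i) (c • B) g = Polynomial.C c ^ e * psi (A + t i • B) B g := by
      rw [psi, psi, ← aeval_scale _ _ _ _ hg]
      congr 2
      funext j
      rw [hpt i]
      simp only [Pi.smul_apply, smul_eq_mul, map_mul]
      ring
    rw [h2] at h1
    have h3 : Polynomial.X ^ k ∣ psi (A + t i • B) B g := by
      refine Polynomial.prime_X.pow_dvd_of_dvd_mul_left _ ?_ h1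
      rw [Polynomial.X_dvd_iff, ← map_pow, Polynomial.coeff_C_zero]
      exact pow_ne_zero _ hc0
    have h4 : (Polynomial.aeval (Polynomial.X - Polynomial.C (t i))).comp (psi (A + t i • B) B)
        = psi A B := by
      apply MvPolynomial.algHom_ext
      intro j
      simp [psi]
      ring
    have h5 := map_dvd (Polynomial.aeval (R := K) (Polynomial.X - Polynomial.C (t i))) h3
    rw [← AlgHom.comp_apply, h4] at h5
    simpa using h5
  have hprod : (∏ i, (Polynomial.X - Polynomial.C (t i)) ^ k) ∣ psi A B g := by
    refine Fintype.prod_dvd_of_coprime (fun i j hij => ?_) hdiv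
    exact (Polynomial.pairwise_coprime_X_sub_C ht hij).pow
  have h6 := (Polynomial.natDegree_le_of_dvd hprod hne).trans (natDegree_psi _ _ _ _ hg)
  rw [Polynomial.natDegree_prod_of_monic _ _
    (fun i _ => (Polynomial.monic_X_sub_C _).pow k)] at h6
  simpa using h6

lemma exists_perp (a b : Fin 3 → K) :
    ∃ n : Fin 3 → K, n ≠ 0 ∧ ∑ j, n j * a j = 0 ∧ ∑ j, n j * b j = 0 := by
  have hdet : (Matrix.of ![a, b, 0]).det = 0 :=
    Matrix.det_eq_zero_of_row_eq_zero 2 (by intro j; simp)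
  rw [← Matrix.exists_mulVec_eq_zero_iff] at hdet
  obtain ⟨n, hn, h⟩ := hdet
  refine ⟨n, hn, ?_, ?_⟩
  · have := congrFun h 0
    simpa [Matrix.mulVec, dotProduct, mul_comm] using this
  · have := congrFun h 1
    simpa [Matrix.mulVec, dotProduct, mul_comm] using this

lemma lin_mem (a n : Fin 3 → K) (P : Ideal (MvPolynomial (Fin 3) K))
    (hP : ∀ F, F ∈ P ↔ ∀ n, eval a (homogeneousComponent n F) = 0)
    (h : ∑ j, n j * a j = 0) : lin n ∈ P := by
  rw [hP]
  intro k
  rw [homogeneousComponent_of_mem (lin_hom n)]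
  split_ifs
  · rw [eval_lin, h]
  · simp

lemma hdim_ne_zero_iff (J : Ideal (MvPolynomial (Fin 3) K)) (d : ℕ) :
    hdim J d ≠ 0 ↔ ∃ f ∈ J, f.IsHomogeneous d ∧ f ≠ 0 := by
  have h1 : Module.Finite K (homogeneousSubmodule (Fin 3) K d) :=
    Module.Finite.iff_fg.2 (homogeneousSubmodule_fg (Fin 3) K d)
  have h2 : Module.Finite K (degComp J d) :=
    Submodule.finiteDimensional_of_le (S₂ := homogeneousSubmodule (Fin 3) K d) inf_le_right
  rw [hdim, Ne, Submodule.finrank_eq_zero, ← Ne, Submodule.ne_bot_iff]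
  constructor
  · rintro ⟨f, hf, hf0⟩
    exact ⟨f, hf.1, hf.2, hf0⟩
  · rintro ⟨f, hf, hf1, hf0⟩
    exact ⟨f, ⟨hf, hf1⟩, hf0⟩


lemma lower [Infinite K] (l : ℕ) (hl : 2 < l)
    (p : Fin (l + 1) → Fin 3 → K) (hp0 : ∀ i, p i ≠ 0)
    (hdist : ∀ i j, i ≠ j → ∀ c : K, c • p i ≠ p j)
    (L : Fin 3 → K) (hL : L ≠ 0)
    (hon : ∀ i : Fin (l + 1), (i : ℕ) < l → ∑ j, L j * p i j = 0)
    (hoff : ∑ j, L j * p (Fin.last l) j ≠ 0)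
    (P : Fin (l + 1) → Ideal (MvPolynomial (Fin 3) K))
    (hP : ∀ i F, F ∈ P i ↔ ∀ n, eval (p i) (homogeneousComponent n F) = 0)
    (m d : ℕ) (f : MvPolynomial (Fin 3) K) (hf : f ∈ ⨅ i, P i ^ m) (hd : f.IsHomogeneous d)
    (hf0 : f ≠ 0) : 2 * (l * m) ≤ l * d + m := by
  have hphi : ∀ i, Polynomial.X ^ m ∣ phi (p i) f := fun i =>
    psi_mem_pow (p i) (P i) (hP i) m f ((Ideal.mem_iInf.1 hf) i)
  obtain ⟨c, e, g, rfl, hg, rfl, hgL⟩ := hom_decomp L d f hd hf0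
  have h1 : m ≤ e := off_line L _ hoff m c e g hg (right_ne_zero_of_mul hf0) (hphi _)
  have h2 : l * (m - c) ≤ e := by
    refine plane_bound l hl (fun i => p i.castSucc) (fun i => hp0 _)
      (fun i j hij => hdist _ _ (fun h => hij (Fin.castSucc_injective _ h))) L hL
      (fun i => hon _ (by simp)) (m - c) e g hg hgL (fun i => ?_)
    exact on_line L _ hL (hon _ (by simp)) m c g (hphi _)
  have h3 : l * m ≤ l * c + e := by
    have : l * m ≤ l * (c + (m - c)) := Nat.mul_le_mul_left l (by omega)
    rw [mul_add] at this
    omega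
  obtain ⟨k, rfl⟩ : ∃ k, l = k + 1 := ⟨l - 1, by omega⟩
  nlinarith [Nat.mul_le_mul_left k h1]

lemma upper (l : ℕ) (hl : 2 < l)
    (p : Fin (l + 1) → Fin 3 → K)
    (L : Fin 3 → K) (hL : L ≠ 0)
    (hon : ∀ i : Fin (l + 1), (i : ℕ) < l → ∑ j, L j * p i j = 0)
    (P : Fin (l + 1) → Ideal (MvPolynomial (Fin 3) K))
    (hP : ∀ i F, F ∈ P i ↔ ∀ n, eval (p i) (homogeneousComponent n F) = 0)
    (m : ℕ) : ∃ d f, f ∈ ⨅ i, P i ^ m ∧ f.IsHomogeneous d ∧ f ≠ 0 ∧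
      l * d ≤ 2 * (l * m) - m + l * l := by
  choose n hn0 hn1 hn2 using fun i : Fin l => exists_perp (p i.castSucc) (p (Fin.last l))
  obtain ⟨k, hk1, hk2, hk3⟩ : ∃ k, k ≤ m ∧ m ≤ l * k ∧ l * k ≤ m + (l - 1) := by
    refine ⟨(m + (l - 1)) / l, ?_, ?_, Nat.mul_div_le _ _⟩
    · rcases Nat.eq_zero_or_pos m with rfl | hm
      · rw [Nat.div_eq_of_lt (by omega)]
      · apply Nat.div_le_of_le_mul
        obtain ⟨r, rfl⟩ : ∃ r, l = r + 1 := ⟨l - 1, by omega⟩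
        obtain ⟨s, rfl⟩ : ∃ s, m = s + 1 := ⟨m - 1, by omega⟩
        simp only [Nat.add_sub_cancel]
        nlinarith [Nat.zero_le (r * s)]
    · have := Nat.lt_mul_div_succ (m + (l - 1)) (show 0 < l by omega)
      rw [mul_add] at this
      omega
  refine ⟨1 * (m - k) + (∑ _i : Fin l, 1) * k, lin L ^ (m - k) * (∏ i, lin (n i)) ^ k,
    ?_, ?_, ?_, ?_⟩
  · rw [Ideal.mem_iInf]
    intro i
    induction i using Fin.lastCases with
    | last =>
      apply Ideal.mul_mem_left
      have h1 : (∏ i, lin (n i)) ∈ P (Fin.last l) ^ l := by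
        have := Ideal.prod_mem_prod (s := Finset.univ) (I := fun _ : Fin l => P (Fin.last l))
          (x := fun i => lin (n i)) (fun i _ => lin_mem _ _ _ (hP _) (hn2 i))
        simpa using this
      have h2 := Ideal.pow_mem_pow h1 k
      rw [← pow_mul] at h2
      exact Ideal.pow_le_pow_right hk2 h2
    | cast i =>
      have h1 : lin L ∈ P i.castSucc := lin_mem _ _ _ (hP _) (hon _ (by simp))
      have h2 : (∏ i, lin (n i)) ∈ P i.castSucc :=
        Ideal.mem_of_dvd _ (Finset.dvd_prod_of_mem (fun i => lin (n i)) (Finset.mem_univ i))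
          (lin_mem _ _ _ (hP _) (hn1 i))
      have h3 := Ideal.mul_mem_mul (Ideal.pow_mem_pow h1 (m - k)) (Ideal.pow_mem_pow h2 k)
      rw [← pow_add, Nat.sub_add_cancel hk1] at h3
      exact h3
  · exact ((lin_hom L).pow _).mul
      ((IsHomogeneous.prod _ _ _ fun i _ => lin_hom (n i)).pow _)
  · exact mul_ne_zero (pow_ne_zero _ (lin_ne_zero hL))
      (pow_ne_zero _ (Finset.prod_ne_zero_iff.2 fun i _ => lin_ne_zero (hn0 i)))
  · simp only [Finset.sum_const, Finset.card_univ, Fintype.card_fin, smul_eq_mul, mul_one, one_mul]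
    obtain ⟨r, rfl⟩ : ∃ r, l = r + 1 := ⟨l - 1, by omega⟩
    obtain ⟨s, rfl⟩ : ∃ s, m = k + s := ⟨m - k, by omega⟩
    simp only [Nat.add_sub_cancel, Nat.add_sub_cancel_left] at *
    have : (k + s) ≤ 2 * ((r + 1) * (k + s)) := by nlinarith [Nat.zero_le (r * (k + s))]
    zify [this] at *
    nlinarith [mul_le_mul_of_nonneg_left hk3 (show (0 : ℤ) ≤ r by positivity)]

end FatPts

open FatPts

theorem stmt_9
    (K : Type*) [Field K] [CharZero K]
    -- `l > 2` points on a line plus one point off the line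
    (l : ℕ) (hl : 2 < l)
    (p : Fin (l + 1) → Fin 3 → K) (hp0 : ∀ i, p i ≠ 0)
    (hdist : ∀ i j, i ≠ j → ∀ c : K, c • p i ≠ p j)
    (L : Fin 3 → K) (hL : L ≠ 0)
    (hon : ∀ i : Fin (l + 1), (i : ℕ) < l → ∑ j, L j * p i j = 0)
    (hoff : ∑ j, L j * p (Fin.last l) j ≠ 0)
    -- `P i` is the homogeneous prime ideal of all forms vanishing at `p i`
    (P : Fin (l + 1) → Ideal (MvPolynomial (Fin 3) K))
    (hP : ∀ i F, F ∈ P i ↔ ∀ n, eval (p i) (homogeneousComponent n F) = 0)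
    -- `Jm m = I^{(m)} = P_1^m ∩ ⋯ ∩ P_{l+1}^m`
    (Jm : ℕ → Ideal (MvPolynomial (Fin 3) K)) (hJm : ∀ m, Jm m = ⨅ i, P i ^ m)
    -- `α (Jm m)` is the least degree of a nonzero homogeneous element of `I^{(m)}`
    (α : ℕ → ℕ) (hα : ∀ m, α m = sInf {d | hdim (Jm m) d ≠ 0}) :
    Tendsto (fun m : ℕ => (α m : ℝ) / m) atTop (nhds (2 - 1 / l)) := by
  have hlow : ∀ m, 2 * (l * m) ≤ l * α m + m ∧ l * α m ≤ 2 * (l * m) - m + l * l := by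
    intro m
    obtain ⟨d, f, hf1, hf2, hf3, hf4⟩ := upper l hl p L hL hon P hP m
    have hd : d ∈ {d | hdim (Jm m) d ≠ 0} :=
      (hdim_ne_zero_iff _ _).2 ⟨f, by rw [hJm]; exact hf1, hf2, hf3⟩
    constructor
    · have hmem := Nat.sInf_mem ⟨d, hd⟩
      rw [← hα] at hmem
      obtain ⟨g, hg1, hg2, hg3⟩ := (hdim_ne_zero_iff _ _).1 hmem
      rw [hJm] at hg1
      exact lower l hl p hp0 hdist L hL hon hoff P hP m _ g hg1 hg2 hg3
    · have := Nat.sInf_le hd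
      rw [← hα] at this
      exact (Nat.mul_le_mul_left l this).trans hf4
  have hl0 : (0 : ℝ) < l := by
    have : 0 < l := by omega
    exact_mod_cast this
  have hlim : Tendsto (fun m : ℕ => (2 - 1 / l : ℝ) + l / (m : ℝ)) atTop (nhds (2 - 1 / l)) := by
    have := (tendsto_const_nhds (x := (2 - 1 / l : ℝ))).add
      (tendsto_const_div_atTop_nhds_zero_nat (l : ℝ))
    simpa using this
  refine tendsto_of_tendsto_of_tendsto_of_le_of_le' tendsto_const_nhds hlim ?_ ?_
  · filter_upwards [eventually_gt_atTop 0] with m hm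
    have hm' : (0 : ℝ) < m := by exact_mod_cast hm
    have h1 : (2 * (l * m) : ℝ) ≤ l * α m + m := by exact_mod_cast (hlow m).1
    rw [le_div_iff₀ hm', ← mul_le_mul_iff_right₀ hl0]
    have : (l : ℝ) * ((2 - 1 / l) * m) = 2 * (l * m) - m := by field_simp
    rw [this]
    linarith
  · filter_upwards [eventually_gt_atTop 0] with m hm
    have hm' : (0 : ℝ) < m := by exact_mod_cast hm
    have h0 : l * α m + m ≤ 2 * (l * m) + l * l := by
      have h2 := (hlow m).2
      have : m ≤ l * m := Nat.le_mul_of_pos_left m (by omega)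
      omega
    have h1 : (l * α m + m : ℝ) ≤ 2 * (l * m) + l * l := by exact_mod_cast h0
    rw [div_le_iff₀ hm', ← mul_le_mul_iff_right₀ hl0]
    have : (l : ℝ) * ((2 - 1 / l + l / m) * m) = 2 * (l * m) - m + l * l := by field_simp
    rw [this]
    linarith
end
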